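/- arXiv:1112.5157 — 6 statements merged into one kernel-verified Lean document; each statement's English description precedes it below -/
import Mathlib

section
/- Let d > 6 and let G be a connected d-regular graph on n vertices such that G² is not a complete graph, and suppose G is neither a snake graph nor a peanut graph. Then e(G²) − e(G) > 2n(1 − 2/(d+1) − 3/(d−3)). -/
open SimpleGraph

variable {V : Type*}

/-- The set of vertices at distance exactly `i` from `v`. -/
def distSet (G : SimpleGraph V) (v : V) (i : ℕ) : Set V := {u | G.dist v u = i}

/-- `deg₂ v` : the number of vertices at distance exactly 2 from `v`. -/
noncomputable def deg2 (G : SimpleGraph V) (v : V) : ℕ := (distSet G v 2).ncard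

/-- `N₂'(v)` : vertices at distance 2 from `v` that are adjacent to a vertex at
distance 3 from `v`. -/
def N2' (G : SimpleGraph V) (v : V) : Set V :=
  {u | G.dist v u = 2 ∧ ∃ w, G.dist v w = 3 ∧ G.Adj u w}

/-- The square of `G` : an edge between `u` and `v` whenever `1 ≤ d(u,v) ≤ 2`. -/
def graphSquare (G : SimpleGraph V) : SimpleGraph V where
  Adj u v := 1 ≤ G.dist u v ∧ G.dist u v ≤ 2
  symm := by
    constructor
    intro u v h
    rwa [SimpleGraph.dist_comm]
  loopless := by
    constructor
    intro v h
    simp [SimpleGraph.dist_self] at h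

/-- `G` is `d`-regular : every vertex has exactly `d` neighbors. -/
def IsRegularGraph (G : SimpleGraph V) (d : ℕ) : Prop :=
  ∀ v, (G.neighborSet v).ncard = d

/-- The vertex set of the connected component of `G - u` containing `v` :
all vertices reachable from `v` by a walk avoiding `u`. -/
def compDel (G : SimpleGraph V) (u v : V) : Set V :=
  {w | ∃ p : G.Walk v w, u ∉ p.support}

/-- The complement of the induced subgraph of `G` on `S` is precisely a perfect matching
on `M ⊆ S` : there is a fixed-point-free involution `m` of `M` such that the non-adjacent
pairs of distinct vertices inside `S` are exactly the matched pairs. -/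
def ComplIsMatchingOn (G : SimpleGraph V) (S M : Set V) : Prop :=
  M ⊆ S ∧ ∃ m : V → V,
    (∀ x ∈ M, m x ∈ M ∧ m x ≠ x ∧ m (m x) = x) ∧
    (∀ a ∈ S, ∀ b ∈ S, a ≠ b → (¬ G.Adj a b ↔ (a ∈ M ∧ b = m a)))

/-- A tail with `k ≥ 1` segments in the graph `G` (for degree `d`). -/
structure Tail (G : SimpleGraph V) (d : ℕ) where
  /-- the vertex set of the tail -/
  carrier : Set V
  /-- the number of segments -/
  k : ℕ
  /-- the segments `R₁, …, R_k` -/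
  seg : ℕ → Set V
  /-- the vertex `v` of the first segment with `deg₂ v = 1` -/
  v0 : V
  /-- the vertex `u` with `N₂(v) = {u}` -/
  u0 : V
  /-- the endpoints `v_i` of the removed edges of later segments -/
  vt : ℕ → V
  /-- the endpoints `v_i'` of the removed edges of later segments -/
  vt' : ℕ → V
  /-- the unique vertex `w_T` of the tail having a neighbor outside the tail -/
  w : V
  /-- the unique neighbor `u_T` of `w_T` outside the tail -/
  uT : V
  k_pos : 1 ≤ k
  carrier_eq : carrier = ⋃ i ∈ Set.Icc 1 k, seg i
  seg_disj : ∀ i ∈ Set.Icc 1 k, ∀ j ∈ Set.Icc 1 k, i ≠ j → Disjoint (seg i) (seg j)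
  seg1 : seg 1 = {v0} ∪ G.neighborSet v0 ∪ {u0}
  seg1_card : (seg 1).ncard = d + 2
  deg2_v0 : deg2 G v0 = 1
  dist2_v0 : distSet G v0 2 = {u0}
  u0_nbrs : (G.neighborSet u0 ∩ G.neighborSet v0).ncard = d - 1
  compl_matching :
    ComplIsMatchingOn G ({v0} ∪ G.neighborSet v0) (G.neighborSet u0 ∩ G.neighborSet v0)
  seg_card : ∀ i ∈ Set.Icc 2 k, (seg i).ncard = d + 1
  vt_mem : ∀ i ∈ Set.Icc 2 k, vt i ∈ seg i
  vt'_mem : ∀ i ∈ Set.Icc 2 k, vt' i ∈ seg i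
  vt_ne : ∀ i ∈ Set.Icc 2 k, vt i ≠ vt' i
  seg_adj : ∀ i ∈ Set.Icc 2 k, ∀ a ∈ seg i, ∀ b ∈ seg i, a ≠ b →
    (G.Adj a b ↔ ({a, b} : Set V) ≠ {vt i, vt' i})
  inter_seg : ∀ i ∈ Set.Icc 1 k, ∀ j ∈ Set.Icc 1 k, i ≠ j → ∀ a ∈ seg i, ∀ b ∈ seg j,
    (G.Adj a b ↔ ((i = 1 ∧ j = 2 ∧ a = u0 ∧ b = vt 2) ∨
                  (j = 1 ∧ i = 2 ∧ b = u0 ∧ a = vt 2) ∨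
                  (i + 1 = j ∧ 2 ≤ i ∧ a = vt' i ∧ b = vt j) ∨
                  (j + 1 = i ∧ 2 ≤ j ∧ b = vt' j ∧ a = vt i)))
  w_eq_of_k_ge_two : 2 ≤ k → w = vt' k
  w_eq_of_k_eq_one : k = 1 → w = u0
  w_mem : w ∈ carrier
  uT_not_mem : uT ∉ carrier
  w_adj_uT : G.Adj w uT
  w_unique_out : ∀ b, G.Adj w b → b ∉ carrier → b = uT
  others_in : ∀ a ∈ carrier, a ≠ w → ∀ b, G.Adj a b → b ∈ carrier

/-- A tail is proper if it is not contained in a strictly larger tail. -/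
def IsProperTail (G : SimpleGraph V) (d : ℕ) (t : Tail G d) : Prop :=
  ∀ t' : Tail G d, t.carrier ⊆ t'.carrier → t.carrier = t'.carrier

/-- A snake graph : a connected `d`-regular graph which is the disjoint union of two tails,
the only edge joining them being `w_T w_{T'}`. -/
def IsSnake (G : SimpleGraph V) (d : ℕ) : Prop :=
  G.Connected ∧ IsRegularGraph G d ∧
  ∃ t t' : Tail G d,
    Disjoint t.carrier t'.carrier ∧
    t.carrier ∪ t'.carrier = Set.univ ∧
    t.uT = t'.w ∧ t'.uT = t.w ∧
    (∀ a ∈ t.carrier, ∀ b ∈ t'.carrier, G.Adj a b → a = t.w ∧ b = t'.w)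

/-- A peanut graph : a connected `d`-regular graph (`d` even) partitioned into `R₁` of size
`d+1` whose induced complement is the single edge `w₁w₂`, and `R₂` of size `d+2` whose
induced complement is a star `uv₁, uv₂, uv₃` plus a perfect matching on the remaining
vertices, the only edges between the parts being `uw₁` and `uw₂`. -/
def IsPeanut (G : SimpleGraph V) (d : ℕ) : Prop :=
  G.Connected ∧ IsRegularGraph G d ∧ Even d ∧
  ∃ (R1 R2 : Set V) (w1 w2 u v1 v2 v3 : V),
    Disjoint R1 R2 ∧ R1 ∪ R2 = Set.univ ∧
    R1.ncard = d + 1 ∧ R2.ncard = d + 2 ∧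
    w1 ∈ R1 ∧ w2 ∈ R1 ∧ w1 ≠ w2 ∧
    u ∈ R2 ∧ v1 ∈ R2 ∧ v2 ∈ R2 ∧ v3 ∈ R2 ∧
    ([u, v1, v2, v3].Pairwise (· ≠ ·)) ∧
    (∀ a ∈ R1, ∀ b ∈ R1, a ≠ b → (¬ G.Adj a b ↔ ({a, b} : Set V) = {w1, w2})) ∧
    (∃ m : V → V,
      (∀ x ∈ R2 \ {u, v1, v2, v3}, m x ∈ R2 \ {u, v1, v2, v3} ∧ m x ≠ x ∧ m (m x) = x) ∧
      (∀ a ∈ R2, ∀ b ∈ R2, a ≠ b →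
        (¬ G.Adj a b ↔ (({a, b} : Set V) = {u, v1} ∨ ({a, b} : Set V) = {u, v2} ∨
          ({a, b} : Set V) = {u, v3} ∨ (a ∈ R2 \ {u, v1, v2, v3} ∧ b = m a))))) ∧
    (∀ a ∈ R1, ∀ b ∈ R2, (G.Adj a b ↔ (b = u ∧ (a = w1 ∨ a = w2))))

section GS1
open Classical Finset
set_option linter.unusedSectionVars false
variable {V : Type*} [Fintype V] (G : SimpleGraph V)

noncomputable def gN (v : V) : Finset V := univ.filter (fun z => G.Adj v z)
noncomputable def gM (v : V) : Finset V := univ.filter (fun z => z = v ∨ G.Adj v z)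
def gD (v z : V) : Prop := z ≠ v ∧ ¬ G.Adj v z ∧ ∃ t, G.Adj v t ∧ G.Adj t z
noncomputable def gN2 (v : V) : Finset V := univ.filter (fun z => gD G v z)
def gP (v z : V) : Prop := gD G v z ∧ ∃ w, G.Adj z w ∧ w ≠ v ∧ ¬ G.Adj v w ∧ ¬ gD G v w
noncomputable def gB (v : V) : Finset V := univ.filter (fun z => gP G v z)

variable {G}

theorem mem_gN {v z : V} : z ∈ gN G v ↔ G.Adj v z := by simp [gN]
theorem mem_gM {v z : V} : z ∈ gM G v ↔ z = v ∨ G.Adj v z := by simp [gM]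
theorem mem_gN2 {v z : V} : z ∈ gN2 G v ↔ gD G v z := by simp [gN2]
theorem mem_gB {v z : V} : z ∈ gB G v ↔ gP G v z := by simp [gB]

theorem gD_symm {v z : V} (h : gD G v z) : gD G z v := by
  obtain ⟨h1, h2, t, h3, h4⟩ := h
  exact ⟨h1.symm, fun h => h2 h.symm, t, h4.symm, h3.symm⟩

theorem gB_sub (v : V) : gB G v ⊆ gN2 G v := by
  intro z hz; rw [mem_gB] at hz; rw [mem_gN2]; exact hz.1

variable (G) in
structure Ctx0 (d : ℕ) : Prop where
  hd : 6 < d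
  hr : ∀ v, (gN G v).card = d
  hconn : G.Connected
  hfar : ∃ x y : V, y ≠ x ∧ ¬ G.Adj x y ∧ ¬ gD G x y

variable {d : ℕ}

theorem card_gM (H : Ctx0 G d) (v : V) : (gM G v).card = d + 1 := by
  have : gM G v = insert v (gN G v) := by
    ext z; simp [mem_gM, mem_gN]
  rw [this, card_insert_of_notMem (by simp [mem_gN]), H.hr]

theorem gM_sdiff_comm (H : Ctx0 G d) (v x : V) :
    (gM G v \ gM G x).card = (gM G x \ gM G v).card :=
  card_sdiff_comm (by rw [card_gM H, card_gM H])

theorem closed_univ (H : Ctx0 G d) (S : Finset V) (v : V) (hv : v ∈ S)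
    (h : ∀ x ∈ S, ∀ z, G.Adj x z → z ∈ S) (z : V) : z ∈ S := by
  obtain ⟨p⟩ := H.hconn.preconnected v z
  induction p with
  | nil => exact hv
  | cons hadj p ih => exact ih (h _ hv _ hadj)

theorem card_V (H : Ctx0 G d) : 2 * d + 2 ≤ Fintype.card V := by
  obtain ⟨x, y, h1, h2, h3⟩ := H.hfar
  have hdis : Disjoint (gM G x) (gM G y) := by
    rw [Finset.disjoint_left]
    intro z hz hz'
    rw [mem_gM] at hz hz'
    rcases hz with rfl | hz <;> rcases hz' with rfl | hz'
    · exact h1 rfl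
    · exact h2 hz'.symm
    · exact h2 hz
    · exact h3 ⟨h1, h2, z, hz, hz'.symm⟩
  have := card_union_of_disjoint hdis
  rw [card_gM H, card_gM H] at this
  have h4 := card_le_univ (gM G x ∪ gM G y)
  omega

/-- edges leaving `M v`. -/
theorem adj_out {v x z : V} (hx : x ∈ gM G v) (h : G.Adj x z) : z ∈ gM G v ∨ z ∈ gN2 G v := by
  rw [mem_gM, mem_gN2]; rw [mem_gM] at hx
  rcases hx with rfl | hx
  · exact Or.inl (Or.inr h)
  · by_cases h1 : z = v
    · exact Or.inl (Or.inl h1)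
    by_cases h2 : G.Adj v z
    · exact Or.inl (Or.inr h2)
    exact Or.inr ⟨h1, h2, x, hx, h⟩

/-- the closed set around `v`. -/
theorem adj_out' {v x z : V} (hx : x ∈ gM G v ∪ (gN2 G v \ gB G v)) (h : G.Adj x z) :
    z ∈ gM G v ∪ (gN2 G v \ gB G v) ∨ z ∈ gB G v := by
  have key : z ∈ gM G v ∨ z ∈ gN2 G v := by
    rw [mem_union] at hx
    rcases hx with hx | hx
    · exact adj_out hx h
    · rw [mem_sdiff, mem_gB, mem_gN2] at hx
      by_contra hc
      push Not at hc
      rw [mem_gM, mem_gN2] at hc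
      push Not at hc
      exact hx.2 ⟨hx.1, z, h, hc.1.1, hc.1.2, hc.2⟩
  by_cases hz : z ∈ gB G v
  · exact Or.inr hz
  · left; simp only [mem_union, mem_sdiff]; tauto

theorem gM_disj_gN2 (v : V) : Disjoint (gM G v) (gN2 G v) := by
  rw [Finset.disjoint_left]
  intro z hz hz'
  rw [mem_gM] at hz; rw [mem_gN2] at hz'
  rcases hz with h | h
  · exact hz'.1 h
  · exact hz'.2.1 h

theorem gB_nonempty (H : Ctx0 G d) (v : V) (hv : (gN2 G v).card ≤ 3) : (gB G v).Nonempty := by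
  by_contra hc
  rw [not_nonempty_iff_eq_empty] at hc
  have h1 : ∀ z, z ∈ gM G v ∪ (gN2 G v \ gB G v) := by
    apply closed_univ H _ v
    · simp [mem_gM]
    · intro x hx z hz
      rcases adj_out' hx hz with h | h
      · exact h
      · simp [hc] at h
  have h2 : (univ : Finset V) ⊆ gM G v ∪ gN2 G v := by
    intro z _
    have := h1 z
    simp only [mem_union, mem_sdiff] at this ⊢
    tauto
  have h3 := card_le_card h2
  have h4 := card_union_le (gM G v) (gN2 G v)
  rw [card_gM H] at h4
  have h5 := card_V H
  have h6 := H.hd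
  rw [card_univ] at h3
  omega

theorem gN2_pos (H : Ctx0 G d) (v : V) : 1 ≤ (gN2 G v).card := by
  by_contra hc
  obtain ⟨z, hz⟩ := gB_nonempty H v (by omega)
  have := card_pos.2 ⟨z, gB_sub v hz⟩
  omega

theorem donor (H : Ctx0 G d) {v u : V} (h : gP G v u) :
    d + 1 ≤ (gN2 G u).card + (gN2 G v).card := by
  obtain ⟨⟨h1, h2, y, hvy, hyu⟩, w, huw, hw1, hw2, hw3⟩ := h
  have hyw : ¬ G.Adj y w := fun h => hw3 ⟨hw1, hw2, y, hvy, h⟩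
  have e1 : (gN G y ∩ gN G w) ⊆ gN2 G v := by
    intro z hz
    rw [mem_inter, mem_gN, mem_gN] at hz
    rw [mem_gN2]
    refine ⟨?_, ?_, y, hvy, hz.1⟩
    · rintro rfl; exact hw2 hz.2.symm
    · intro h; exact hw3 ⟨hw1, hw2, z, h, hz.2.symm⟩
  have e2 : (gN G y ∪ gN G w) ⊆ gN2 G u ∪ (((gM G u).erase y).erase w) := by
    intro z hz
    rw [mem_union, mem_gN, mem_gN] at hz
    rw [mem_union, mem_gN2, mem_erase, mem_erase, mem_gM]
    by_cases h1 : z = u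
    · right; subst h1; exact ⟨huw.ne, hyu.ne', Or.inl rfl⟩
    by_cases h2 : G.Adj u z
    · right
      refine ⟨?_, ?_, Or.inr h2⟩
      · rintro rfl; rcases hz with h | h
        · exact hyw h
        · exact h.ne rfl
      · rintro rfl; rcases hz with h | h
        · exact h.ne rfl
        · exact hyw h.symm
    left
    refine ⟨h1, h2, ?_⟩
    rcases hz with h | h
    · exact ⟨y, hyu.symm, h⟩
    · exact ⟨w, huw, h⟩
  have c1 := card_le_card e1
  have c2 := card_le_card e2
  have c3 := card_union_add_card_inter (gN G y) (gN G w)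
  have hyne : w ≠ y := by rintro rfl; exact hw2 hvy
  have c4 : (((gM G u).erase y).erase w).card = d - 1 := by
    rw [card_erase_of_mem, card_erase_of_mem, card_gM H]
    · omega
    · rw [mem_gM]; exact Or.inr hyu.symm
    · rw [mem_erase, mem_gM]; exact ⟨hyne, Or.inr huw⟩
  have c5 := card_union_le (gN2 G u) (((gM G u).erase y).erase w)
  rw [H.hr, H.hr] at c3
  have := H.hd
  omega

theorem handshake (S : Finset V) : Even (∑ x ∈ S, (gN G x ∩ S).card) := by
  let K : SimpleGraph V :=
    { Adj := fun a b => G.Adj a b ∧ a ∈ S ∧ b ∈ S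
      symm := ⟨fun a b h => ⟨h.1.symm, h.2.2, h.2.1⟩⟩
      loopless := ⟨fun a h => h.1.ne rfl⟩ }
  have h1 := K.sum_degrees_eq_twice_card_edges
  have h2 : ∑ v, K.degree v = ∑ x ∈ S, (gN G x ∩ S).card := by
    rw [← Finset.sum_subset (Finset.subset_univ S)]
    · apply Finset.sum_congr rfl
      intro x hx
      rw [← SimpleGraph.card_neighborFinset_eq_degree]
      congr 1
      ext z
      simp only [SimpleGraph.mem_neighborFinset, mem_inter, mem_gN, K]
      tauto
    · intro x _ hx
      rw [SimpleGraph.degree_eq_zero_iff_notMem_support]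
      rintro ⟨y, hy⟩
      exact hx hy.2.1
  rw [← h2, h1]
  exact even_two_mul _

theorem parity (H : Ctx0 G d) (S B : Finset V) (hd : Disjoint S B)
    (h : ∀ x ∈ S, ∀ z, G.Adj x z → z ∈ S ∨ z ∈ B) :
    Even (d * S.card + ∑ p ∈ B, (gN G p ∩ S).card) := by
  have h1 : ∀ x ∈ S, (gN G x ∩ S).card + (gN G x ∩ B).card = d := by
    intro x hx
    rw [← H.hr x, ← card_union_of_disjoint]
    · congr 1
      ext z
      simp only [mem_union, mem_inter, mem_gN]
      constructor
      · tauto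
      · intro hz; have := h x hx z hz; tauto
    · exact (hd.mono inter_subset_right inter_subset_right)
  have h2 : ∑ x ∈ S, (gN G x ∩ B).card = ∑ p ∈ B, (gN G p ∩ S).card := by
    have := Finset.sum_card_bipartiteAbove_eq_sum_card_bipartiteBelow (s := S) (t := B) (fun a b => G.Adj a b)
    convert this using 2
    · congr 1; ext z; simp [bipartiteAbove, mem_gN, and_comm]
    · congr 1; ext z; simp [bipartiteBelow, mem_gN, and_comm, G.adj_comm]
  have h3 := Finset.sum_congr rfl h1
  rw [sum_add_distrib, h2, sum_const, smul_eq_mul] at h3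
  have h4 := handshake (G := G) S
  rw [mul_comm] at h3
  rw [← h3, add_assoc]
  exact h4.add (Even.add_self _)

/-- twins -/
theorem twin_D {v x : V} (h : gM G x = gM G v) (z : V) : gD G x z ↔ gD G v z := by
  have aux : ∀ v z : V, gD G v z ↔ (z ∉ gM G v ∧ ∃ t ∈ gM G v, G.Adj t z) := by
    intro v z
    constructor
    · rintro ⟨h1, h2, t, h3, h4⟩
      refine ⟨?_, t, ?_, h4⟩
      · rw [mem_gM]; tauto
      · rw [mem_gM]; tauto
    · rintro ⟨h1, t, h3, h4⟩
      rw [mem_gM] at h1 h3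
      push Not at h1
      rcases h3 with rfl | h3
      · exact absurd h4 h1.2
      · exact ⟨h1.1, h1.2, t, h3, h4⟩
  rw [aux, aux, h]

theorem twin_N2 {v x : V} (h : gM G x = gM G v) : gN2 G x = gN2 G v := by
  ext z; rw [mem_gN2, mem_gN2, twin_D h]

theorem twin_P {v x : V} (h : gM G x = gM G v) (z : V) : gP G x z ↔ gP G v z := by
  have : ∀ w, (w ≠ x ∧ ¬ G.Adj x w ∧ ¬ gD G x w) ↔ (w ≠ v ∧ ¬ G.Adj v w ∧ ¬ gD G v w) := by
    intro w
    rw [twin_D h]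
    have h1 : w ∉ gM G x ↔ w ∉ gM G v := by rw [h]
    simp only [mem_gM] at h1
    tauto
  unfold gP
  rw [twin_D h]
  simp only [this]

theorem twin_B {v x : V} (h : gM G x = gM G v) : gB G x = gB G v := by
  ext z; rw [mem_gB, mem_gB, twin_P h]

/-- no outside neighbours implies twin -/
theorem twin_of (H : Ctx0 G d) {v x : V} (h : gM G x ⊆ gM G v) : gM G x = gM G v :=
  eq_of_subset_of_card_le h (by rw [card_gM H, card_gM H])

/-- Two vertices at distance two attached at a single vertex are impossible. -/
theorem no_double (H : Ctx0 G d) {q p p' u : V} (h : gN2 G q = {p, p'}) (hne : p ≠ p')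
    (h1 : gN G p ∩ gN G q = {u}) (h2 : gN G p' ∩ gN G q = {u}) : False := by
  have hu1 : u ∈ gN G p ∩ gN G q := by rw [h1]; simp
  have hu2 : u ∈ gN G p' ∩ gN G q := by rw [h2]; simp
  simp only [mem_inter, mem_gN] at hu1 hu2
  have hp : p ∈ gN2 G q := by rw [h]; simp
  have hp' : p' ∈ gN2 G q := by rw [h]; simp
  have hsub : ({p, p'} : Finset V) ⊆ gM G u \ gM G q := by
    intro z hz
    have hz2 : z ∈ gN2 G q := by rw [h]; exact hz
    rw [mem_sdiff]
    refine ⟨?_, Finset.disjoint_right.1 (gM_disj_gN2 q) hz2⟩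
    rw [mem_gM]; right
    simp only [mem_insert, mem_singleton] at hz
    rcases hz with rfl | rfl
    · exact hu1.1.symm
    · exact hu2.1.symm
  have c := card_le_card hsub
  rw [card_pair hne, gM_sdiff_comm H] at c
  obtain ⟨x, hx⟩ : (gM G q \ gM G u).Nonempty := card_pos.1 (by omega)
  rw [mem_sdiff] at hx
  have hxq : x ≠ q := by
    rintro rfl; exact hx.2 (by rw [mem_gM]; exact Or.inr hu1.2.symm)
  have hqx : G.Adj q x := by
    have := hx.1; rw [mem_gM] at this; tauto
  have hxu : x ≠ u := by rintro rfl; exact hx.2 (by simp [mem_gM])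
  have : gM G x = gM G q := by
    apply twin_of H
    intro z hz
    rw [mem_gM] at hz
    rcases hz with rfl | hz
    · exact hx.1
    rcases adj_out hx.1 hz with h' | h'
    · exact h'
    · exfalso
      rw [h] at h'
      simp only [mem_insert, mem_singleton] at h'
      rcases h' with rfl | rfl
      · have : x ∈ gN G z ∩ gN G q := by simp [mem_gN, hz.symm, hqx]
        rw [h1] at this; simp at this; exact hxu this
      · have : x ∈ gN G z ∩ gN G q := by simp [mem_gN, hz.symm, hqx]
        rw [h2] at this; simp at this; exact hxu this
  apply hx.2
  have hu : u ∈ gM G x := by rw [this, mem_gM]; exact Or.inr hu1.2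
  rw [mem_gM] at hu ⊢
  rcases hu with h | h
  · exact Or.inl h.symm
  · exact Or.inr h.symm

end GS1

section GS2
open Classical Finset
set_option linter.unusedSectionVars false
variable {V : Type*} [Fintype V] {G : SimpleGraph V} {d : ℕ}

variable (G) in
noncomputable def gC (v : V) : Finset V := gM G v ∪ (gN2 G v \ gB G v)

variable (G) in
structure Pend (d : ℕ) (C : Finset V) (u : V) (k : ℕ) : Prop where
  hk1 : 1 ≤ k
  hk2 : k ≤ 2
  card : C.card = d + k
  nu : u ∉ C
  cl : ∀ x ∈ C, ∀ z, G.Adj x z → z ∈ C ∨ z = u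
  out : ∃ w, G.Adj u w ∧ w ∉ C
  inn : ∃ x ∈ C, G.Adj u x

theorem card_gC (H : Ctx0 G d) (v : V) :
    (gC G v).card + (gB G v).card = d + 1 + (gN2 G v).card := by
  unfold gC
  rw [card_union_of_disjoint ((gM_disj_gN2 v).mono_right sdiff_subset), card_gM H]
  have := card_sdiff_add_card_eq_card (gB_sub (G := G) v)
  omega

theorem self_gM (v : V) : v ∈ gM G v := by simp [mem_gM]

theorem self_gC (v : V) : v ∈ gC G v := by
  unfold gC; rw [mem_union]; exact Or.inl (self_gM v)

theorem gB_notMem_gC {v z : V} (h : z ∈ gB G v) : z ∉ gC G v := by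
  unfold gC
  rw [mem_union, mem_sdiff]
  rintro (h1 | h1)
  · exact Finset.disjoint_left.1 (gM_disj_gN2 v) h1 (gB_sub v h)
  · exact h1.2 h

theorem near_gC {v z : V} (h : z ∈ gC G v) : z = v ∨ G.Adj v z ∨ gD G v z := by
  unfold gC at h
  rw [mem_union, mem_sdiff, mem_gM, mem_gN2] at h
  tauto

theorem pend_of (H : Ctx0 G d) {v u : V} (hB : gB G v = {u}) (hk : (gN2 G v).card ≤ 2) :
    Pend G d (gC G v) u (gN2 G v).card := by
  have hu : u ∈ gB G v := by rw [hB]; simp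
  have hu' := hu
  rw [mem_gB] at hu'
  obtain ⟨⟨h1, h2, t, h3, h4⟩, w, h5, h6, h7, h8⟩ := hu'
  refine ⟨gN2_pos H v, hk, ?_, gB_notMem_gC hu, ?_, ⟨w, h5, ?_⟩, ⟨t, ?_, h4.symm⟩⟩
  · have := card_gC H v
    rw [hB, card_singleton] at this
    omega
  · intro x hx z hz
    have := adj_out' hx hz
    rw [hB, mem_singleton] at this
    rw [gC, hB]
    exact this
  · intro hc
    have := near_gC hc
    tauto
  · unfold gC; rw [mem_union, mem_gM]; exact Or.inl (Or.inr h3)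

namespace Pend
variable {C : Finset V} {u : V} {k : ℕ}

theorem far (H : Ctx0 G d) (P : Pend G d C u k) {x : V} (hx : x ∈ C) (hxu : ¬ G.Adj u x) :
    (C \ gM G x).card + 1 = k := by
  have hs : gM G x ⊆ C := by
    intro z hz
    rw [mem_gM] at hz
    rcases hz with rfl | hz
    · exact hx
    · rcases P.cl x hx z hz with h | h
      · exact h
      · subst h; exact absurd hz.symm hxu
  have := card_sdiff_add_card_eq_card hs
  rw [card_gM H, P.card] at this
  omega

theorem near (H : Ctx0 G d) (P : Pend G d C u k) {x : V} (hx : x ∈ C) (hxu : G.Adj u x) :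
    (C \ gM G x).card = k := by
  have hs : (gM G x).erase u ⊆ C := by
    intro z hz
    rw [mem_erase, mem_gM] at hz
    rcases hz with ⟨h0, rfl | hz⟩
    · exact hx
    · rcases P.cl x hx z hz with h | h
      · exact h
      · exact absurd h h0
  have e : C \ gM G x = C \ (gM G x).erase u := by
    ext z; simp only [mem_sdiff, mem_erase]
    have := P.nu
    constructor
    · rintro ⟨h1, h2⟩; exact ⟨h1, fun h => h2 h.2⟩
    · rintro ⟨h1, h2⟩; refine ⟨h1, fun h => h2 ⟨?_, h⟩⟩
      rintro rfl; exact P.nu h1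
  have := card_sdiff_add_card_eq_card hs
  rw [card_erase_of_mem (by rw [mem_gM]; exact Or.inr hxu.symm), card_gM H, P.card] at this
  rw [e]
  omega

theorem miss (H : Ctx0 G d) (P : Pend G d C u k) {x : V} (hx : x ∈ C) :
    (C \ gM G x).card ≤ k := by
  by_cases h : G.Adj u x
  · rw [P.near H hx h]
  · have := P.far H hx h; omega

end Pend

/-- common neighbours in dense sets -/
theorem dense_common (S : Finset V) (x y : V) (hx : (S \ gM G x).card ≤ 2)
    (hy : (S \ gM G y).card ≤ 2) (hS : 8 ≤ S.card) :
    2 ≤ ((gN G x ∩ gN G y) ∩ S).card := by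
  have hsub : S ⊆ ((gN G x ∩ gN G y) ∩ S) ∪ ((S \ gM G x) ∪ (S \ gM G y) ∪ {x, y}) := by
    intro z hz
    simp only [mem_union, mem_inter, mem_sdiff, mem_gN, mem_gM, mem_insert, mem_singleton]
    tauto
  have c1 := card_le_card hsub
  have c2 := card_union_le ((gN G x ∩ gN G y) ∩ S) ((S \ gM G x) ∪ (S \ gM G y) ∪ {x, y})
  have c3 := card_union_le ((S \ gM G x) ∪ (S \ gM G y)) {x, y}
  have c4 := card_union_le (S \ gM G x) (S \ gM G y)
  have c5 := card_le_two (a := x) (b := y)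
  omega

namespace Pend
variable {C : Finset V} {u : V} {k : ℕ}

theorem common2 (H : Ctx0 G d) (P : Pend G d C u k) {x y : V} (hx : x ∈ C) (hy : y ∈ C) :
    2 ≤ ((gN G x ∩ gN G y) ∩ C).card := by
  apply dense_common
  · exact (P.miss H hx).trans P.hk2
  · exact (P.miss H hy).trans P.hk2
  · rw [P.card]; have := H.hd; have := P.hk1; omega

theorem common (H : Ctx0 G d) (P : Pend G d C u k) {x y : V} (hx : x ∈ C) (hy : y ∈ C) :
    ∃ t ∈ C, G.Adj x t ∧ G.Adj t y := by
  have := P.common2 H hx hy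
  obtain ⟨t, ht⟩ := card_pos.1 (show 0 < ((gN G x ∩ gN G y) ∩ C).card by omega)
  simp only [mem_inter, mem_gN] at ht
  exact ⟨t, ht.2, ht.1.1, ht.1.2.symm⟩

theorem ac (H : Ctx0 G d) (P : Pend G d C u k) :
    (gN G u ∩ C).card + (gN G u \ C).card = d := by
  rw [card_inter_add_card_sdiff, H.hr]

theorem c_pos (P : Pend G d C u k) : 1 ≤ (gN G u \ C).card := by
  obtain ⟨w, h1, h2⟩ := P.out
  exact card_pos.2 ⟨w, by simp [mem_gN, h1, h2]⟩

theorem a_pos (P : Pend G d C u k) : 1 ≤ (gN G u ∩ C).card := by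
  obtain ⟨w, h1, h2⟩ := P.inn
  exact card_pos.2 ⟨w, by simp [mem_gN, h1, h2]⟩

theorem L_card (H : Ctx0 G d) (P : Pend G d C u k) :
    (C \ gN G u).card = (gN G u \ C).card + k := by
  have h1 := P.ac H
  have h2 := card_sdiff_add_card_inter C (gN G u)
  rw [inter_comm, P.card] at h2
  omega

theorem a_two (H : Ctx0 G d) (P : Pend G d C u 1) : 2 ≤ (gN G u ∩ C).card := by
  obtain ⟨x, hx, hux⟩ := P.inn
  have h1 := P.near H hx hux
  obtain ⟨m, hm⟩ := card_pos.1 (show 0 < (C \ gM G x).card by omega)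
  rw [mem_sdiff, mem_gM] at hm
  have hum : G.Adj u m := by
    by_contra hc
    have := P.far H hm.1 hc
    have h0 : (C \ gM G m) = ∅ := by rw [← card_eq_zero]; omega
    have : x ∈ C \ gM G m := by
      rw [mem_sdiff, mem_gM]
      refine ⟨hx, fun h => hm.2 ?_⟩
      rcases h with h | h
      · exact Or.inl h.symm
      · exact Or.inr h.symm
    rw [h0] at this; simp at this
  have hsub : ({x, m} : Finset V) ⊆ gN G u ∩ C := by
    intro z hz
    simp only [mem_insert, mem_singleton] at hz
    rw [mem_inter, mem_gN]
    rcases hz with rfl | rfl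
    · exact ⟨hux, hx⟩
    · exact ⟨hum, hm.1⟩
  have := card_le_card hsub
  rwa [card_pair (by rintro rfl; exact hm.2 (Or.inl rfl))] at this

theorem far_N2 (H : Ctx0 G d) (P : Pend G d C u k) {x : V} (hx : x ∈ C) (hxu : ¬ G.Adj u x)
    (ht : ∃ t ∈ C, G.Adj x t ∧ G.Adj u t) : gN2 G x = insert u (C \ gM G x) := by
  ext z
  rw [mem_gN2, mem_insert, mem_sdiff, mem_gM]
  constructor
  · rintro ⟨h1, h2, t, h3, h4⟩
    have htC : t ∈ C := by
      rcases P.cl x hx t h3 with h | h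
      · exact h
      · subst h; exact absurd h3.symm hxu
    rcases P.cl t htC z h4 with h | h
    · exact Or.inr ⟨h, by tauto⟩
    · exact Or.inl h
  · rintro (rfl | ⟨h1, h2⟩)
    · obtain ⟨t, h3, h4, h5⟩ := ht
      exact ⟨fun h => P.nu (h ▸ hx), fun h => hxu h.symm, t, h4, h5.symm⟩
    · obtain ⟨t, h3, h4, h5⟩ := P.common H hx h1
      exact ⟨fun h => h2 (Or.inl h), fun h => h2 (Or.inr h), t, h4, h5⟩

theorem far_card (H : Ctx0 G d) (P : Pend G d C u k) {x : V} (hx : x ∈ C) (hxu : ¬ G.Adj u x)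
    (ht : ∃ t ∈ C, G.Adj x t ∧ G.Adj u t) : (gN2 G x).card = k := by
  rw [P.far_N2 H hx hxu ht, card_insert_of_notMem, P.far H hx hxu]
  rw [mem_sdiff]; exact fun h => P.nu h.1

theorem far_B (H : Ctx0 G d) (P : Pend G d C u k) {x : V} (hx : x ∈ C) (hxu : ¬ G.Adj u x)
    (ht : ∃ t ∈ C, G.Adj x t ∧ G.Adj u t) : gB G x = {u} := by
  have hN := P.far_N2 H hx hxu ht
  ext z
  rw [mem_gB, mem_singleton]
  constructor
  · rintro ⟨h1, w, h2, h3, h4, h5⟩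
    rw [← mem_gN2, hN, mem_insert] at h1
    rcases h1 with h1 | h1
    · exact h1
    · exfalso
      rw [mem_sdiff] at h1
      rw [← mem_gN2, hN, mem_insert, mem_sdiff, mem_gM] at h5
      have := P.cl z h1.1 w h2
      tauto
  · rintro rfl
    refine ⟨by rw [← mem_gN2, hN]; simp, ?_⟩
    obtain ⟨w, hw, hwC⟩ := P.out
    refine ⟨w, hw, fun h => hwC (h ▸ hx), ?_, ?_⟩
    · intro h
      rcases P.cl x hx w h with h' | h'
      · exact hwC h'
      · exact hw.ne h'.symm
    · rw [← mem_gN2, hN, mem_insert, mem_sdiff]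
      rintro (h | h)
      · exact hw.ne h.symm
      · exact hwC h.1

theorem far_C (H : Ctx0 G d) (P : Pend G d C u k) {x : V} (hx : x ∈ C) (hxu : ¬ G.Adj u x)
    (ht : ∃ t ∈ C, G.Adj x t ∧ G.Adj u t) : gC G x = C := by
  unfold gC
  rw [P.far_B H hx hxu ht, P.far_N2 H hx hxu ht]
  ext z
  simp only [mem_union, mem_sdiff, mem_insert, mem_singleton]
  constructor
  · rintro (h | ⟨h1 | h1, h2⟩)
    · rw [mem_gM] at h
      rcases h with rfl | h
      · exact hx
      rcases P.cl x hx z h with h' | h'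
      · exact h'
      · subst h'; exact absurd h.symm hxu
    · exact absurd h1 h2
    · exact h1.1
  · intro h
    by_cases hz : z ∈ gM G x
    · exact Or.inl hz
    · exact Or.inr ⟨Or.inr ⟨h, hz⟩, fun h' => P.nu (h' ▸ h)⟩

/-- connection vertex exists when `a ≥ 2`. -/
theorem conn (H : Ctx0 G d) (P : Pend G d C u k) (ha : 2 ≤ (gN G u ∩ C).card)
    {x : V} (hx : x ∈ C) (hxu : ¬ G.Adj u x) : ∃ t ∈ C, G.Adj x t ∧ G.Adj u t := by
  by_contra hc
  push Not at hc
  have hsub : gN G u ∩ C ⊆ C \ gM G x := by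
    intro z hz
    rw [mem_inter, mem_gN] at hz
    rw [mem_sdiff, mem_gM]
    refine ⟨hz.2, ?_⟩
    rintro (rfl | h)
    · exact hxu hz.1
    · exact hc z hz.2 h hz.1
  have := card_le_card hsub
  have h2 := P.far H hx hxu
  have := P.hk2
  omega

theorem near_N2 (H : Ctx0 G d) (P : Pend G d C u k) {x : V} (hx : x ∈ C) (hxu : G.Adj u x) :
    gN2 G x = (C \ gM G x) ∪ (gN G u \ C) := by
  ext z
  rw [mem_gN2, mem_union, mem_sdiff, mem_sdiff, mem_gM, mem_gN]
  constructor
  · rintro ⟨h1, h2, t, h3, h4⟩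
    by_cases hz : z ∈ C
    · left; exact ⟨hz, by tauto⟩
    right
    refine ⟨?_, hz⟩
    rcases P.cl x hx t h3 with h | h
    · rcases P.cl t h z h4 with h' | h'
      · exact absurd h' hz
      · subst h'; exact absurd hxu.symm h2
    · subst h; exact h4
  · rintro (⟨h1, h2⟩ | ⟨h1, h2⟩)
    · obtain ⟨t, h3, h4, h5⟩ := P.common H hx h1
      exact ⟨fun h => h2 (Or.inl h), fun h => h2 (Or.inr h), t, h4, h5⟩
    · refine ⟨fun h => h2 (h ▸ hx), fun h => ?_, u, hxu.symm, h1⟩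
      rcases P.cl x hx z h with h' | h'
      · exact h2 h'
      · exact h1.ne h'.symm

theorem near_card (H : Ctx0 G d) (P : Pend G d C u k) {x : V} (hx : x ∈ C) (hxu : G.Adj u x) :
    (gN2 G x).card = k + (gN G u \ C).card := by
  rw [P.near_N2 H hx hxu, card_union_of_disjoint, P.near H hx hxu]
  rw [Finset.disjoint_left]
  intro z h1 h2
  rw [mem_sdiff] at h1 h2
  exact h2.2 h1.1

theorem near_B (H : Ctx0 G d) (P : Pend G d C u k) {x : V} (hx : x ∈ C) (hxu : G.Adj u x) :
    gB G x ⊆ gN G u \ C := by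
  intro z hz
  have hN := P.near_N2 H hx hxu
  have h1 := gB_sub x hz
  rw [hN, mem_union] at h1
  rcases h1 with h1 | h1
  · exfalso
    rw [mem_gB] at hz
    obtain ⟨_, w, h2, h3, h4, h5⟩ := hz
    rw [← mem_gN2, hN, mem_union, mem_sdiff, mem_sdiff, mem_gM] at h5
    rw [mem_sdiff] at h1
    rcases P.cl z h1.1 w h2 with h | h
    · tauto
    · subst h; exact h4 hxu.symm
  · exact h1

/-- a vertex outside at distance two from a boundary vertex -/
theorem outside (H : Ctx0 G d) (P : Pend G d C u k) {x q : V} (hx : x ∈ C) (hxu : G.Adj u x)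
    (hq : q ∉ C) (hqx : gD G q x) :
    G.Adj u q ∧ gN G u ∩ C ⊆ gB G q ∧ ∀ p ∈ gN G u ∩ C, gN G p ∩ gN G q = {u} := by
  obtain ⟨h1, h2, t, h3, h4⟩ := hqx
  have hqu : q ≠ u := by rintro rfl; exact h2 hxu
  have htu : t = u := by
    rcases P.cl x hx t h4.symm with h | h
    · rcases P.cl t h q h3.symm with h' | h'
      · exact absurd h' hq
      · exact absurd h' hqu
    · exact h
  subst htu
  have hnear : ∀ z ∈ C, G.Adj q z → False := by
    intro z hz h
    rcases P.cl z hz q h.symm with h' | h'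
    · exact hq h'
    · exact hqu h'
  refine ⟨h3.symm, ?_, ?_⟩
  · intro p hp
    rw [mem_inter, mem_gN] at hp
    rw [mem_gB]
    refine ⟨⟨fun h => hq (h ▸ hp.2), fun h => hnear p hp.2 h, t, h3, hp.1⟩, ?_⟩
    -- a vertex far from t adjacent to p
    have hLc := P.L_card H
    have hc := P.c_pos
    have hm := P.near H hp.2 hp.1
    obtain ⟨z, hz, hz'⟩ := exists_mem_notMem_of_card_lt_card
      (show (C \ gM G p).card < (C \ gN G t).card by omega)
    rw [mem_sdiff, mem_gN] at hz
    rw [mem_sdiff, mem_gM] at hz'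
    have hpz : G.Adj p z := by
      by_contra hcon
      apply hz'
      refine ⟨hz.1, ?_⟩
      rintro (rfl | h)
      · exact hz.2 hp.1
      · exact hcon h
    refine ⟨z, hpz, fun h => hq (h ▸ hz.1), fun h => hnear z hz.1 h, ?_⟩
    rintro ⟨_, _, s, h5, h6⟩
    rcases P.cl z hz.1 s h6.symm with h | h
    · exact hnear s h h5
    · subst h; exact hz.2 h6
  · intro p hp
    rw [mem_inter, mem_gN] at hp
    ext z
    rw [mem_inter, mem_gN, mem_gN, mem_singleton]
    constructor
    · rintro ⟨h5, h6⟩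
      rcases P.cl p hp.2 z h5 with h | h
      · exact absurd h6 (fun h' => hnear z h h')
      · exact h
    · rintro rfl; exact ⟨hp.1.symm, h3⟩

theorem deg_u (H : Ctx0 G d) (P : Pend G d C u k) (ha : k = 1 ∨ 2 ≤ (gN G u ∩ C).card) :
    d + 1 ≤ (gN2 G u).card + k := by
  have ha' : 2 ≤ (gN G u ∩ C).card := by
    rcases ha with rfl | h
    · exact P.a_two H
    · exact h
  have hL := P.L_card H
  have hc := P.c_pos
  have := P.hk1
  obtain ⟨z, hz⟩ := card_pos.1 (show 0 < (C \ gN G u).card by omega)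
  rw [mem_sdiff, mem_gN] at hz
  have ht := P.conn H ha' hz.1 hz.2
  have hB := P.far_B H hz.1 hz.2 ht
  have hcard := P.far_card H hz.1 hz.2 ht
  rw [← hcard]
  apply donor H
  rw [← mem_gB, hB]; simp

end Pend
end GS2

section GS3
open Classical Finset SimpleGraph
set_option linter.unusedSectionVars false
variable {V : Type*} [Fintype V] {G : SimpleGraph V} {d : ℕ}

theorem dist_two (hc : G.Connected) (v z : V) : G.dist v z = 2 ↔ gD G v z := by
  constructor
  · intro h
    refine ⟨?_, ?_, ?_⟩
    · rintro rfl; simp at h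
    · intro h'; rw [← SimpleGraph.dist_eq_one_iff_adj] at h'; omega
    · obtain ⟨p, hp⟩ := hc.exists_walk_length_eq_dist v z
      rw [h] at hp
      match p, hp with
      | .cons h1 (.cons h2 .nil), _ => exact ⟨_, h1, h2⟩
  · rintro ⟨h1, h2, t, h3, h4⟩
    have a1 : G.dist v z ≤ 2 := by
      have := SimpleGraph.dist_le (Walk.cons h3 (Walk.cons h4 Walk.nil))
      simpa using this
    have a2 : G.dist v z ≠ 0 := by
      rw [Ne, hc.dist_eq_zero_iff]; exact fun h => h1 h.symm
    have a3 : G.dist v z ≠ 1 := by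
      rw [Ne, SimpleGraph.dist_eq_one_iff_adj]; exact h2
    omega

theorem distSet_two (hc : G.Connected) (v : V) : distSet G v 2 = ↑(gN2 G v) := by
  ext z
  rw [mem_coe, mem_gN2, ← dist_two hc]; rfl

theorem deg2_eq (hc : G.Connected) (v : V) : deg2 G v = (gN2 G v).card := by
  unfold deg2; rw [distSet_two hc, Set.ncard_coe_finset]

theorem gM_symm {x y : V} (h : y ∈ gM G x) : x ∈ gM G y := by
  rw [mem_gM] at h ⊢
  rcases h with h | h
  · exact Or.inl h.symm
  · exact Or.inr h.symm

theorem matching_of (S A : Finset V) (hAS : A ⊆ S) (h : ∀ x ∈ A, (S \ gM G x).card = 1)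
    (h' : ∀ x ∈ A, ∀ y ∈ S, y ∉ gM G x → y ∈ A) :
    ∃ m : V → V, (∀ x ∈ A, m x ∈ A ∧ m x ≠ x ∧ m (m x) = x) ∧
      ∀ x ∈ A, ∀ b ∈ S, x ≠ b → (¬ G.Adj x b ↔ b = m x) := by
  have hex : ∀ x, ∃ y, x ∈ A → S \ gM G x = {y} := by
    intro x
    by_cases hx : x ∈ A
    · obtain ⟨y, hy⟩ := card_eq_one.1 (h x hx)
      exact ⟨y, fun _ => hy⟩
    · exact ⟨x, fun h => absurd h hx⟩
  choose m hm using hex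
  have hmem : ∀ x ∈ A, m x ∈ S ∧ m x ∉ gM G x := by
    intro x hx
    have : m x ∈ S \ gM G x := by rw [hm x hx]; simp
    rwa [mem_sdiff] at this
  have hmA : ∀ x ∈ A, m x ∈ A := fun x hx => h' x hx _ (hmem x hx).1 (hmem x hx).2
  refine ⟨m, ?_, ?_⟩
  · intro x hx
    refine ⟨hmA x hx, fun hh => (hmem x hx).2 (by rw [hh]; exact self_gM x), ?_⟩
    have : x ∈ S \ gM G (m x) := by
      rw [mem_sdiff]; exact ⟨hAS hx, fun hh => (hmem x hx).2 (gM_symm hh)⟩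
    rw [hm _ (hmA x hx), mem_singleton] at this
    exact this.symm
  · intro x hx b hb hne
    have := congrArg (b ∈ ·) (hm x hx)
    simp only [mem_sdiff, mem_singleton, mem_gM, eq_iff_iff] at this
    rw [← this]
    constructor
    · intro h1; refine ⟨hb, ?_⟩
      rintro (h2 | h2)
      · exact hne h2.symm
      · exact h1 h2
    · rintro ⟨_, h2⟩ h3; exact h2 (Or.inr h3)

variable (G) in
structure TE (d : ℕ) (p u : V) (X : Finset V) : Prop where
  tail : ∃ t : Tail G d, t.w = p ∧ t.uT = u ∧ t.carrier = ↑X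
  odd : Odd d
  deg : ∀ v ∈ X, gD G v p →
    ((gN2 G v).card = 1 ∧ (gN G p \ gM G v).card = 1) ∨ 4 ≤ (gN2 G v).card

namespace TE
variable {p u : V} {X : Finset V}
theorem pX (T : TE G d p u X) : p ∈ X := by
  obtain ⟨t, rfl, rfl, h3⟩ := T.tail
  have := t.w_mem; rw [h3] at this; exact this
theorem uX (T : TE G d p u X) : u ∉ X := by
  obtain ⟨t, rfl, rfl, h3⟩ := T.tail
  have := t.uT_not_mem; rw [h3] at this; exact this
theorem pu (T : TE G d p u X) : G.Adj p u := by
  obtain ⟨t, rfl, rfl, h3⟩ := T.tail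
  exact t.w_adj_uT
theorem cl (T : TE G d p u X) {x z : V} (hx : x ∈ X) (h : G.Adj x z) : z ∈ X ∨ (x = p ∧ z = u) := by
  obtain ⟨t, rfl, rfl, h3⟩ := T.tail
  have hx' : x ∈ t.carrier := by rw [h3]; exact hx
  by_cases hz : z ∈ X
  · exact Or.inl hz
  right
  have hz' : z ∉ t.carrier := by rw [h3]; exact hz
  have hxw : x = t.w := by
    by_contra hne
    exact hz' (t.others_in x hx' hne z h)
  refine ⟨hxw, ?_⟩
  subst hxw
  exact t.w_unique_out z h hz'
end TE

theorem neigh_coe (v : V) : G.neighborSet v = ↑(gN G v) := by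
  ext z; simp [mem_gN]

theorem tail_base (H : Ctx0 G d) {C : Finset V} {u uT : V} (P : Pend G d C u 1)
    (hc : gN G u \ C = {uT}) : TE G d u uT (insert u C) := by
  have hc1 : (gN G u \ C).card = 1 := by rw [hc]; simp
  have ha : (gN G u ∩ C).card + 1 = d := by have := P.ac H; omega
  have huT : uT ∈ gN G u \ C := by rw [hc]; simp
  rw [mem_sdiff, mem_gN] at huT
  have hL := P.L_card H
  obtain ⟨x, hx⟩ := card_pos.1 (show 0 < (C \ gN G u).card by omega)
  rw [mem_sdiff, mem_gN] at hx
  have hd := H.hd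
  have hMC : ∀ y ∈ C, ¬ G.Adj u y → gM G y = C := by
    intro y hy hyu
    have := P.far H hy hyu
    have h0 : C \ gM G y = ∅ := by rw [← card_eq_zero]; omega
    rw [sdiff_eq_empty_iff_subset] at h0
    exact (eq_of_subset_of_card_le h0 (by rw [card_gM H, P.card])).symm
  have hM := hMC x hx.1 hx.2
  have hconn := fun y (hy : y ∈ C) hyu => P.conn H (by omega) (x := y) hy hyu
  have hN2 : gN2 G x = {u} := by
    rw [P.far_N2 H hx.1 hx.2 (hconn x hx.1 hx.2), hM]; simp
  have hMs : ({x} ∪ G.neighborSet x : Set V) = ↑C := by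
    rw [← hM]; ext z; simp [mem_gM]
  have hI : gN G u ∩ gN G x = gN G u ∩ C := by
    rw [← hM]; ext z
    simp only [mem_inter, mem_gN, mem_gM]
    constructor
    · tauto
    · rintro ⟨h1, rfl | h2⟩
      · exact absurd h1 hx.2
      · exact ⟨h1, h2⟩
  have hIs : G.neighborSet u ∩ G.neighborSet x = ↑(gN G u ∩ C) := by
    rw [← hI, neigh_coe, neigh_coe, coe_inter]
  have hseg : ({x} ∪ G.neighborSet x ∪ {u} : Set V) = ↑(insert u C) := by
    rw [hMs]; simp
  obtain ⟨m, hm1, hm2⟩ := matching_of (G := G) C (gN G u ∩ C) inter_subset_right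
    (fun y hy => by
      rw [mem_inter, mem_gN] at hy
      exact P.near H hy.2 hy.1)
    (fun y hy z hz hzy => by
      rw [mem_inter, mem_gN] at hy ⊢
      refine ⟨?_, hz⟩
      by_contra hcon
      have := hMC z hz hcon
      exact hzy (gM_symm (by rw [this]; exact hy.2)))
  refine ⟨⟨{
            carrier := ↑(insert u C)
            k := 1
            seg := fun _ => ↑(insert u C)
            v0 := x
            u0 := u
            vt := fun _ => x
            vt' := fun _ => x
            w := u
            uT := uT
            k_pos := le_refl _
            carrier_eq := by simp
            seg_disj := by
              intro i hi j hj hij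
              simp at hi hj; omega
            seg1 := hseg.symm
            seg1_card := by
              rw [Set.ncard_coe_finset, card_insert_of_notMem P.nu, P.card]
            deg2_v0 := by rw [deg2_eq H.hconn, hN2]; simp
            dist2_v0 := by rw [distSet_two H.hconn, hN2]; simp
            u0_nbrs := by rw [hIs, Set.ncard_coe_finset]; omega
            compl_matching := by
              rw [hIs, hMs]
              refine ⟨?_, m, ?_, ?_⟩
              · rw [coe_subset]; exact inter_subset_right
              · exact hm1
              · intro a ha' b hb hab
                rw [mem_coe] at ha' hb
                by_cases hau : a ∈ gN G u ∩ C
                · rw [hm2 a hau b hb hab]; simp only [mem_coe, hau, true_and]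
                · simp only [mem_coe, hau, false_and, iff_false, not_not]
                  have h1 : ¬ G.Adj u a := by
                    intro h; apply hau; rw [mem_inter, mem_gN]; exact ⟨h, ha'⟩
                  have := hMC a ha' h1
                  have hb2 : b ∈ gM G a := by rw [this]; exact hb
                  rw [mem_gM] at hb2
                  rcases hb2 with h | h
                  · exact absurd h.symm hab
                  · exact h
            seg_card := by intro i hi; simp at hi
            vt_mem := by intro i hi; simp at hi
            vt'_mem := by intro i hi; simp at hi
            vt_ne := by intro i hi; simp at hi
            seg_adj := by intro i hi; simp at hi
            inter_seg := by
              intro i hi j hj hij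
              simp at hi hj; omega
            w_eq_of_k_ge_two := by omega
            w_eq_of_k_eq_one := fun _ => rfl
            w_mem := by simp
            uT_not_mem := by
              simp only [coe_insert, Set.mem_insert_iff, mem_coe, not_or]
              exact ⟨huT.1.ne', huT.2⟩
            w_adj_uT := huT.1
            w_unique_out := by
              intro b hb hbn
              simp only [coe_insert, Set.mem_insert_iff, mem_coe, not_or] at hbn
              have : b ∈ gN G u \ C := by rw [mem_sdiff, mem_gN]; exact ⟨hb, hbn.2⟩
              rw [hc, mem_singleton] at this; exact this
            others_in := by
              intro a ha' hau b hab
              simp only [coe_insert, Set.mem_insert_iff, mem_coe] at ha' ⊢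
              rcases ha' with h | h
              · exact absurd h hau
              · have := P.cl a h b hab; tauto }, rfl, rfl, rfl⟩, ?_, ?_⟩
  · have := parity H C {u} (by simp [P.nu]) (by
      intro y hy z hz; rw [mem_singleton]; exact P.cl y hy z hz)
    rw [sum_singleton, P.card] at this
    have h1 : Even (d * (d + 1)) := Nat.even_mul_succ_self d
    have h2 : Even (gN G u ∩ C).card := by
      rw [Nat.even_add] at this; exact this.1 h1
    rw [← ha]
    exact h2.add_one
  · intro v hv hvu
    left
    rw [mem_insert] at hv
    rcases hv with rfl | hv
    · exact absurd rfl hvu.1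
    have hvu' : ¬ G.Adj u v := fun h => hvu.2.1 h.symm
    refine ⟨P.far_card H hv hvu' (hconn v hv hvu'), ?_⟩
    rw [hMC v hv hvu', hc]; simp

end GS3

section GS4
open Classical Finset SimpleGraph
set_option linter.unusedSectionVars false
variable {V : Type*} [Fintype V] {G : SimpleGraph V} {d : ℕ}

theorem pend_two (H : Ctx0 G d) {C : Finset V} {u p : V} (P : Pend G d C u 2)
    (ha : gN G u ∩ C = {p}) : Pend G d (C.erase p) p 1 ∧ gN G p \ (C.erase p) = {u} := by
  have hp : p ∈ gN G u ∩ C := by rw [ha]; simp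
  rw [mem_inter, mem_gN] at hp
  have hone : ∀ x ∈ C, G.Adj u x → x = p := by
    intro x hx hux
    have : x ∈ gN G u ∩ C := by rw [mem_inter, mem_gN]; exact ⟨hux, hx⟩
    rw [ha, mem_singleton] at this; exact this
  have hup : u ∉ C.erase p := fun h => P.nu (mem_of_mem_erase h)
  have hN : gN G p \ (C.erase p) = {u} := by
    ext z
    rw [mem_sdiff, mem_gN, mem_singleton]
    constructor
    · rintro ⟨h1, h2⟩
      rcases P.cl p hp.2 z h1 with h | h
      · exact absurd (mem_erase.2 ⟨h1.ne', h⟩) h2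
      · exact h
    · rintro rfl; exact ⟨hp.1.symm, hup⟩
  refine ⟨⟨le_refl _, by omega, ?_, by simp, ?_, ⟨u, hp.1.symm, hup⟩, ?_⟩, hN⟩
  · rw [card_erase_of_mem hp.2, P.card]; omega
  · intro x hx z hz
    rw [mem_erase] at hx
    rcases P.cl x hx.2 z hz with h | h
    · by_cases hzp : z = p
      · exact Or.inr hzp
      · exact Or.inl (mem_erase.2 ⟨hzp, h⟩)
    · subst h; exact absurd (hone x hx.2 hz.symm) hx.1
  · obtain ⟨t, h1, h2, h3⟩ := P.common H hp.2 hp.2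
    exact ⟨t, mem_erase.2 ⟨h2.ne', h1⟩, h2⟩

theorem tail_two (H : Ctx0 G d) {C : Finset V} {u p : V} (P : Pend G d C u 2)
    (ha : gN G u ∩ C = {p}) : TE G d p u C := by
  obtain ⟨P', h⟩ := pend_two H P ha
  have hp : p ∈ gN G u ∩ C := by rw [ha]; simp
  have := tail_base H P' h
  rwa [insert_erase (mem_inter.1 hp).2] at this

/-- basic facts when `v` is outside a tail and sees its end. -/
theorem TE.outside {p u v : V} {X : Finset V} (T : TE G d p u X) (hv : v ∉ X) (hp : gD G v p) :
    G.Adj v u ∧ Disjoint X (gM G v) ∧ gN G p ∩ gN G v = {u} := by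
  have key : ∀ t, G.Adj v t → G.Adj t p → t = u := by
    intro t h1 h2
    have htp : t ≠ p := h2.ne
    have htX : t ∉ X := by
      intro h
      rcases T.cl h h1.symm with h' | h'
      · exact hv h'
      · exact htp h'.1
    rcases T.cl T.pX h2.symm with h' | h'
    · exact absurd h' htX
    · exact h'.2
  obtain ⟨h1, h2, t, h3, h4⟩ := hp
  have := key t h3 h4
  subst this
  refine ⟨h3, ?_, ?_⟩
  · rw [Finset.disjoint_left]
    intro z hz hz'
    rw [mem_gM] at hz'
    rcases hz' with rfl | hz'
    · exact hv hz
    · rcases T.cl hz hz'.symm with h | h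
      · exact hv h
      · rw [h.1] at hz'; exact h2 hz'
  · ext z
    rw [mem_inter, mem_gN, mem_gN, mem_singleton]
    constructor
    · rintro ⟨h5, h6⟩; exact key z h6 h5.symm
    · rintro rfl; exact ⟨h4.symm, h3⟩

theorem TE.u_deg (H : Ctx0 G d) {p u : V} {X : Finset V} (T : TE G d p u X) :
    d ≤ (gN2 G u).card + 1 := by
  have hsub : (gN G p).erase u ⊆ gN2 G u := by
    intro z hz
    rw [mem_erase, mem_gN] at hz
    rw [mem_gN2]
    have hzX : z ∈ X := by
      rcases T.cl T.pX hz.2 with h | h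
      · exact h
      · exact absurd h.2 hz.1
    refine ⟨hz.1, fun h => ?_, p, T.pu.symm, hz.2⟩
    rcases T.cl hzX h.symm with h' | h'
    · exact T.uX h'
    · exact hz.2.ne h'.1.symm
  have := card_le_card hsub
  rw [card_erase_of_mem (mem_gN.2 T.pu), H.hr] at this
  omega

theorem regular_of (H : Ctx0 G d) : IsRegularGraph G d := by
  intro v; rw [neigh_coe, Set.ncard_coe_finset, H.hr]

theorem snake_of (H : Ctx0 G d) {p u : V} {X Y : Finset V} (T : TE G d p u X) (T' : TE G d u p Y)
    (hdis : Disjoint X Y) : IsSnake G d := by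
  refine ⟨H.hconn, regular_of H, ?_⟩
  have hun := closed_univ H (X ∪ Y) p (by simp [T.pX]) (by
    intro x hx z hz
    rw [mem_union] at hx ⊢
    rcases hx with hx | hx
    · rcases T.cl hx hz with h | h
      · exact Or.inl h
      · rw [h.2]; exact Or.inr T'.pX
    · rcases T'.cl hx hz with h | h
      · exact Or.inr h
      · rw [h.2]; exact Or.inl T.pX)
  obtain ⟨t, h1, h2, h3⟩ := T.tail
  obtain ⟨t', h1', h2', h3'⟩ := T'.tail
  refine ⟨t, t', ?_, ?_, by rw [h2, h1'], by rw [h2', h1], ?_⟩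
  · rw [h3, h3', disjoint_coe]; exact hdis
  · rw [h3, h3']; ext z; have := hun z; simpa using this
  · intro a ha b hb hab
    rw [h3, mem_coe] at ha
    rw [h3', mem_coe] at hb
    rw [h1, h1']
    rcases T.cl ha hab with h | h
    · exact absurd hb (Finset.disjoint_left.1 hdis h)
    · exact h

set_option maxHeartbeats 1000000 in
theorem extension (H : Ctx0 G d) {p u v y y' : V} {X : Finset V} (T : TE G d p u X)
    (hv2 : gN2 G v = {p, y}) (hpy : p ≠ y) (hv : v ∉ X) (hy : gN G y ∩ gN G v = {y'}) :
    TE G d y' y (X ∪ gM G v) := by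
  have hDp : gD G v p := by rw [← mem_gN2, hv2]; simp
  have hDy : gD G v y := by rw [← mem_gN2, hv2]; simp
  obtain ⟨hvu, hdis, hpu⟩ := T.outside hv hDp
  have huy : u ≠ y' := by
    rintro rfl; exact no_double H hv2 hpy hpu hy
  have hy' : y' ∈ gN G y ∩ gN G v := by rw [hy]; simp
  rw [mem_inter, mem_gN, mem_gN] at hy'
  have huM : u ∈ gM G v := mem_gM.2 (Or.inr hvu)
  have hyM : y' ∈ gM G v := mem_gM.2 (Or.inr hy'.2)
  have hyX' : y' ∉ X := fun h => Finset.disjoint_left.1 hdis h hyM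
  have hyX : y ∉ X := by
    intro h
    rcases T.cl h hy'.1 with h' | h'
    · exact hyX' h'
    · exact hpy h'.1.symm
  have hpM : p ∉ gM G v := Finset.disjoint_left.1 hdis T.pX
  have hyMn : y ∉ gM G v := Finset.disjoint_right.1 (gM_disj_gN2 v) (mem_gN2.2 hDy)
  have hpx : ∀ x ∈ gM G v, G.Adj x p → x = u := by
    intro x hx h
    rw [mem_gM] at hx
    rcases hx with rfl | hx
    · exact absurd h hDp.2.1
    have : x ∈ gN G p ∩ gN G v := by simp [mem_gN, h.symm, hx]
    rw [hpu, mem_singleton] at this; exact this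
  have hyx : ∀ x ∈ gM G v, G.Adj x y → x = y' := by
    intro x hx h
    rw [mem_gM] at hx
    rcases hx with rfl | hx
    · exact absurd h hDy.2.1
    have : x ∈ gN G y ∩ gN G v := by simp [mem_gN, h.symm, hx]
    rw [hy, mem_singleton] at this; exact this
  have hout : ∀ x ∈ gM G v, ∀ z, G.Adj x z → z ∈ gM G v ∨ (x = u ∧ z = p) ∨ (x = y' ∧ z = y) := by
    intro x hx z hz
    rcases adj_out hx hz with h | h
    · exact Or.inl h
    · rw [hv2, mem_insert, mem_singleton] at h
      rcases h with rfl | rfl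
      · exact Or.inr (Or.inl ⟨hpx x hx hz, rfl⟩)
      · exact Or.inr (Or.inr ⟨hyx x hx hz, rfl⟩)
  have htw : ∀ x ∈ gM G v, x ≠ u → x ≠ y' → gM G x = gM G v := by
    intro x hx h1 h2
    apply twin_of H
    intro z hz
    rw [mem_gM] at hz
    rcases hz with rfl | hz
    · exact hx
    · rcases hout x hx z hz with h | h | h
      · exact h
      · exact absurd h.1 h1
      · exact absurd h.1 h2
  have hnon : ¬ G.Adj u y' := by
    intro hadj
    have h1 : (gM G u \ gM G v) = {p} := by
      ext z
      rw [mem_sdiff, mem_singleton, mem_gM]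
      constructor
      · rintro ⟨rfl | h1, h2⟩
        · exact absurd huM h2
        · rcases hout u huM z h1 with h | h | h
          · exact absurd h h2
          · exact h.2
          · exact absurd h.1 huy
      · rintro rfl; exact ⟨Or.inr T.pu.symm, hpM⟩
    have h2 := gM_sdiff_comm H u v
    rw [h1, card_singleton] at h2
    obtain ⟨z, hz⟩ := card_pos.1 (show 0 < (gM G v \ gM G u).card by omega)
    rw [mem_sdiff, mem_gM (v := u)] at hz
    have hz1 : z ≠ u := fun h => hz.2 (Or.inl h)
    have hz2 : z ≠ y' := by rintro rfl; exact hz.2 (Or.inr hadj)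
    have := htw z hz.1 hz1 hz2
    have h3 : u ∈ gM G z := by rw [this]; exact huM
    exact hz.2 (mem_gM.1 (gM_symm h3))
  have hadj : ∀ a ∈ gM G v, ∀ b ∈ gM G v, a ≠ b → (G.Adj a b ↔ ({a, b} : Set V) ≠ {u, y'}) := by
    intro a ha b hb hab
    by_cases hab' : (a = u ∧ b = y') ∨ (a = y' ∧ b = u)
    · rcases hab' with ⟨rfl, rfl⟩ | ⟨rfl, rfl⟩
      · simp [hnon]
      · rw [Set.pair_comm]; simp; exact fun h => hnon h.symm
    · have h1 : ({a, b} : Set V) ≠ {u, y'} := by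
        rw [Ne, Set.pair_eq_pair_iff]; tauto
      simp only [h1, iff_true, ne_eq, not_false_eq_true]
      have h2 : (a ≠ u ∧ a ≠ y') ∨ (b ≠ u ∧ b ≠ y') := by
        have c1 : a = u → b = u → False := fun h h' => hab (h.trans h'.symm)
        have c2 : a = y' → b = y' → False := fun h h' => hab (h.trans h'.symm)
        clear htw hout hpx hyx h1
        tauto
      rcases h2 with h2 | h2
      · have := htw a ha h2.1 h2.2
        have hb' : b ∈ gM G a := by rw [this]; exact hb
        rw [mem_gM] at hb'
        rcases hb' with h | h
        · exact absurd h.symm hab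
        · exact h
      · have := htw b hb h2.1 h2.2
        have hb' : a ∈ gM G b := by rw [this]; exact ha
        rw [mem_gM] at hb'
        rcases hb' with h | h
        · exact absurd h hab
        · exact h.symm
  have hXadj : ∀ a ∈ X, ∀ b ∈ gM G v, (G.Adj a b ↔ (a = p ∧ b = u)) := by
    intro a ha b hb
    constructor
    · intro h
      rcases T.cl ha h with h' | h'
      · exact absurd hb (Finset.disjoint_left.1 hdis h')
      · exact h'
    · rintro ⟨rfl, rfl⟩; exact T.pu
  have hudeg := T.u_deg H
  have hd := H.hd
  have hodd := T.odd
  obtain ⟨t, tw, tu, tc⟩ := T.tail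
  have hsegX : ∀ i, 1 ≤ i → i ≤ t.k → ∀ a ∈ t.seg i, a ∈ X := by
    intro i h1 h2 a ha
    rw [← mem_coe, ← tc, t.carrier_eq]
    simp only [Set.mem_iUnion]
    exact ⟨i, ⟨h1, h2⟩, ha⟩
  have hpk : p ∈ t.seg t.k := by
    by_cases hk : 2 ≤ t.k
    · rw [← tw, t.w_eq_of_k_ge_two hk]; exact t.vt'_mem _ ⟨hk, le_refl _⟩
    · have h1 : t.k = 1 := by have := t.k_pos; omega
      rw [← tw, t.w_eq_of_k_eq_one h1, h1, t.seg1]; simp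
  have hpi : ∀ i, 1 ≤ i → i ≤ t.k → p ∈ t.seg i → i = t.k := by
    intro i h1 h2 hi
    by_contra hne
    exact Set.disjoint_left.1 (t.seg_disj i ⟨h1, h2⟩ t.k ⟨t.k_pos, le_refl _⟩ hne) hi hpk
  have hkpos := t.k_pos
  have hcross : ∀ i, 1 ≤ i → i ≤ t.k → ∀ a ∈ t.seg i, ∀ b ∈ gM G v,
      (G.Adj a b ↔ ((i = 1 ∧ t.k = 1 ∧ a = t.u0 ∧ b = u) ∨ (i = t.k ∧ 2 ≤ i ∧ a = t.vt' i ∧ b = u))) := by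
    intro i h1 h2 a ha b hb
    rw [hXadj a (hsegX i h1 h2 a ha) b hb]
    by_cases hk : 2 ≤ t.k
    · have e := t.w_eq_of_k_ge_two hk
      rw [tw] at e
      constructor
      · rintro ⟨rfl, rfl⟩
        have := hpi i h1 h2 ha
        right; subst this; exact ⟨rfl, hk, e, rfl⟩
      · rintro (h | ⟨rfl, h4, h5, h6⟩)
        · omega
        · exact ⟨h5.trans e.symm, h6⟩
    · have hk1 : t.k = 1 := by omega
      have e := t.w_eq_of_k_eq_one hk1
      rw [tw] at e
      constructor
      · rintro ⟨rfl, rfl⟩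
        left; exact ⟨by omega, hk1, e, rfl⟩
      · rintro (h | h)
        · exact ⟨h.2.2.1.trans e.symm, h.2.2.2⟩
        · omega
  refine ⟨⟨{
      carrier := ↑(X ∪ gM G v)
      k := t.k + 1
      seg := fun i => if i ≤ t.k then t.seg i else ↑(gM G v)
      v0 := t.v0
      u0 := t.u0
      vt := fun i => if i ≤ t.k then t.vt i else u
      vt' := fun i => if i ≤ t.k then t.vt' i else y'
      w := y'
      uT := y
      k_pos := by omega
      carrier_eq := by
        rw [coe_union, ← tc, t.carrier_eq]
        ext z
        simp only [Set.mem_union, Set.mem_iUnion, Set.mem_Icc, mem_coe]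
        constructor
        · rintro (⟨i, hi, hz⟩ | h)
          · exact ⟨i, ⟨hi.1, by omega⟩, by rw [if_pos hi.2]; exact hz⟩
          · exact ⟨t.k + 1, ⟨by omega, le_refl _⟩, by rw [if_neg (by omega)]; exact h⟩
        · rintro ⟨i, hi, hz⟩
          by_cases h : i ≤ t.k
          · rw [if_pos h] at hz; exact Or.inl ⟨i, ⟨hi.1, h⟩, hz⟩
          · rw [if_neg h] at hz; exact Or.inr hz
      seg_disj := by
        intro i hi j hj hij
        rw [Set.mem_Icc] at hi hj
        by_cases h : i ≤ t.k <;> by_cases h' : j ≤ t.k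
        · rw [if_pos h, if_pos h']; exact t.seg_disj i ⟨hi.1, h⟩ j ⟨hj.1, h'⟩ hij
        · rw [if_pos h, if_neg h', Set.disjoint_left]
          intro z hz hz'
          exact Finset.disjoint_left.1 hdis (hsegX i hi.1 h z hz) hz'
        · rw [if_neg h, if_pos h', Set.disjoint_left]
          intro z hz hz'
          exact Finset.disjoint_left.1 hdis (hsegX j hj.1 h' z hz') hz
        · omega
      seg1 := by rw [if_pos hkpos]; exact t.seg1
      seg1_card := by rw [if_pos hkpos]; exact t.seg1_card
      deg2_v0 := t.deg2_v0
      dist2_v0 := t.dist2_v0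
      u0_nbrs := t.u0_nbrs
      compl_matching := t.compl_matching
      seg_card := by
        intro i hi
        rw [Set.mem_Icc] at hi
        by_cases h : i ≤ t.k
        · rw [if_pos h]; exact t.seg_card i ⟨hi.1, h⟩
        · rw [if_neg h, Set.ncard_coe_finset, card_gM H]
      vt_mem := by
        intro i hi
        rw [Set.mem_Icc] at hi
        by_cases h : i ≤ t.k
        · rw [if_pos h, if_pos h]; exact t.vt_mem i ⟨hi.1, h⟩
        · rw [if_neg h, if_neg h]; exact huM
      vt'_mem := by
        intro i hi
        rw [Set.mem_Icc] at hi
        by_cases h : i ≤ t.k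
        · rw [if_pos h, if_pos h]; exact t.vt'_mem i ⟨hi.1, h⟩
        · rw [if_neg h, if_neg h]; exact hyM
      vt_ne := by
        intro i hi
        rw [Set.mem_Icc] at hi
        by_cases h : i ≤ t.k
        · rw [if_pos h, if_pos h]; exact t.vt_ne i ⟨hi.1, h⟩
        · rw [if_neg h, if_neg h]; exact huy
      seg_adj := by
        intro i hi
        rw [Set.mem_Icc] at hi
        by_cases h : i ≤ t.k
        · simp only [if_pos h]; exact t.seg_adj i ⟨hi.1, h⟩
        · simp only [if_neg h]; exact hadj
      inter_seg := by
        intro i hi j hj hij a ha b hb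
        rw [Set.mem_Icc] at hi hj
        by_cases h : i ≤ t.k <;> by_cases h' : j ≤ t.k
        · rw [if_pos h] at ha
          rw [if_pos h'] at hb
          rw [t.inter_seg i ⟨hi.1, h⟩ j ⟨hj.1, h'⟩ hij a ha b hb, if_pos h, if_pos h', if_pos h,
            if_pos h']
          by_cases h2 : 2 ≤ t.k
          · rw [if_pos h2]
          · have e1 : ¬ (j = 2) := by omega
            have e2 : ¬ (i = 2) := by omega
            simp only [e1, e2, false_and, and_false]
        · rw [if_pos h] at ha
          rw [if_neg h'] at hb
          rw [hcross i hi.1 h a ha b hb, if_neg h', if_pos h]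
          have e0 : j = t.k + 1 := by omega
          have e1 : ¬ (j = 1) := by omega
          have e2 : ¬ (j + 1 = i) := by omega
          simp only [e1, e2, false_and, false_or, or_false]
          subst e0
          by_cases h2 : 2 ≤ t.k
          · have e3 : ¬ (t.k + 1 = 2) := by omega
            have e4 : ¬ (t.k = 1) := by omega
            simp only [e3, e4, false_and, and_false, false_or]
            simp only [Nat.add_right_cancel_iff]
          · have e3 : t.k = 1 := by omega
            rw [if_neg h2]
            simp only [e3]
            have e5 : ¬ (2 ≤ i) := by omega
            simp [e5]
        · rw [if_neg h] at ha
          rw [if_pos h'] at hb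
          rw [G.adj_comm, hcross j hj.1 h' b hb a ha, if_neg h, if_pos h']
          have e0 : i = t.k + 1 := by omega
          have e1 : ¬ (i = 1) := by omega
          have e2 : ¬ (i + 1 = j) := by omega
          simp only [e1, e2, false_and, false_or]
          subst e0
          by_cases h2 : 2 ≤ t.k
          · have e3 : ¬ (t.k + 1 = 2) := by omega
            have e4 : ¬ (t.k = 1) := by omega
            simp only [e3, e4, false_and, and_false, false_or]
            simp only [Nat.add_right_cancel_iff, if_pos h', if_neg h]
          · have e3 : t.k = 1 := by omega
            rw [if_neg h2]
            simp only [e3]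
            have e5 : ¬ (2 ≤ j) := by omega
            simp [e5]
        · omega
      w_eq_of_k_ge_two := by intro _; rw [if_neg (by omega)]
      w_eq_of_k_eq_one := by omega
      w_mem := by rw [mem_coe, mem_union]; exact Or.inr hyM
      uT_not_mem := by rw [mem_coe, mem_union]; tauto
      w_adj_uT := hy'.1.symm
      w_unique_out := by
        intro b hb hbn
        rw [mem_coe, mem_union] at hbn
        rcases hout y' hyM b hb with h | h | h
        · tauto
        · exact absurd h.1.symm huy
        · exact h.2
      others_in := by
        intro a ha hau b hab
        rw [mem_coe, mem_union] at ha ⊢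
        rcases ha with h | h
        · rcases T.cl h hab with h' | h'
          · exact Or.inl h'
          · rw [h'.2]; exact Or.inr huM
        · rcases hout a h b hab with h' | h' | h'
          · exact Or.inr h'
          · rw [h'.2]; exact Or.inl T.pX
          · exact absurd h'.1 hau }, rfl, rfl, rfl⟩, hodd, ?_⟩
  intro w hw hwy
  right
  have : w = u := by
    rw [mem_union] at hw
    rcases hw with hw | hw
    · exfalso
      obtain ⟨h1, h2, s, h3, h4⟩ := hwy
      rcases T.cl hw h3 with h | h
      · rcases T.cl h h4 with h' | h'
        · exact hyX' h'
        · exact huy h'.2.symm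
      · rw [h.2] at h4; exact hnon h4
    · by_contra hne
      have := htw w hw hne hwy.1.symm
      have h2 : y' ∈ gM G w := by rw [this]; exact hyM
      rw [mem_gM] at h2
      rcases h2 with h2 | h2
      · exact hwy.1 h2
      · exact hwy.2.1 h2
  rw [this]; omega

end GS4

section GS5
open Classical Finset SimpleGraph
set_option linter.unusedSectionVars false
variable {V : Type*} [Fintype V] {G : SimpleGraph V} {d : ℕ}

variable (G d) in
def E1 (p : V) : Prop := ∃ u X, TE G d p u X
variable (G d) in
def E2 (p : V) : Prop := ∃ C u, Pend G d C u 1 ∧ (gN G u ∩ C).card = 2 ∧ p ∈ gN G u ∩ C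
variable (G d) in
def Exh (p : V) : Prop := E1 G d p ∨ E2 G d p
variable (G d) in
noncomputable def gBs (v : V) : Finset V := (gB G v).filter (fun p => ¬ Exh G d p)

theorem mem_gBs {v p : V} : p ∈ gBs G d v ↔ p ∈ gB G v ∧ ¬ Exh G d p := by simp [gBs]

theorem gBs_sub (v : V) : gBs G d v ⊆ gB G v := filter_subset _ _

theorem e2_sib (H : Ctx0 G d) {v p : V} (hp : p ∈ gB G v) (hk : (gN2 G v).card ≤ 3)
    (h : E2 G d p) : ∃ C u p', Pend G d C u 1 ∧ gN G u ∩ C = {p, p'} ∧ p ≠ p' ∧ v ∉ C ∧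
      G.Adj u v ∧ p' ∈ gB G v ∧ gN G p ∩ gN G v = {u} ∧ gN G p' ∩ gN G v = {u} := by
  obtain ⟨C, u, P, ha, hpu⟩ := h
  have hpu' := hpu
  rw [mem_inter, mem_gN] at hpu'
  have hd := H.hd
  have hv : v ∉ C := by
    intro hv
    by_cases hvu : G.Adj u v
    · have h1 := P.near_card H hv hvu
      have := P.ac H
      omega
    · have h1 := P.far_B H hv hvu (P.conn H (by omega) hv hvu)
      rw [h1, mem_singleton] at hp
      rw [hp] at hpu'
      exact P.nu hpu'.2
  obtain ⟨h1, h2, h3⟩ := P.outside H hpu'.2 hpu'.1 hv (mem_gN2.1 (gB_sub v hp))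
  have : ∃ p', gN G u ∩ C = {p, p'} ∧ p ≠ p' := by
    obtain ⟨a, b, hab, he⟩ := card_eq_two.1 ha
    rw [he, mem_insert, mem_singleton] at hpu
    rcases hpu with rfl | rfl
    · exact ⟨b, he, hab⟩
    · exact ⟨a, by rw [he, pair_comm], hab.symm⟩
  obtain ⟨p', he, hne⟩ := this
  have hp' : p' ∈ gN G u ∩ C := by rw [he]; simp
  exact ⟨C, u, p', P, he, hne, hv, h1, h2 hp', h3 p hpu, h3 p' hp'⟩

theorem TE.gC {p u v : V} {X : Finset V} (T : TE G d p u X) (hv : v ∉ X) (hp : p ∈ gB G v) :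
    Disjoint X (gC G v) ∧ gN G p ∩ gC G v = {u} := by
  obtain ⟨h1, h2, h3⟩ := T.outside hv (mem_gN2.1 (gB_sub v hp))
  have hdis : Disjoint X (_root_.gC G v) := by
    rw [Finset.disjoint_left]
    intro z hz hz'
    unfold _root_.gC at hz'
    rw [mem_union, mem_sdiff, mem_gN2] at hz'
    rcases hz' with hz' | ⟨⟨_, _, t, h4, h5⟩, h6⟩
    · exact Finset.disjoint_left.1 h2 hz hz'
    · rcases T.cl hz h5.symm with h | h
      · exact Finset.disjoint_left.1 h2 h (mem_gM.2 (Or.inr h4))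
      · rw [h.1] at h6; exact h6 hp
  refine ⟨hdis, ?_⟩
  ext z
  rw [mem_inter, mem_gN, mem_singleton]
  constructor
  · rintro ⟨h4, h5⟩
    rcases T.cl T.pX h4 with h | h
    · exact absurd h5 (Finset.disjoint_left.1 hdis h)
    · exact h.2
  · rintro rfl
    refine ⟨T.pu, ?_⟩
    unfold _root_.gC; rw [mem_union, mem_gM]; exact Or.inl (Or.inr h1)

theorem e1_out {p u v : V} {X : Finset V} (T : TE G d p u X) (hp : p ∈ gB G v)
    (hk : (gN2 G v).card = 2 ∨ (gN2 G v).card = 3) : v ∉ X := by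
  intro hv
  have := T.deg v hv (mem_gN2.1 (gB_sub v hp))
  omega

theorem e1_parity (H : Ctx0 G d) {v : V}
    (h : ∀ p ∈ gB G v, ∃ u X, TE G d p u X ∧ v ∉ X) (hne : (gB G v).Nonempty) :
    Even (gN2 G v).card := by
  have h0 : Odd d := by
    obtain ⟨p, hp⟩ := hne
    obtain ⟨u, X, T, _⟩ := h p hp
    exact T.odd
  have h1 : ∀ p ∈ gB G v, (gN G p ∩ gC G v).card = 1 := by
    intro p hp
    obtain ⟨u, X, T, hv⟩ := h p hp
    rw [(T.gC hv hp).2]; simp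
  have h2 := parity H (gC G v) (gB G v)
    (by rw [Finset.disjoint_left]; intro z hz hz'; exact gB_notMem_gC hz' hz)
    (fun x hx z hz => adj_out' hx hz)
  rw [sum_congr rfl h1, sum_const, smul_eq_mul, mul_one] at h2
  have h3 := card_gC H v
  have h4 : Odd d ↔ ¬ Even d := Nat.not_even_iff_odd.symm
  have h5 := congrArg Even h3
  simp only [Nat.even_add, Nat.even_mul, eq_iff_iff] at h2 h5
  have h6 : ¬ Even 1 := by decide
  tauto

theorem k1_lemma (H : Ctx0 G d) {v : V} (hk : (gN2 G v).card = 1) :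
    ∃ u, gN2 G v = {u} ∧ gB G v = {u} ∧ ¬ E2 G d u ∧
      (E1 G d u → (gN G u \ gM G v).card = 1) := by
  obtain ⟨u, hu⟩ := card_eq_one.1 hk
  have hne := gB_nonempty H v (by omega)
  have hB : gB G v = {u} := by
    have := gB_sub (G := G) v
    rw [hu, subset_singleton_iff] at this
    rcases this with h | h
    · rw [h] at hne; simp at hne
    · exact h
  have huB : u ∈ gB G v := by rw [hB]; simp
  refine ⟨u, hu, hB, ?_, ?_⟩
  · intro h
    obtain ⟨C, w, p', _, _, hne', _, _, hp', _⟩ := e2_sib H huB (by omega) h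
    rw [hB, mem_singleton] at hp'
    exact hne' hp'.symm
  · rintro ⟨w, X, T⟩
    by_cases hv : v ∈ X
    · rcases T.deg v hv (mem_gN2.1 (gB_sub v huB)) with h | h
      · exact h.2
      · omega
    · have := e1_parity H (v := v) (by
        intro p hp; rw [hB, mem_singleton] at hp; subst hp; exact ⟨w, X, T, hv⟩) hne
      rw [hk] at this
      exact absurd this (by decide)

variable (G) in
structure Ctx (d : ℕ) : Prop extends Ctx0 G d where
  nsnake : ¬ IsSnake G d
  npeanut : ¬ IsPeanut G d

theorem k2_noE2 (H : Ctx0 G d) {v p : V} (hk : (gN2 G v).card = 2) (hp : p ∈ gB G v) :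
    ¬ E2 G d p := by
  intro h
  obtain ⟨C, u, p', P, he, hne, hv, _, hp', h1, h2⟩ := e2_sib H hp (by omega) h
  have : ({p, p'} : Finset V) = gN2 G v := by
    apply eq_of_subset_of_card_le
    · intro z hz
      rw [mem_insert, mem_singleton] at hz
      rcases hz with rfl | rfl
      · exact gB_sub v hp
      · exact gB_sub v hp'
    · rw [card_pair hne, hk]
  exact no_double H this.symm hne h1 h2

theorem k2_one (H : Ctx G d) {v p : V} (hk : (gN2 G v).card = 2) (hB : gB G v = {p}) :
    ¬ Exh G d p := by
  have hp : p ∈ gB G v := by rw [hB]; simp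
  rintro (⟨u, X, T⟩ | h)
  · have hv := e1_out T hp (Or.inl hk)
    obtain ⟨h1, h2⟩ := T.gC hv hp
    have P := pend_of H.toCtx0 hB (by omega)
    rw [hk] at P
    exact H.nsnake (snake_of H.toCtx0 T (tail_two H.toCtx0 P h2) h1)
  · exact k2_noE2 H.toCtx0 hk hp h

theorem k2_two (H : Ctx G d) {v p y : V} (hN : gN2 G v = {p, y}) (hB : gB G v = {p, y})
    (hne : p ≠ y) (h1 : E1 G d p) (h2 : E1 G d y) : False := by
  have hp : p ∈ gB G v := by rw [hB]; simp
  have hy : y ∈ gB G v := by rw [hB]; simp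
  have hk : (gN2 G v).card = 2 := by rw [hN, card_pair hne]
  obtain ⟨u, X, T⟩ := h1
  obtain ⟨y', Y, T'⟩ := h2
  have hvX := e1_out T hp (Or.inl hk)
  have hvY := e1_out T' hy (Or.inl hk)
  obtain ⟨a1, a2, a3⟩ := T.outside hvX (mem_gN2.1 (gB_sub v hp))
  obtain ⟨b1, b2, b3⟩ := T'.outside hvY (mem_gN2.1 (gB_sub v hy))
  have Q := extension H.toCtx0 T hN hne hvX b3
  have Q' := extension H.toCtx0 T' (by rw [hN, pair_comm]) hne.symm hvY a3
  have hyX : y ∉ X := fun h => Q.uX (mem_union_left _ h)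
  have hpY : p ∉ Y := fun h => Q'.uX (mem_union_left _ h)
  refine H.nsnake (snake_of H.toCtx0 Q T' ?_)
  rw [disjoint_union_left]
  refine ⟨?_, b2.symm⟩
  rw [Finset.disjoint_left]
  intro z hz hz'
  have := closed_univ H.toCtx0 (X ∩ Y) z (mem_inter.2 ⟨hz, hz'⟩) (by
    intro x hx w hw
    rw [mem_inter] at hx ⊢
    constructor
    · rcases T.cl hx.1 hw with h | h
      · exact h
      · rw [h.1] at hx; exact absurd hx.2 hpY
    · rcases T'.cl hx.2 hw with h | h
      · exact h
      · rw [h.1] at hx; exact absurd hx.1 hyX) v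
  exact hvX (mem_inter.1 this).1

theorem exh_single (H : Ctx0 G d) {v p : V} (hk : (gN2 G v).card = 3) (hp : p ∈ gB G v)
    (h : Exh G d p) : ∃ u, gN G p ∩ gN G v = {u} := by
  rcases h with ⟨u, X, T⟩ | h
  · exact ⟨u, (T.outside (e1_out T hp (Or.inr hk)) (mem_gN2.1 (gB_sub v hp))).2.2⟩
  · obtain ⟨C, u, p', P, he, hne, hv, _, hp', h1, h2⟩ := e2_sib H hp (by omega) h
    exact ⟨u, h1⟩

theorem inter_gM {v p : V} (h : gD G v p) : gN G p ∩ gM G v = gN G p ∩ gN G v := by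
  ext z
  simp only [mem_inter, mem_gN, mem_gM]
  constructor
  · rintro ⟨h1, rfl | h2⟩
    · exact absurd h1.symm h.2.1
    · exact ⟨h1, h2⟩
  · tauto

set_option maxHeartbeats 1000000 in
theorem peanut_of (H : Ctx0 G d) {v p p' y u : V} {C : Finset V} (P : Pend G d C u 1)
    (hC : gN G u ∩ C = {p, p'}) (hpp : p ≠ p') (hv : v ∉ C) (huv : G.Adj u v)
    (hB : gB G v = {p, p'}) (hN : gN2 G v = {p, p', y}) (hyp : y ≠ p) (hyp' : y ≠ p')
    (hk : (gN2 G v).card = 3)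
    (h1 : gN G p ∩ gN G v = {u}) (h2 : gN G p' ∩ gN G v = {u}) : IsPeanut G d := by
  have hd := H.hd
  have hp : p ∈ gN G u ∩ C := by rw [hC]; simp
  have hp' : p' ∈ gN G u ∩ C := by rw [hC]; simp
  rw [mem_inter, mem_gN] at hp hp'
  have hcardR : (gC G v).card = d + 2 := by
    have := card_gC H v
    rw [hB, card_pair hpp, hk] at this; omega
  have huR : u ∈ gC G v := by
    unfold gC; rw [mem_union, mem_gM]; exact Or.inl (Or.inr huv.symm)
  have hvu : v ≠ u := huv.ne'
  have hdis : Disjoint C (gC G v) := by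
    rw [Finset.disjoint_left]
    intro z hz hz'
    have hnb : ∀ t ∈ C, ¬ G.Adj v t := by
      intro t ht h
      rcases P.cl t ht v h.symm with h' | h'
      · exact hv h'
      · exact hvu h'
    unfold gC at hz'
    rw [mem_union, mem_sdiff, mem_gN2, mem_gM] at hz'
    rcases hz' with (rfl | h) | ⟨⟨_, _, t, h4, h5⟩, h6⟩
    · exact hv hz
    · exact hnb z hz h
    · rcases P.cl z hz t h5.symm with h | h
      · exact hnb t h h4
      · subst h
        apply h6
        rw [hB, ← hC, mem_inter, mem_gN]; exact ⟨h5, hz⟩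
  have hCout : ∀ x ∈ C, ∀ z ∈ gC G v, (G.Adj x z ↔ (z = u ∧ (x = p ∨ x = p'))) := by
    intro x hx z hz
    constructor
    · intro h
      rcases P.cl x hx z h with h' | h'
      · exact absurd hz (Finset.disjoint_left.1 hdis h')
      · refine ⟨h', ?_⟩
        have : x ∈ gN G u ∩ C := by rw [mem_inter, mem_gN, ← h']; exact ⟨h.symm, hx⟩
        rwa [hC, mem_insert, mem_singleton] at this
    · rintro ⟨rfl, rfl | rfl⟩
      · exact hp.1.symm
      · exact hp'.1.symm
  have hRout : ∀ x ∈ gC G v, ∀ z, G.Adj x z → z ∈ gC G v ∨ z ∈ ({p, p'} : Finset V) := by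
    intro x hx z hz
    rw [← hB]; exact adj_out' hx hz
  have hun := closed_univ H (C ∪ gC G v) v (mem_union_right _ (self_gC v)) (by
    intro x hx z hz
    rw [mem_union] at hx ⊢
    rcases hx with hx | hx
    · rcases P.cl x hx z hz with h | h
      · exact Or.inl h
      · rw [h]; exact Or.inr huR
    · rcases hRout x hx z hz with h | h
      · exact Or.inr h
      · left; rw [← hC] at h; exact (mem_inter.1 h).2)
  have heven : Even d := by
    have := parity H (gC G v) {p, p'} (by
      rw [Finset.disjoint_right]; intro z hz
      rw [← hB] at hz; exact gB_notMem_gC hz) hRout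
    have e : ∀ q ∈ ({p, p'} : Finset V), (gN G q ∩ gC G v).card = 1 := by
      intro q hq
      have hqC : q ∈ C := by rw [← hC] at hq; exact (mem_inter.1 hq).2
      have : gN G q ∩ gC G v = {u} := by
        ext z
        rw [mem_inter, mem_gN, mem_singleton]
        constructor
        · rintro ⟨a, b⟩; exact ((hCout q hqC z b).1 a).1
        · rintro rfl
          refine ⟨?_, huR⟩
          rw [hCout q hqC _ huR]
          rw [mem_insert, mem_singleton] at hq
          exact ⟨rfl, hq⟩
      rw [this]; simp
    rw [sum_congr rfl e, sum_const, card_pair hpp, hcardR] at this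
    have h6 : Even 2 := by decide
    simp only [Nat.even_add, Nat.even_mul, smul_eq_mul, mul_one] at this
    tauto
  -- R1 complement
  have hMC : ∀ x ∈ C, x ≠ p → x ≠ p' → gM G x = C := by
    intro x hx e1 e2
    have hux : ¬ G.Adj u x := by
      intro h
      have : x ∈ gN G u ∩ C := by rw [mem_inter, mem_gN]; exact ⟨h, hx⟩
      rw [hC, mem_insert, mem_singleton] at this
      tauto
    have := P.far H hx hux
    have h0 : C \ gM G x = ∅ := by rw [← card_eq_zero]; omega
    rw [sdiff_eq_empty_iff_subset] at h0
    exact (eq_of_subset_of_card_le h0 (by rw [card_gM H, P.card])).symm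
  have hnpp : ¬ G.Adj p p' := by
    intro hadj
    have := P.near H hp.2 hp.1
    obtain ⟨z, hz⟩ := card_pos.1 (show 0 < (C \ gM G p).card by omega)
    rw [mem_sdiff] at hz
    have e1 : z ≠ p := by rintro rfl; exact hz.2 (self_gM _)
    have e2 : z ≠ p' := by rintro rfl; exact hz.2 (mem_gM.2 (Or.inr hadj))
    exact hz.2 (gM_symm (by rw [hMC z hz.1 e1 e2]; exact hp.2))
  have hR1 : ∀ a ∈ C, ∀ b ∈ C, a ≠ b → (¬ G.Adj a b ↔ ({a, b} : Set V) = {p, p'}) := by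
    intro a ha b hb hab
    rw [Set.pair_eq_pair_iff]
    have key : ∀ a ∈ C, ∀ b ∈ C, a ≠ b → a ≠ p → a ≠ p' → G.Adj a b := by
      intro a ha b hb hab e1 e2
      have : b ∈ gM G a := by rw [hMC a ha e1 e2]; exact hb
      rw [mem_gM] at this
      rcases this with h | h
      · exact absurd h.symm hab
      · exact h
    constructor
    · intro h
      have c1 := key a ha b hb hab
      have c2 := key b hb a ha hab.symm
      have c3 : G.Adj b a → G.Adj a b := fun h => h.symm
      have c4 : a = p → b = p → False := fun h h' => hab (h.trans h'.symm)
      have c5 : a = p' → b = p' → False := fun h h' => hab (h.trans h'.symm)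
      clear key hMC hCout hRout
      tauto
    · rintro (⟨rfl, rfl⟩ | ⟨rfl, rfl⟩)
      · exact hnpp
      · exact fun h => hnpp h.symm
  -- R2
  have hmiss : ∀ x ∈ gC G v, x ≠ u → (gC G v \ gM G x).card = 1 := by
    intro x hx hxu
    have hs : gM G x ⊆ gC G v := by
      intro z hz
      rw [mem_gM] at hz
      rcases hz with rfl | hz
      · exact hx
      · rcases hRout x hx z hz with h | h
        · exact h
        · rw [← hC, mem_inter] at h
          exact absurd ((hCout z h.2 x hx).1 hz.symm).1 hxu
    have := card_sdiff_add_card_eq_card hs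
    rw [card_gM H, hcardR] at this
    omega
  have hmissu : (gC G v \ gM G u).card = 3 := by
    have e := card_sdiff_add_card_inter (gC G v) (gM G u)
    have e2 : gC G v ∩ gM G u = gM G u \ {p, p'} := by
      ext z
      rw [mem_inter, mem_sdiff]
      constructor
      · rintro ⟨a, b⟩
        refine ⟨b, fun h => ?_⟩
        rw [← hB] at h; exact gB_notMem_gC h a
      · rintro ⟨a, b⟩
        refine ⟨?_, a⟩
        rw [mem_gM] at a
        rcases a with rfl | a
        · exact huR
        · rcases hRout u huR z a with h | h
          · exact h
          · exact absurd h b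
    have e3 : ({p, p'} : Finset V) ⊆ gM G u := by
      rw [← hC]; intro z hz; rw [mem_inter, mem_gN] at hz; exact mem_gM.2 (Or.inr hz.1)
    have e4 := card_sdiff_add_card_eq_card e3
    rw [card_pair hpp, card_gM H] at e4
    rw [e2, hcardR] at e
    omega
  obtain ⟨v1, v2, v3, n12, n13, n23, hv3⟩ := card_eq_three.1 hmissu
  have hmu : ∀ z, z ∈ ({v1, v2, v3} : Finset V) ↔ z ∈ gC G v ∧ z ∉ gM G u := by
    intro z; rw [← hv3, mem_sdiff]
  have hv1 := (hmu v1).1 (by simp)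
  have hv2 := (hmu v2).1 (by simp)
  have hv3' := (hmu v3).1 (by simp)
  have une : ∀ z, z ∉ gM G u → u ≠ z := by
    rintro z hz rfl; exact hz (self_gM _)
  have hvi : ∀ a, a ∈ ({v1, v2, v3} : Finset V) → ∀ b ∈ gC G v, a ≠ b → (¬ G.Adj a b ↔ b = u) := by
    intro a ha b hb hab
    have ha' := (hmu a).1 ha
    have h := hmiss a ha'.1 (une a ha'.2).symm
    obtain ⟨w, hw⟩ := card_eq_one.1 h
    have hu : u ∈ gC G v \ gM G a := by
      rw [mem_sdiff]; exact ⟨huR, fun h => ha'.2 (gM_symm h)⟩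
    rw [hw, mem_singleton] at hu
    subst hu
    constructor
    · intro hn
      have : b ∈ gC G v \ gM G a := by
        rw [mem_sdiff, mem_gM]; refine ⟨hb, ?_⟩
        rintro (h | h)
        · exact hab h.symm
        · exact hn h
      rw [hw, mem_singleton] at this; exact this
    · rintro rfl h'; exact ha'.2 (mem_gM.2 (Or.inr h'.symm))
  have hA : ∀ z, z ∈ gC G v \ {u, v1, v2, v3} ↔ z ∈ gC G v ∧ z ≠ u ∧ z ∉ ({v1, v2, v3} : Finset V) := by
    intro z; simp only [mem_sdiff, mem_insert, mem_singleton]; tauto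
  obtain ⟨m, hm1, hm2⟩ := matching_of (G := G) (gC G v) (gC G v \ {u, v1, v2, v3}) sdiff_subset
    (fun x hx => by rw [hA] at hx; exact hmiss x hx.1 hx.2.1)
    (fun x hx z hz hzx => by
      rw [hA] at hx ⊢
      refine ⟨hz, ?_, ?_⟩
      · rintro rfl
        apply hx.2.2
        rw [hmu]; exact ⟨hx.1, fun h => hzx (gM_symm h)⟩
      · intro h
        have hne : z ≠ x := by rintro rfl; exact hzx (self_gM _)
        have := (hvi z h x hx.1 hne).1 (fun h' => hzx (mem_gM.2 (Or.inr h'.symm)))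
        exact hx.2.1 this)
  have hAs : (↑(gC G v) \ {u, v1, v2, v3} : Set V) = ↑(gC G v \ {u, v1, v2, v3}) := by
    simp
  refine ⟨H.hconn, regular_of H, heven, ↑C, ↑(gC G v), p, p', u, v1, v2, v3, ?_, ?_, ?_, ?_,
    hp.2, hp'.2, hpp, huR, hv1.1, hv2.1, hv3'.1, ?_, hR1, ⟨m, ?_, ?_⟩, ?_⟩
  · rw [disjoint_coe]; exact hdis
  · ext z; have := hun z; simpa using this
  · rw [Set.ncard_coe_finset, P.card]
  · rw [Set.ncard_coe_finset, hcardR]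
  · have a1 := une _ hv1.2
    have a2 := une _ hv2.2
    have a3 := une _ hv3'.2
    simp [a1, a2, a3, n12, n13, n23]
  · rw [hAs]; exact hm1
  · rw [hAs]
    intro a ha b hb hab
    rw [mem_coe] at ha hb
    by_cases hau : a = u
    · subst hau
      have e1 : a ∉ gC G v \ {a, v1, v2, v3} := by rw [hA]; tauto
      have e2 : ¬ G.Adj a b ↔ b ∈ ({v1, v2, v3} : Finset V) := by
        rw [hmu, mem_gM]
        have : b ≠ a := hab.symm
        tauto
      rw [e2]
      simp only [mem_coe, e1, false_and, or_false, Set.pair_eq_pair_iff, mem_insert, mem_singleton, true_and]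
      have a1 := une _ hv1.2
      have a2 := une _ hv2.2
      have a3 := une _ hv3'.2
      simp only [a1, a2, a3, false_and, or_false]
    by_cases hav : a ∈ ({v1, v2, v3} : Finset V)
    · have e1 : a ∉ gC G v \ {u, v1, v2, v3} := by rw [hA]; tauto
      rw [hvi a hav b hb hab]
      simp only [mem_coe, e1, false_and, or_false, Set.pair_eq_pair_iff, hau, false_or]
      simp only [mem_insert, mem_singleton] at hav
      clear hm1 hm2 hA hvi hmu hmiss hR1 hMC hRout hCout hun une
      constructor
      · intro h; rcases hav with h1 | h1 | h1
        · exact Or.inl ⟨h1, h⟩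
        · exact Or.inr (Or.inl ⟨h1, h⟩)
        · exact Or.inr (Or.inr ⟨h1, h⟩)
      · rintro (h | h | h) <;> exact h.2
    · have e1 : a ∈ gC G v \ {u, v1, v2, v3} := by rw [hA]; tauto
      rw [hm2 a e1 b hb hab]
      simp only [mem_coe, e1, true_and, Set.pair_eq_pair_iff, hau, false_or, false_and]
      simp only [mem_insert, mem_singleton, not_or] at hav
      simp only [hav.1, hav.2.1, hav.2.2, false_and, false_or]
  · intro a ha b hb
    exact hCout a ha b hb

theorem k3_lemma (H : Ctx G d) {v : V} (hk : (gN2 G v).card = 3) : (gBs G d v).Nonempty := by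
  by_contra hc
  rw [not_nonempty_iff_eq_empty] at hc
  have hall : ∀ p ∈ gB G v, Exh G d p := by
    intro p hp
    by_contra h
    have : p ∈ gBs G d v := mem_gBs.2 ⟨hp, h⟩
    rw [hc] at this; simp at this
  by_cases hE : ∃ p ∈ gB G v, E2 G d p
  · obtain ⟨p, hp, hE2⟩ := hE
    obtain ⟨C, u, p', P, he, hne, hv, huv, hp', h1, h2⟩ := e2_sib H.toCtx0 hp (by omega) hE2
    have hsub : ({p, p'} : Finset V) ⊆ gN2 G v := by
      intro z hz
      rw [mem_insert, mem_singleton] at hz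
      rcases hz with rfl | rfl
      · exact gB_sub v hp
      · exact gB_sub v hp'
    have hc1 := card_sdiff_add_card_eq_card hsub
    rw [card_pair hne, hk] at hc1
    obtain ⟨y, hy⟩ := card_eq_one.1 (show (gN2 G v \ {p, p'}).card = 1 by omega)
    have hyN : y ∈ gN2 G v \ {p, p'} := by rw [hy]; simp
    rw [mem_sdiff, mem_insert, mem_singleton] at hyN
    have hN : gN2 G v = {p, p', y} := by
      rw [← sdiff_union_of_subset hsub, hy]; ext z; simp only [mem_union, mem_insert, mem_singleton]; tauto
    by_cases hyB : y ∈ gB G v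
    · have hBN : gB G v = gN2 G v := by
        apply subset_antisymm (gB_sub v)
        rw [hN]; intro z hz
        simp only [mem_insert, mem_singleton] at hz
        rcases hz with rfl | rfl | rfl <;> assumption
      have hpar := parity H.toCtx0 (gM G v) (gN2 G v) (gM_disj_gN2 v) (fun x hx z hz => adj_out hx hz)
      have e : ∀ q ∈ gN2 G v, (gN G q ∩ gM G v).card = 1 := by
        intro q hq
        rw [inter_gM (mem_gN2.1 hq)]
        rw [← hBN] at hq
        obtain ⟨w, hw⟩ := exh_single H.toCtx0 hk hq (hall q hq)
        rw [hw]; simp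
      rw [sum_congr rfl e, sum_const, hk, card_gM H.toCtx0] at hpar
      have h3 : Even (d * (d + 1)) := Nat.even_mul_succ_self d
      rw [Nat.even_add] at hpar
      exact absurd (hpar.1 h3) (by decide)
    · apply H.npeanut
      refine peanut_of H.toCtx0 P he hne hv huv ?_ hN (by tauto) (by tauto) hk h1 h2
      apply subset_antisymm
      · intro z hz
        have h3 := gB_sub v hz
        rw [hN] at h3
        simp only [mem_insert, mem_singleton] at h3 ⊢
        rcases h3 with h3 | h3 | h3
        · exact Or.inl h3
        · exact Or.inr h3
        · rw [h3] at hz; exact absurd hz hyB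
      · intro z hz
        rw [mem_insert, mem_singleton] at hz
        rcases hz with rfl | rfl <;> assumption
  · push Not at hE
    have := e1_parity H.toCtx0 (v := v) (by
      intro p hp
      rcases hall p hp with ⟨u, X, T⟩ | h
      · exact ⟨u, X, T, e1_out T hp (Or.inr hk)⟩
      · exact absurd h (hE p hp)) (gB_nonempty H.toCtx0 v (by omega))
    rw [hk] at this
    exact absurd this (by decide)

end GS5

section GS6
open Classical Finset SimpleGraph
set_option linter.unusedSectionVars false
variable {V : Type*} [Fintype V] {G : SimpleGraph V} {d : ℕ}

noncomputable def eps (d : ℕ) : ℝ := 4 / ((d : ℝ) - 2)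
noncomputable def bet (d : ℕ) : ℝ := 8 / ((d : ℝ) + 1) + 12 / ((d : ℝ) - 3)

theorem num_facts (hd : 6 < d) : 0 < eps d ∧ eps d ≤ 4/5 ∧ ((d:ℝ) - 2) * eps d = 4 ∧
    20 < ((d:ℝ) + 1) * bet d ∧ 0 < bet d ∧ 2 * eps d < bet d ∧ (7:ℝ) ≤ d := by
  have h7 : (7:ℝ) ≤ d := by exact_mod_cast hd
  have a : (0:ℝ) < d - 2 := by linarith
  have b : (0:ℝ) < d - 3 := by linarith
  have c : (0:ℝ) < d + 1 := by linarith
  have e1 : 0 < eps d := by unfold eps; positivity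
  have e2 : 0 < 8 / ((d:ℝ) + 1) := by positivity
  have e3 : eps d < 4 / ((d:ℝ) - 3) := by
    unfold eps; apply div_lt_div_of_pos_left <;> linarith
  have e4 : 12 / ((d:ℝ) - 3) = 3 * (4 / ((d:ℝ) - 3)) := by ring
  have e5 : ((d:ℝ) + 1) * (8 / ((d:ℝ) + 1)) = 8 := by field_simp
  have e6 : ((d:ℝ) - 3) * (4 / ((d:ℝ) - 3)) = 4 := by field_simp
  have e7 : 0 < 4 / ((d:ℝ) - 3) := by positivity
  refine ⟨e1, ?_, ?_, ?_, ?_, ?_, h7⟩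
  · unfold eps; rw [div_le_div_iff₀ a (by norm_num)]; linarith
  · unfold eps; field_simp
  · unfold bet; rw [e4]; nlinarith
  · unfold bet; rw [e4]; linarith
  · unfold bet; rw [e4]; linarith

variable (G d) in
noncomputable def gun (q x : V) : ℝ :=
  if (gN2 G q).card ≤ 3 ∧ x ∈ gBs G d q then
    (if (gN2 G q).card = 3 then 1 / ((gBs G d q).card : ℝ) else 1) else 0

variable (G d) in
noncomputable def gin (x : V) : ℝ := ∑ p, gun G d x p
variable (G d) in
noncomputable def gout (x : V) : ℝ := ∑ q, gun G d q x
variable (G d) in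
noncomputable def hh (x : V) : ℝ :=
  ((gN2 G x).card : ℝ) - 4 + (1 - eps d) * gin G d x - (1 - eps d) * gout G d x

theorem sum_hh : ∑ x, hh G d x = ∑ x, (((gN2 G x).card : ℝ) - 4) := by
  unfold hh
  rw [sum_sub_distrib, sum_add_distrib, ← mul_sum, ← mul_sum]
  have : ∑ x, gin G d x = ∑ x, gout G d x := by
    unfold gin gout; exact sum_comm
  rw [this]; ring

theorem gun_nonneg (q x : V) : 0 ≤ gun G d q x := by
  unfold gun; split_ifs <;> positivity

theorem gun_le (q x : V) : gun G d q x ≤ 1 := by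
  unfold gun
  split_ifs with h1 h2
  · have : 1 ≤ (gBs G d q).card := card_pos.2 ⟨x, h1.2⟩
    have h3 : (1:ℝ) ≤ ((gBs G d q).card : ℝ) := by exact_mod_cast this
    rw [div_le_one (by linarith)]; exact h3
  · exact le_refl _
  · norm_num

theorem gun_ne {q x : V} (h : gun G d q x ≠ 0) : (gN2 G q).card ≤ 3 ∧ x ∈ gBs G d q := by
  by_contra hc
  exact h (by unfold gun; rw [if_neg hc])

theorem gin_nonneg (x : V) : 0 ≤ gin G d x := sum_nonneg (fun _ _ => gun_nonneg _ _)
theorem gout_nonneg (x : V) : 0 ≤ gout G d x := sum_nonneg (fun _ _ => gun_nonneg _ _)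

theorem gin_two {x : V} (h : (gN2 G x).card ≤ 2) : gin G d x = (gBs G d x).card := by
  unfold gin gun
  have e1 : (gN2 G x).card ≤ 3 := by omega
  have e2 : ¬ (gN2 G x).card = 3 := by omega
  simp only [e1, e2, true_and, if_false]
  rw [← sum_filter]; simp

theorem gin_three (H : Ctx G d) {x : V} (h : (gN2 G x).card = 3) : gin G d x = 1 := by
  unfold gin gun
  simp only [h, le_refl, true_and, if_true]
  rw [← sum_filter]
  have h1 : 1 ≤ (gBs G d x).card := card_pos.2 (k3_lemma H h)
  have h3 : ((gBs G d x).card : ℝ) ≠ 0 := by positivity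
  have : univ.filter (fun p => p ∈ gBs G d x) = gBs G d x := by ext z; simp
  rw [this, sum_const, nsmul_eq_mul]; field_simp

theorem gout_zero_of {x : V} (h : ∀ q, gun G d q x = 0) : gout G d x = 0 :=
  sum_eq_zero (fun q _ => h q)

theorem gun_donor (H : Ctx0 G d) {q x : V} (h : gun G d q x ≠ 0) : d ≤ (gN2 G x).card + 2 := by
  obtain ⟨h1, h2⟩ := gun_ne h
  have := donor H (mem_gB.1 (gBs_sub q h2))
  omega

theorem gout_low (H : Ctx0 G d) {x : V} (h : (gN2 G x).card ≤ 4) : gout G d x = 0 := by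
  apply gout_zero_of
  intro q
  by_contra hc
  have := gun_donor H hc
  have := H.hd
  omega

theorem gout_exh {x : V} (h : Exh G d x) : gout G d x = 0 := by
  apply gout_zero_of
  intro q
  by_contra hc
  exact (mem_gBs.1 (gun_ne hc).2).2 h

theorem gout_le (x : V) : gout G d x ≤ (gN2 G x).card := by
  unfold gout
  have : ∑ q, gun G d q x = ∑ q ∈ gN2 G x, gun G d q x := by
    symm
    apply sum_subset (subset_univ _)
    intro q _ hq
    by_contra hc
    apply hq
    rw [mem_gN2]
    exact gD_symm (mem_gN2.1 (gB_sub q (gBs_sub q (gun_ne hc).2)))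
  rw [this]
  calc _ ≤ ∑ q ∈ gN2 G x, (1:ℝ) := sum_le_sum (fun q _ => gun_le q x)
    _ = _ := by simp

theorem hh_four (H : Ctx0 G d) {x : V} (h : 4 ≤ (gN2 G x).card) : 0 ≤ hh G d x := by
  obtain ⟨e1, e2, e3, e4, e5, e6, e7⟩ := num_facts H.hd
  have i := gin_nonneg (d := d) (G := G) x
  have o := gout_le (d := d) (G := G) x
  have h4 : (4:ℝ) ≤ ((gN2 G x).card : ℝ) := by exact_mod_cast h
  unfold hh
  have ip : 0 ≤ (1 - eps d) * gin G d x := mul_nonneg (by linarith) i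
  by_cases hz : gout G d x = 0
  · rw [hz]; nlinarith
  · have : ∃ q, gun G d q x ≠ 0 := by
      by_contra hc; push Not at hc; exact hz (gout_zero_of hc)
    obtain ⟨q, hq⟩ := this
    have hD := gun_donor H hq
    have hD' : (d:ℝ) ≤ ((gN2 G x).card : ℝ) + 2 := by exact_mod_cast hD
    have : (1 - eps d) * gout G d x ≤ (1 - eps d) * (gN2 G x).card :=
      mul_le_mul_of_nonneg_left o (by linarith)
    nlinarith

theorem hh_three (H : Ctx G d) {x : V} (h : (gN2 G x).card = 3) : hh G d x = - eps d := by
  unfold hh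
  rw [gin_three H h, gout_low H.toCtx0 (by omega), h]; push_cast; ring

theorem hh_ge3 (H : Ctx G d) {x : V} (h : 3 ≤ (gN2 G x).card) : - eps d ≤ hh G d x := by
  obtain ⟨e1, _⟩ := num_facts H.hd
  by_cases h3 : (gN2 G x).card = 3
  · rw [hh_three H h3]
  · have := hh_four H.toCtx0 (x := x) (by omega); linarith

theorem hh_two (H : Ctx0 G d) {x : V} (h : (gN2 G x).card ≤ 2) :
    hh G d x = ((gN2 G x).card : ℝ) - 4 + (1 - eps d) * (gBs G d x).card := by
  unfold hh
  rw [gin_two h, gout_low H (by omega)]; ring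

theorem hh_out (H : Ctx0 G d) (x : V) :
    ((gN2 G x).card : ℝ) - 4 - gout G d x ≤ hh G d x := by
  obtain ⟨e1, e2, e3, e4, e5, e6, e7⟩ := num_facts H.hd
  have i := gin_nonneg (d := d) (G := G) x
  have o := gout_nonneg (d := d) (G := G) x
  unfold hh
  nlinarith

variable (G d) in
def Needy (w : V) : Prop := (gN2 G w).card ≤ 2 ∧ (gBs G d w).card ≤ 1

theorem non_needy (H : Ctx G d) {x : V} (h : ¬ Needy G d x) : 0 < hh G d x + bet d := by
  obtain ⟨e1, e2, e3, e4, e5, e6, e7⟩ := num_facts H.hd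
  by_cases h2 : (gN2 G x).card ≤ 2
  · have h3 : 2 ≤ (gBs G d x).card := by
      by_contra hc; exact h ⟨h2, by omega⟩
    have h4 := card_le_card ((gBs_sub (d := d) x).trans (gB_sub (G := G) x))
    have h5 : (gN2 G x).card = 2 := by omega
    have h6 : (gBs G d x).card = 2 := by omega
    rw [hh_two H.toCtx0 h2, h5, h6]; push_cast; linarith
  · have := hh_ge3 H (x := x) (by omega)
    linarith

variable (G d) in
noncomputable def gK (w : V) : Finset V :=
  if (gN2 G w).card = 1 then gC G w ∪ (gB G w).filter (fun z => E1 G d z) else gC G w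

variable (G d) in
structure Clu (K : Finset V) : Prop where
  sum : 0 < ∑ x ∈ K, (hh G d x + bet d)
  out3 : ∀ x ∈ K, ∀ z, z ∉ K → G.Adj x z → 3 ≤ (gN2 G z).card
  key : ∀ w ∈ K, Needy G d w → gK G d w = K
  near : ∀ w ∈ K, Needy G d w → ∀ x ∈ K, x ∉ gM G w → 2 ≤ (gN G w ∩ gN G x).card
  bb : (∀ w ∈ K, Needy G d w → K = gM G w) ∨ ∃ b, ∀ x ∈ K, ∀ z, z ∉ K → G.Adj x z → z = b

theorem gM_sub_gK (w : V) : gM G w ⊆ gK G d w := by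
  unfold gK gC
  split_ifs
  · intro z hz; simp only [mem_union]; exact Or.inl (Or.inl hz)
  · intro z hz; simp only [mem_union]; exact Or.inl hz

theorem clu_disj {w w' : V} (hw : Needy G d w) (hw' : Needy G d w')
    (c : Clu G d (gK G d w)) (c' : Clu G d (gK G d w')) :
    gK G d w = gK G d w' ∨ Disjoint (gK G d w) (gK G d w') := by
  have s := gM_sub_gK (G := G) (d := d) w (self_gM w)
  have s' := gM_sub_gK (G := G) (d := d) w' (self_gM w')
  by_cases hdis : Disjoint (gK G d w) (gK G d w')
  · exact Or.inr hdis
  left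
  rw [Finset.not_disjoint_iff] at hdis
  obtain ⟨x, hx, hx'⟩ := hdis
  have step : ∀ {w w' x : V}, Needy G d w' → Clu G d (gK G d w) → x ∈ gK G d w → x ∈ gM G w' →
      w' ∈ gK G d w := by
    intro w w' x hw' c hx h
    by_contra hc
    rw [mem_gM] at h
    rcases h with rfl | h
    · exact hc hx
    · have := c.out3 x hx w' hc h.symm
      have := hw'.1
      omega
  by_cases h1 : x ∈ gM G w'
  · exact (c.key w' (step hw' c hx h1) hw').symm
  by_cases h2 : x ∈ gM G w
  · exact c'.key w (step hw c' hx' h2) hw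
  -- two common neighbours
  have n' := c'.near w' s' hw' x hx' h1
  rcases c.bb with hb | ⟨b, hb⟩
  · have := hb w s hw
    rw [this] at hx; exact absurd hx h2
  obtain ⟨t, ht, htb⟩ : ∃ t ∈ gN G w' ∩ gN G x, t ≠ b := by
    by_contra hcon
    push Not at hcon
    have : gN G w' ∩ gN G x ⊆ {b} := fun t ht => by rw [mem_singleton]; exact hcon t ht
    have := card_le_card this
    rw [card_singleton] at this
    omega
  rw [mem_inter, mem_gN, mem_gN] at ht
  have htK : t ∈ gK G d w := by
    by_contra hc
    exact htb (hb x hx t hc ht.2)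
  exact (c.key w' (step hw' c htK (mem_gM.2 (Or.inr ht.1))) hw').symm

theorem final_sum (H : Ctx G d) (hcl : ∀ w, Needy G d w → Clu G d (gK G d w)) :
    0 < ∑ x, (((gN2 G x).card : ℝ) - 4 + bet d) := by
  have e : ∑ x, (((gN2 G x).card : ℝ) - 4 + bet d) = ∑ x, (hh G d x + bet d) := by
    rw [sum_add_distrib, sum_add_distrib, sum_hh]
  rw [e]
  set F : Finset (Finset V) := (univ.filter (fun w => Needy G d w)).image (gK G d) with hF
  have hFm : ∀ K ∈ F, ∃ w, Needy G d w ∧ gK G d w = K := by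
    intro K hK
    rw [hF, mem_image] at hK
    obtain ⟨w, hw, rfl⟩ := hK
    exact ⟨w, (mem_filter.1 hw).2, rfl⟩
  have hdisj : (F : Set (Finset V)).PairwiseDisjoint id := by
    intro K hK K' hK' hne
    obtain ⟨w, hw, rfl⟩ := hFm K hK
    obtain ⟨w', hw', rfl⟩ := hFm K' hK'
    rcases clu_disj hw hw' (hcl w hw) (hcl w' hw') with h | h
    · exact absurd h hne
    · exact h
  rw [← sum_sdiff (subset_univ (F.biUnion id)), sum_biUnion hdisj]
  have p1 : ∀ K ∈ F, 0 < ∑ x ∈ id K, (hh G d x + bet d) := by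
    intro K hK
    obtain ⟨w, hw, rfl⟩ := hFm K hK
    exact (hcl w hw).sum
  have p2 : ∀ x ∈ univ \ F.biUnion id, 0 < hh G d x + bet d := by
    intro x hx
    apply non_needy H
    intro hn
    rw [mem_sdiff] at hx
    apply hx.2
    rw [mem_biUnion]
    refine ⟨gK G d x, ?_, gM_sub_gK x (self_gM x)⟩
    rw [hF, mem_image]
    exact ⟨x, by simp [hn], rfl⟩
  obtain ⟨x0, _⟩ := H.hfar
  by_cases hx : x0 ∈ F.biUnion id
  · have hFn : F.Nonempty := by
      rw [mem_biUnion] at hx; obtain ⟨K, hK, _⟩ := hx; exact ⟨K, hK⟩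
    have := sum_pos p1 hFn
    have := sum_nonneg (fun x hx => (p2 x hx).le)
    linarith
  · have := sum_nonneg (fun x hx => (p1 x hx).le)
    have := sum_pos p2 ⟨x0, by simp at hx ⊢; exact hx⟩
    linarith

end GS6

section GS7
open Classical Finset SimpleGraph
set_option linter.unusedSectionVars false
variable {V : Type*} [Fintype V] {G : SimpleGraph V} {d : ℕ}

theorem sum_ge {S : Finset V} {f : V → ℝ} (m : ℝ) (h : ∀ x ∈ S, m ≤ f x) :
    (S.card : ℝ) * m ≤ ∑ x ∈ S, f x := by
  have := card_nsmul_le_sum S f m h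
  rwa [nsmul_eq_mul] at this

theorem bs_single {v p : V} (hB : gB G v = {p}) (h : ¬ Exh G d p) : gBs G d v = {p} := by
  ext z
  rw [mem_gBs, hB, mem_singleton]
  constructor
  · exact fun h => h.1
  · rintro rfl; exact ⟨rfl, h⟩

theorem hh_bound (H : Ctx0 G d) {x : V} {k b : ℕ} (h : (gN2 G x).card = k) (hk : k ≤ 2)
    (hb : b ≤ (gBs G d x).card) : (k:ℝ) - 4 + (1 - eps d) * b ≤ hh G d x := by
  obtain ⟨e1, e2, _⟩ := num_facts H.hd
  rw [hh_two H (by omega), h]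
  have : (b:ℝ) ≤ (gBs G d x).card := by exact_mod_cast hb
  nlinarith

theorem sum_beta (K : Finset V) :
    ∑ x ∈ K, (hh G d x + bet d) = ∑ x ∈ K, hh G d x + K.card * bet d := by
  rw [sum_add_distrib, sum_const, nsmul_eq_mul]

theorem sum_split (C N : Finset V) (f : V → ℝ) :
    ∑ x ∈ C, f x = ∑ x ∈ N ∩ C, f x + ∑ x ∈ C \ N, f x := by
  rw [inter_comm]; exact (sum_inter_add_sum_sdiff C N f).symm

theorem tail_clu (H : Ctx G d) {C : Finset V} {u uT : V} (P : Pend G d C u 1)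
    (hc : gN G u \ C = {uT}) : Clu G d (insert u C) := by
  have H0 := H.toCtx0
  have hd := H0.hd
  obtain ⟨e1, e2, e3, e4, e5, e6, e7⟩ := num_facts hd
  have T := tail_base H0 P hc
  have hE1 : E1 G d u := ⟨_, _, T⟩
  have c1 : (gN G u \ C).card = 1 := by rw [hc]; simp
  have ha := P.a_two H0
  have hL := P.L_card H0
  have hac := P.ac H0
  have hu := P.deg_u H0 (Or.inl rfl)
  have huT : uT ∈ gN G u ∧ uT ∉ C := by
    rw [← mem_sdiff, hc]; simp
  -- A facts
  have A1 : ∀ x ∈ C, G.Adj u x → (gN2 G x).card = 2 := by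
    intro x hx hxu; rw [P.near_card H0 hx hxu, c1]
  have A2 : ∀ x ∈ C, G.Adj u x → gB G x = {uT} := by
    intro x hx hxu
    have h := P.near_B H0 hx hxu
    rw [hc] at h
    rcases subset_singleton_iff.1 h with h | h
    · have := gB_nonempty H0 x (by rw [A1 x hx hxu]; omega)
      rw [h] at this; simp at this
    · exact h
  have A3 : ∀ x ∈ C, G.Adj u x → gBs G d x = {uT} := fun x hx hxu =>
    bs_single (A2 x hx hxu) (k2_one H (A1 x hx hxu) (A2 x hx hxu))
  have A4 : ∀ x ∈ C, G.Adj u x → gK G d x = insert u C := by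
    intro x hx hxu
    unfold gK gC
    rw [if_neg (by rw [A1 x hx hxu]; omega), A2 x hx hxu, P.near_N2 H0 hx hxu, hc]
    ext z
    simp only [mem_union, mem_sdiff, mem_singleton, mem_insert]
    constructor
    · rintro (h | h)
      · rw [mem_gM] at h
        rcases h with rfl | h
        · exact Or.inr hx
        · exact (P.cl x hx z h).symm
      · rcases h with ⟨h | h, h'⟩
        · exact Or.inr h.1
        · exact absurd h h'
    · rintro (rfl | h)
      · left; rw [mem_gM]; exact Or.inr hxu.symm
      · by_cases hz : z ∈ gM G x
        · exact Or.inl hz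
        · right; refine ⟨Or.inl ⟨h, hz⟩, ?_⟩
          rintro rfl; exact huT.2 h
  have L4 : ∀ x ∈ C, ¬ G.Adj u x → gK G d x = insert u C := by
    intro x hx hxu
    have ht := P.conn H0 ha hx hxu
    unfold gK
    rw [if_pos (P.far_card H0 hx hxu ht), P.far_B H0 hx hxu ht, P.far_C H0 hx hxu ht]
    ext z
    simp only [mem_union, mem_filter, mem_singleton, mem_insert]
    constructor
    · rintro (h | h)
      · exact Or.inr h
      · exact Or.inl h.1
    · rintro (rfl | h)
      · exact Or.inr ⟨rfl, hE1⟩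
      · exact Or.inl h
  have nN : ¬ Needy G d u := fun h => by have := h.1; omega
  -- the outer neighbour
  have out : ∀ x ∈ insert u C, ∀ z, z ∉ insert u C → G.Adj x z → z = uT := by
    intro x hx z hz h
    rw [mem_insert, not_or] at hz
    rcases mem_insert.1 hx with rfl | hx
    · have : z ∈ gN G x \ C := by rw [mem_sdiff, mem_gN]; exact ⟨h, hz.2⟩
      rw [hc] at this; exact mem_singleton.1 this
    · rcases P.cl x hx z h with h | h
      · exact absurd h hz.2
      · exact absurd h hz.1
  obtain ⟨x0, hx0⟩ : (gN G u ∩ C).Nonempty := card_pos.1 (by omega)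
  rw [mem_inter, mem_gN] at hx0
  have hTd : d + 1 ≤ (gN2 G uT).card + 2 := by
    have := donor H0 (mem_gB.1 (show uT ∈ gB G x0 by rw [A2 x0 hx0.2 hx0.1]; simp))
    rw [A1 x0 hx0.2 hx0.1] at this; exact this
  refine ⟨?_, ?_, ?_, ?_, Or.inr ⟨uT, out⟩⟩
  · rw [sum_beta, sum_insert P.nu, card_insert_of_notMem P.nu, P.card, sum_split C (gN G u)]
    have s1 := sum_ge (S := gN G u ∩ C) (f := hh G d) (-1 - eps d) (by
      intro x hx
      rw [mem_inter, mem_gN] at hx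
      have := hh_bound H0 (A1 x hx.2 hx.1) le_rfl (b := 1) (by rw [A3 x hx.2 hx.1]; simp)
      push_cast at this; linarith)
    have s2 := sum_ge (S := C \ gN G u) (f := hh G d) (-3) (by
      intro x hx
      rw [mem_sdiff, mem_gN] at hx
      have := hh_bound H0 (P.far_card H0 hx.1 hx.2 (P.conn H0 ha hx.1 hx.2)) (by omega)
        (b := 0) (by omega)
      push_cast at this; linarith)
    have s3 := hh_out H0 u
    rw [gout_exh (Or.inl hE1)] at s3
    have : (d:ℝ) + 1 ≤ (gN2 G u).card + 1 := by exact_mod_cast hu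
    rw [hL, c1] at s2
    have ac' : ((gN G u ∩ C).card : ℝ) = d - 1 := by
      rw [c1] at hac; have : (((gN G u ∩ C).card + 1 : ℕ) : ℝ) = d := by rw [hac]
      push_cast at this; linarith
    rw [ac'] at s1
    push_cast at s2 ⊢
    nlinarith
  · intro x hx z hz h
    rw [out x hx z hz h]; omega
  · intro w hw hn
    rcases mem_insert.1 hw with rfl | hw
    · exact absurd hn nN
    · by_cases hwu : G.Adj u w
      · exact A4 w hw hwu
      · exact L4 w hw hwu
  · intro w hw hn x hx hxw
    rcases mem_insert.1 hw with rfl | hw'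
    · exact absurd hn nN
    · rcases mem_insert.1 hx with rfl | hx'
      · by_cases hwu : G.Adj x w
        · exact absurd (mem_gM.2 (Or.inr hwu.symm)) hxw
        · have hf := P.far H0 hw' hwu
          have hf' : C \ gM G w = ∅ := by rw [← card_eq_zero]; omega
          refine ha.trans (card_le_card ?_)
          intro t ht
          rw [mem_inter, mem_gN] at ht
          rw [mem_inter, mem_gN, mem_gN]
          refine ⟨?_, ht.1⟩
          have := sdiff_eq_empty_iff_subset.1 hf' ht.2
          rcases mem_gM.1 this with rfl | h
          · exact absurd ht.1 hwu
          · exact h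
      · exact (P.common2 H0 hw' hx').trans (card_le_card inter_subset_left)

end GS7

section GS8
open Classical Finset SimpleGraph
set_option linter.unusedSectionVars false
variable {V : Type*} [Fintype V] {G : SimpleGraph V} {d : ℕ}

theorem Pend.gun_A (H : Ctx0 G d) {C : Finset V} {u : V} {k : ℕ} (P : Pend G d C u k)
    (ha : 2 ≤ (gN G u ∩ C).card) {q x : V} (hx : x ∈ gN G u ∩ C) (h : gun G d q x ≠ 0) :
    q ∈ gN G u \ C ∧ (gN2 G q).card = 3 ∧ (gN G u ∩ C).card ≤ 3 := by
  obtain ⟨h1, h2⟩ := gun_ne h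
  have h3 := gBs_sub q h2
  have hx' := hx
  rw [mem_inter, mem_gN] at hx
  have hq : q ∉ C := by
    intro hq
    by_cases hqu : G.Adj u q
    · have := P.near_B H hq hqu h3
      exact (mem_sdiff.1 this).2 hx.2
    · rw [P.far_B H hq hqu (P.conn H ha hq hqu), mem_singleton] at h3
      rw [h3] at hx; exact P.nu hx.2
  obtain ⟨o1, o2, o3⟩ := P.outside H hx.2 hx.1 hq (mem_gN2.1 (gB_sub q h3))
  have o4 := o2.trans (gB_sub q)
  have o5 := card_le_card o4
  refine ⟨by rw [mem_sdiff, mem_gN]; exact ⟨o1, hq⟩, ?_, by omega⟩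
  by_contra h4
  have h5 : (gN G u ∩ C).card = 2 := by omega
  have h6 : gN G u ∩ C = gN2 G q := eq_of_subset_of_card_le o4 (by omega)
  obtain ⟨p, p', hne, hpp⟩ := card_eq_two.1 h5
  rw [hpp] at h6 o3
  exact no_double H h6.symm hne (o3 p (by simp)) (o3 p' (by simp))

theorem Pend.gout_A (H : Ctx G d) {C : Finset V} {u : V} {k : ℕ} (P : Pend G d C u k)
    (ha : 2 ≤ (gN G u ∩ C).card) :
    ∑ x ∈ gN G u ∩ C, gout G d x ≤ (gN G u \ C).card := by
  unfold gout
  rw [sum_comm]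
  have e : ∑ q, ∑ x ∈ gN G u ∩ C, gun G d q x
      = ∑ q ∈ gN G u \ C, ∑ x ∈ gN G u ∩ C, gun G d q x := by
    symm
    apply sum_subset (subset_univ _)
    intro q _ hq
    apply sum_eq_zero
    intro x hx
    by_contra hc
    exact hq (P.gun_A H.toCtx0 ha hx hc).1
  rw [e]
  calc _ ≤ ∑ q ∈ gN G u \ C, (1:ℝ) := by
        apply sum_le_sum
        intro q hq
        by_cases hz : ∀ x ∈ gN G u ∩ C, gun G d q x = 0
        · rw [sum_eq_zero hz]; norm_num
        · push Not at hz
          obtain ⟨x, hx, hc⟩ := hz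
          have h3 := (P.gun_A H.toCtx0 ha hx hc).2.1
          rw [← gin_three H h3]
          unfold gin
          exact sum_le_sum_of_subset_of_nonneg (subset_univ _) (fun _ _ _ => gun_nonneg _ _)
    _ = _ := by simp

theorem Pend.gout_A4 (H : Ctx G d) {C : Finset V} {u : V} {k : ℕ} (P : Pend G d C u k)
    (ha : 4 ≤ (gN G u ∩ C).card) :
    ∑ x ∈ gN G u ∩ C, gout G d x = 0 := by
  apply sum_eq_zero
  intro x hx
  apply gout_zero_of
  intro q
  by_contra hc
  have := (P.gun_A H.toCtx0 (by omega) hx hc).2.2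
  omega

theorem Pend.gout_A2 {C : Finset V} {u : V} (P : Pend G d C u 1)
    (ha : (gN G u ∩ C).card = 2) :
    ∑ x ∈ gN G u ∩ C, gout G d x = 0 := by
  apply sum_eq_zero
  intro x hx
  exact gout_exh (Or.inr ⟨C, u, P, ha, hx⟩)

theorem pend_clu (H : Ctx G d) {C : Finset V} {u : V} {k : ℕ} (P : Pend G d C u k)
    (ha : 2 ≤ (gN G u ∩ C).card) (hE : ¬ Exh G d u) : Clu G d C := by
  have H0 := H.toCtx0
  have hd := H0.hd
  obtain ⟨e1, e2, e3, e4, e5, e6, e7⟩ := num_facts hd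
  have hL := P.L_card H0
  have hac := P.ac H0
  have hcp := P.c_pos
  have hu := P.deg_u H0 (Or.inr ha)
  have hk1 := P.hk1
  have hk2 := P.hk2
  have hc3 : 3 ≤ k + (gN G u \ C).card := by
    by_contra hlt
    have hk : k = 1 := by omega
    have h1 : (gN G u \ C).card = 1 := by omega
    subst hk
    obtain ⟨uT, huT⟩ := card_eq_one.1 h1
    exact hE (Or.inl ⟨_, _, tail_base H0 P huT⟩)
  have out : ∀ x ∈ C, ∀ z, z ∉ C → G.Adj x z → z = u := by
    intro x hx z hz h
    rcases P.cl x hx z h with h | h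
    · exact absurd h hz
    · exact h
  refine ⟨?_, ?_, ?_, ?_, Or.inr ⟨u, out⟩⟩
  · rw [sum_beta, P.card, sum_split C (gN G u)]
    have s2 := sum_ge (S := C \ gN G u) (f := hh G d) ((k:ℝ) - 3 - eps d) (by
      intro x hx
      rw [mem_sdiff, mem_gN] at hx
      have ht := P.conn H0 ha hx.1 hx.2
      have := hh_bound H0 (P.far_card H0 hx.1 hx.2 ht) hk2
        (b := 1) (by rw [bs_single (P.far_B H0 hx.1 hx.2 ht) hE]; simp)
      push_cast at this; linarith)
    rw [hL] at s2
    have s1 := sum_ge (S := gN G u ∩ C) (f := hh G d) (- eps d) (by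
      intro x hx
      rw [mem_inter, mem_gN] at hx
      exact hh_ge3 H (by rw [P.near_card H0 hx.2 hx.1]; exact hc3))
    have s3 := sum_ge (S := gN G u ∩ C) (f := fun x => hh G d x + gout G d x)
      ((k:ℝ) + (gN G u \ C).card - 4) (by
      intro x hx
      rw [mem_inter, mem_gN] at hx
      have := hh_out H0 x
      rw [P.near_card H0 hx.2 hx.1] at this
      push_cast at this
      linarith)
    rw [sum_add_distrib] at s3
    have o1 := P.gout_A H ha
    have o4 := P.gout_A4 H
    have o2 : k = 1 → (gN G u ∩ C).card = 2 → ∑ x ∈ gN G u ∩ C, gout G d x = 0 := by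
      rintro rfl h; exact P.gout_A2 h
    generalize ∑ x ∈ gN G u ∩ C, gout G d x = W at *
    generalize ∑ x ∈ gN G u ∩ C, hh G d x = SA at *
    generalize ∑ x ∈ C \ gN G u, hh G d x = SL at *
    generalize (gN G u ∩ C).card = a at *
    generalize (gN G u \ C).card = c at *
    have hac' : (d:ℝ) = a + c := by rw [← hac]; push_cast; ring
    have hae : (0:ℝ) ≤ a := by positivity
    have hce : (0:ℝ) ≤ c := by positivity
    push_cast at s2 ⊢
    generalize eps d = e at *
    generalize bet d = b at *
    have hkk : k = 1 ∨ k = 2 := by omega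
    rcases hkk with rfl | rfl
    · push_cast at *
      by_cases hc2 : c = 2
      · subst hc2; push_cast at *; nlinarith
      · have hc3' : (3:ℝ) ≤ c := by exact_mod_cast (by omega : 3 ≤ c)
        by_cases h2 : a = 2
        · have := o2 trivial h2; subst h2; push_cast at *; nlinarith
        · by_cases h3 : a = 3
          · subst h3; push_cast at *; nlinarith
          · have h4 : 4 ≤ a := by omega
            have := o4 h4
            have h4' : (4:ℝ) ≤ a := by exact_mod_cast h4
            have : 0 ≤ ((a:ℝ) - 2) * (c - 3) := mul_nonneg (by linarith) (by linarith)
            have : ((c:ℝ) + 1) * e ≤ 4 := by nlinarith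
            nlinarith
    · push_cast at *
      by_cases hc2 : c = 1
      · subst hc2; push_cast at *; nlinarith
      · have hc3' : (2:ℝ) ≤ c := by exact_mod_cast (by omega : 2 ≤ c)
        by_cases h2 : a = 2
        · subst h2; push_cast at *; nlinarith
        · by_cases h3 : a = 3
          · subst h3; push_cast at *; nlinarith
          · have h4 : 4 ≤ a := by omega
            have := o4 h4
            have h4' : (4:ℝ) ≤ a := by exact_mod_cast h4
            have : 0 ≤ ((a:ℝ) - 1) * (c - 2) := mul_nonneg (by linarith) (by linarith)
            have : ((c:ℝ) + 2) * e ≤ 4 := by nlinarith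
            nlinarith
  · intro x hx z hz h
    rw [out x hx z hz h]; omega
  · intro w hw hn
    by_cases hwu : G.Adj u w
    · have := P.near_card H0 hw hwu
      have := hn.1
      omega
    · have ht := P.conn H0 ha hw hwu
      have hC := P.far_C H0 hw hwu ht
      have hB := P.far_B H0 hw hwu ht
      unfold gK
      rw [hC, hB]
      have : ({u} : Finset V).filter (fun z => E1 G d z) = ∅ := by
        rw [filter_eq_empty_iff]
        intro z hz h
        rw [mem_singleton.1 hz] at h
        exact hE (Or.inl h)
      rw [this, union_empty, ite_self]
  · intro w hw hn x hx hxw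
    exact (P.common2 H0 hw hx).trans (card_le_card inter_subset_left)

theorem clu_k1 (H : Ctx G d) {w : V} (hk : (gN2 G w).card = 1) : Clu G d (gK G d w) := by
  have H0 := H.toCtx0
  obtain ⟨u, hN, hB, hE2, hE1⟩ := k1_lemma H0 hk
  have P := pend_of H0 hB (by omega)
  rw [hk] at P
  unfold gK
  rw [if_pos hk, hB]
  by_cases h : E1 G d u
  · have hC : gC G w = gM G w := by unfold gC; rw [hN, hB]; simp
    have h1 := hE1 h
    rw [← hC] at h1
    obtain ⟨uT, hT⟩ := card_eq_one.1 h1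
    have := tail_clu H P hT
    rw [filter_singleton, if_pos h, union_comm, ← insert_eq]
    exact this
  · rw [filter_singleton, if_neg h, union_empty]
    exact pend_clu H P (P.a_two H0) (fun hh => hh.elim h hE2)

theorem clu_k2_one (H : Ctx G d) {w u : V} (hk : (gN2 G w).card = 2) (hB : gB G w = {u}) :
    Clu G d (gK G d w) := by
  have H0 := H.toCtx0
  have P := pend_of H0 hB (by omega)
  rw [hk] at P
  unfold gK
  rw [if_neg (by omega)]
  by_cases ha : 2 ≤ (gN G u ∩ gC G w).card
  · exact pend_clu H P ha (k2_one H hk hB)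
  · have := P.a_pos
    obtain ⟨p, hp⟩ := card_eq_one.1 (show (gN G u ∩ gC G w).card = 1 by omega)
    obtain ⟨P1, h1⟩ := pend_two H0 P hp
    have := tail_clu H P1 h1
    rwa [insert_erase] at this
    have : p ∈ gN G u ∩ gC G w := by rw [hp]; simp
    exact (mem_inter.1 this).2

end GS8

section GS9
open Classical Finset SimpleGraph
set_option linter.unusedSectionVars false
variable {V : Type*} [Fintype V] {G : SimpleGraph V} {d : ℕ}

set_option maxHeartbeats 1000000 in
theorem clu_D (H : Ctx G d) {v p y u : V} {X : Finset V} (hN : gN2 G v = {p, y})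
    (hB : gB G v = {p, y}) (hpy : p ≠ y) (T : TE G d p u X) (hE : ¬ Exh G d y) :
    Clu G d (gK G d v) := by
  have H0 := H.toCtx0
  have hd := H0.hd
  obtain ⟨e1, e2, e3, e4, e5, e6, e7⟩ := num_facts hd
  have hk : (gN2 G v).card = 2 := by rw [hN]; exact card_pair hpy
  have hpB : p ∈ gB G v := by rw [hB]; simp
  have hyB : y ∈ gB G v := by rw [hB]; simp
  have hpD : gD G v p := mem_gN2.1 (gB_sub v hpB)
  have hyD : gD G v y := mem_gN2.1 (gB_sub v hyB)
  have hvX : v ∉ X := e1_out T hpB (Or.inl hk)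
  obtain ⟨hvu, -, hpu⟩ := T.outside hvX hpD
  have hud := T.u_deg H0
  have hpd : d + 1 ≤ (gN2 G p).card + 2 := by have := donor H0 (mem_gB.1 hpB); omega
  have hyd : d + 1 ≤ (gN2 G y).card + 2 := by have := donor H0 (mem_gB.1 hyB); omega
  have hgC : ∀ x, gM G x = gM G v → gK G d x = gM G v := by
    intro x hx
    unfold gK gC
    rw [twin_N2 hx, twin_B hx, if_neg (by omega), hx, hN, hB]; simp
  have hK : gK G d v = gM G v := hgC v rfl
  have hpM : gN G p ∩ gM G v = {u} := by rw [inter_gM hpD, hpu]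
  have hyM := inter_gM hyD
  have hdisj := gM_disj_gN2 (G := G) v
  have hpn : p ∉ gM G v := fun h => (disjoint_left.1 hdisj h) (gB_sub v hpB)
  have hyn : y ∉ gM G v := fun h => (disjoint_left.1 hdisj h) (gB_sub v hyB)
  have hout : ∀ x ∈ gM G v, ∀ z, G.Adj x z → z ∈ gM G v ∨ z ∈ ({p, y} : Finset V) := by
    intro x hx z h; rw [← hN]; exact adj_out hx h
  have hout2 : ∀ x ∈ gM G v, x ≠ u → ∀ z, G.Adj x z → z ∈ gM G v ∨ z = y := by
    intro x hx hxu z h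
    rcases hout x hx z h with h' | h'
    · exact Or.inl h'
    · rw [mem_insert, mem_singleton] at h'
      rcases h' with rfl | h'
      · exfalso
        have : x ∈ gN G z ∩ gM G v := by rw [mem_inter, mem_gN]; exact ⟨h.symm, hx⟩
        rw [hpM, mem_singleton] at this
        exact hxu this
      · exact Or.inr h'
  -- counting
  have hpar := parity H0 (gM G v) {p, y} (by rw [← hN]; exact hdisj) hout
  rw [sum_pair hpy, hpM, card_singleton, card_gM H0] at hpar
  have hodd := T.odd
  have hs : Odd (gN G y ∩ gM G v).card := by
    have h1 : Even (d * (d + 1)) := Nat.even_mul_succ_self d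
    rw [Nat.even_add] at hpar
    have h2 := hpar.1 h1
    rw [Nat.even_add] at h2
    rw [← Nat.not_even_iff_odd]
    intro h
    have := h2.2 h
    simp at this
  have hsc : (gN G y ∩ gM G v).card + (gN G y \ gM G v).card = d := by
    rw [card_inter_add_card_sdiff, H0.hr]
  have hLc : (gM G v \ gN G y).card = (gN G y \ gM G v).card + 1 := by
    have := card_inter_add_card_sdiff (gM G v) (gN G y)
    rw [card_gM H0, inter_comm] at this
    omega
  have hc1 : 1 ≤ (gN G y \ gM G v).card := by
    obtain ⟨-, w, hw1, hw2, hw3, -⟩ := mem_gB.1 hyB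
    apply card_pos.2
    refine ⟨w, ?_⟩
    rw [mem_sdiff, mem_gN, mem_gM]
    exact ⟨hw1, by tauto⟩
  have hc2 : Even (gN G y \ gM G v).card := by
    by_contra h
    rw [Nat.not_even_iff_odd] at h
    have := hs.add_odd h
    rw [hsc] at this
    rw [← Nat.not_even_iff_odd] at hodd
    exact hodd this
  have twin : ∀ x ∈ gM G v, ¬ G.Adj y x → x ≠ u → gM G x = gM G v := by
    intro x hx hxy hxu
    apply twin_of H0
    intro z hz
    rcases mem_gM.1 hz with rfl | hz
    · exact hx
    · rcases hout2 x hx hxu z hz with h | rfl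
      · exact h
      · exact absurd hz.symm hxy
  have near : ∀ x ∈ gM G v, G.Adj y x → x ≠ u →
      (gN G y \ gM G v).card + 1 ≤ (gN2 G x).card := by
    intro x hx hxy hxu
    have hvx : G.Adj v x := by
      rcases mem_gM.1 hx with rfl | h
      · exact absurd hxy.symm hyD.2.1
      · exact h
    have hsub : (gN G y \ gM G v) ∪ (gM G v \ gM G x) ⊆ gN2 G x := by
      intro z hz
      rw [mem_gN2]
      rcases mem_union.1 hz with hz' | hz'
      · rw [mem_sdiff, mem_gN] at hz'
        clear hz
        have hz := hz'
        refine ⟨?_, ?_, y, hxy.symm, hz.1⟩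
        · rintro rfl; exact hz.2 hx
        · intro h
          rcases hout2 x hx hxu z h with h | rfl
          · exact hz.2 h
          · exact G.irrefl hz.1
      · rw [mem_sdiff] at hz'
        clear hz
        have hz := hz'
        have h1 := hz.2
        rw [mem_gM, not_or] at h1
        refine ⟨h1.1, h1.2, v, hvx.symm, ?_⟩
        rcases mem_gM.1 hz.1 with rfl | h
        · exact absurd hvx.symm h1.2
        · exact h
    have hdj : Disjoint (gN G y \ gM G v) (gM G v \ gM G x) := by
      rw [Finset.disjoint_left]
      intro z h1 h2
      exact (mem_sdiff.1 h1).2 (mem_sdiff.1 h2).1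
    have h3 : 1 ≤ (gM G v \ gM G x).card := by
      rw [gM_sdiff_comm H0]
      apply card_pos.2
      exact ⟨y, mem_sdiff.2 ⟨mem_gM.2 (Or.inr hxy.symm), hyn⟩⟩
    have := card_le_card hsub
    rw [card_union_of_disjoint hdj] at this
    omega
  have hcc : 2 ≤ (gN G y \ gM G v).card := by
    obtain ⟨r, hr⟩ := hc2; omega
  have ndy : ∀ w ∈ gM G v, Needy G d w → gM G w = gM G v := by
    intro w hw hn
    have := hn.1
    have hwu : w ≠ u := by rintro rfl; omega
    by_cases hwy : G.Adj y w
    · have := near w hw hwy hwu; omega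
    · exact twin w hw hwy hwu
  -- outflow
  have outq : 4 ≤ (gN G y \ gM G v).card → ∀ x ∈ (gN G y ∩ gM G v).erase u, ∀ q,
      gun G d q x ≠ 0 → q ∈ gN G y \ gM G v ∧ (gN G y ∩ gM G v).card ≤ (gN2 G q).card ∧
        (gN2 G q).card ≤ 3 := by
    intro hc4 x hx q hg
    rw [mem_erase, mem_inter, mem_gN] at hx
    obtain ⟨hxu, hxy, hxv⟩ := hx
    obtain ⟨g1, g2⟩ := gun_ne hg
    have g3 := gBs_sub q g2
    have hqp : q ≠ p := by rintro rfl; omega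
    have hqy : q ≠ y := by rintro rfl; omega
    have hqM : q ∉ gM G v := by
      intro hq
      have hqu : q ≠ u := by rintro rfl; omega
      by_cases h : G.Adj y q
      · have := near q hq h hqu; omega
      · have ht := twin q hq h hqu
        rw [twin_B ht, hB, mem_insert, mem_singleton] at g3
        rcases g3 with rfl | rfl
        · exact hpn hxv
        · exact hyn hxv
    have hnadj : ∀ z ∈ gM G v, ¬ G.Adj z q := by
      intro z hz h
      rcases hout z hz q h with h | h
      · exact hqM h
      · rw [mem_insert, mem_singleton] at h
        exact h.elim hqp hqy
    obtain ⟨-, -, t, ht1, ht2⟩ := mem_gN2.1 (gB_sub q g3)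
    have hty : t = y := by
      rcases hout2 x hxv hxu t ht2.symm with h | h
      · exact absurd ht1.symm (hnadj t h)
      · exact h
    subst hty
    refine ⟨by rw [mem_sdiff, mem_gN]; exact ⟨ht1.symm, hqM⟩, card_le_card ?_, g1⟩
    intro z hz
    rw [mem_inter, mem_gN] at hz
    rw [mem_gN2]
    refine ⟨?_, fun h => hnadj z hz.2 h.symm, t, ht1, hz.1⟩
    rintro rfl; exact hqM hz.2
  rw [hK]
  refine ⟨?_, ?_, ?_, ?_, Or.inl (fun w hw hn => (ndy w hw hn).symm)⟩
  · rw [sum_beta, card_gM H0, sum_split (gM G v) (gN G y)]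
    have hu0 : 0 ≤ hh G d u := hh_four H0 (by omega)
    have s2 := sum_ge (S := gM G v \ gN G y) (f := hh G d) (-1 - eps d) (by
      intro x hx
      rw [mem_sdiff, mem_gN] at hx
      by_cases hxu : x = u
      · rw [hxu]; linarith
      · have ht := twin x hx.1 hx.2 hxu
        have := hh_bound H0 (show (gN2 G x).card = 2 by rw [twin_N2 ht, hk]) le_rfl
          (b := 1) (by
            apply card_pos.2
            refine ⟨y, mem_gBs.2 ⟨?_, hE⟩⟩
            rw [twin_B ht, hB]; simp)
        push_cast at this; linarith)
    rw [hLc] at s2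
    have s0 : ∑ x ∈ (gN G y ∩ gM G v).erase u, hh G d x ≤ ∑ x ∈ gN G y ∩ gM G v, hh G d x := by
      by_cases hu : u ∈ gN G y ∩ gM G v
      · rw [← add_sum_erase _ _ hu]; linarith
      · rw [erase_eq_of_notMem hu]
    have s1 := sum_ge (S := gN G y ∩ gM G v) (f := hh G d) (- eps d) (by
      intro x hx
      rw [mem_inter, mem_gN] at hx
      by_cases hxu : x = u
      · rw [hxu]; linarith
      · have := near x hx.2 hx.1 hxu
        exact hh_ge3 H (by omega))
    have s3 := sum_ge (S := (gN G y ∩ gM G v).erase u) (f := fun x => hh G d x + gout G d x)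
      (((gN G y \ gM G v).card : ℝ) - 3) (by
      intro x hx
      rw [mem_erase, mem_inter, mem_gN] at hx
      have h1 := hh_out H0 x
      have h2 := near x hx.2.2 hx.2.1 hx.1
      have h3 : ((gN G y \ gM G v).card : ℝ) + 1 ≤ (gN2 G x).card := by exact_mod_cast h2
      linarith)
    rw [sum_add_distrib] at s3
    have hAc : (gN G y ∩ gM G v).card ≤ ((gN G y ∩ gM G v).erase u).card + 1 := by
      have := pred_card_le_card_erase (s := gN G y ∩ gM G v) (a := u); omega
    have o5 : 4 ≤ (gN G y \ gM G v).card → 5 ≤ (gN G y ∩ gM G v).card →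
        ∑ x ∈ (gN G y ∩ gM G v).erase u, gout G d x = 0 := by
      intro h4 h5
      apply sum_eq_zero
      intro x hx
      apply gout_zero_of
      intro q
      by_contra hc
      have := outq h4 x hx q hc
      omega
    have o3 : 4 ≤ (gN G y \ gM G v).card → (gN G y ∩ gM G v).card = 3 →
        ∑ x ∈ (gN G y ∩ gM G v).erase u, gout G d x ≤ (gN G y \ gM G v).card := by
      intro h4 h3
      unfold gout
      rw [sum_comm]
      have e : ∑ q, ∑ x ∈ (gN G y ∩ gM G v).erase u, gun G d q x
          = ∑ q ∈ gN G y \ gM G v, ∑ x ∈ (gN G y ∩ gM G v).erase u, gun G d q x := by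
        symm
        apply sum_subset (subset_univ _)
        intro q _ hq
        apply sum_eq_zero
        intro x hx
        by_contra hc
        exact hq (outq h4 x hx q hc).1
      rw [e]
      calc _ ≤ ∑ q ∈ gN G y \ gM G v, (1:ℝ) := by
            apply sum_le_sum
            intro q hq
            by_cases hz : ∀ x ∈ (gN G y ∩ gM G v).erase u, gun G d q x = 0
            · rw [sum_eq_zero hz]; norm_num
            · push Not at hz
              obtain ⟨x, hx, hc⟩ := hz
              obtain ⟨-, q1, q2⟩ := outq h4 x hx q hc
              have h3 : (gN2 G q).card = 3 := by omega
              rw [← gin_three H h3]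
              unfold gin
              exact sum_le_sum_of_subset_of_nonneg (subset_univ _)
                (fun _ _ _ => gun_nonneg _ _)
        _ = _ := by simp
    have o1 : (gN G y ∩ gM G v).card = 1 → ((gN G y ∩ gM G v).erase u).card = 1 ∧
        ∑ x ∈ (gN G y ∩ gM G v).erase u, gout G d x = 0 := by
      intro h1
      obtain ⟨y', hy'⟩ := card_eq_one.1 h1
      have hy2 : gN G y ∩ gN G v = {y'} := by rw [← hyM, hy']
      have hne : y' ≠ u := by
        rintro rfl
        exact no_double H0 hN hpy hpu hy2
      have T' := extension H0 T hN hpy hvX hy2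
      rw [hy', erase_eq_of_notMem (by simpa using hne.symm)]
      refine ⟨card_singleton _, ?_⟩
      rw [sum_singleton]
      exact gout_exh (Or.inl ⟨_, _, T'⟩)
    generalize ∑ x ∈ (gN G y ∩ gM G v).erase u, gout G d x = W at *
    generalize ∑ x ∈ (gN G y ∩ gM G v).erase u, hh G d x = SE at *
    generalize ∑ x ∈ gN G y ∩ gM G v, hh G d x = SA at *
    generalize ∑ x ∈ gM G v \ gN G y, hh G d x = SL at *
    generalize ((gN G y ∩ gM G v).erase u).card = a at *
    generalize (gN G y ∩ gM G v).card = s at *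
    generalize (gN G y \ gM G v).card = c at *
    clear outq near twin ndy
    have hac' : (d:ℝ) = s + c := by rw [← hsc]; push_cast; ring
    have hae : (s:ℝ) ≤ a + 1 := by exact_mod_cast hAc
    push_cast at s2 ⊢
    generalize eps d = e at *
    generalize bet d = b at *
    by_cases h2 : c = 2
    · subst h2; push_cast at *; nlinarith
    · have h4 : 4 ≤ c := by obtain ⟨r, hr⟩ := hc2; omega
      have h4' : (4:ℝ) ≤ c := by exact_mod_cast h4
      by_cases hs1 : s = 1
      · obtain ⟨ha, hW⟩ := o1 hs1
        subst hs1; rw [ha] at s3; push_cast at *; nlinarith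
      · have s4 : ((s:ℝ) - 1) * (c - 3) ≤ a * (c - 3) :=
          mul_le_mul_of_nonneg_right (by linarith) (by linarith)
        by_cases hs3 : s = 3
        · have := o3 h4 hs3
          subst hs3; push_cast at *; nlinarith
        · have hs5 : 5 ≤ s := by obtain ⟨r, hr⟩ := hs; omega
          have hs5' : (5:ℝ) ≤ s := by exact_mod_cast hs5
          have := o5 h4 hs5
          have : 0 ≤ ((s:ℝ) - 2) * (c - 3) := mul_nonneg (by linarith) (by linarith)
          have : ((c:ℝ) + 1) * e ≤ 4 := by nlinarith
          nlinarith
  · intro x hx z hz h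
    rcases hout x hx z h with h' | h'
    · exact absurd h' hz
    · rw [mem_insert, mem_singleton] at h'
      rcases h' with rfl | rfl <;> omega
  · intro w hw hn
    exact hgC w (ndy w hw hn)
  · intro w hw hn x hx hxw
    rw [ndy w hw hn] at hxw
    exact absurd hx hxw

theorem clu_all (H : Ctx G d) (w : V) (hn : Needy G d w) : Clu G d (gK G d w) := by
  have H0 := H.toCtx0
  have h1 := gN2_pos H0 w
  have h2 := hn.1
  by_cases hk1 : (gN2 G w).card = 1
  · exact clu_k1 H hk1
  have hk : (gN2 G w).card = 2 := by omega
  have hBn := card_pos.2 (gB_nonempty H0 w (by omega))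
  have hBs := card_le_card (gB_sub (G := G) w)
  by_cases hb : (gB G w).card = 1
  · obtain ⟨u, hu⟩ := card_eq_one.1 hb
    exact clu_k2_one H hk hu
  have hBN : gB G w = gN2 G w := eq_of_subset_of_card_le (gB_sub w) (by omega)
  obtain ⟨p, y, hne, hN⟩ := card_eq_two.1 hk
  have hB : gB G w = {p, y} := by rw [hBN, hN]
  have hp : p ∈ gB G w := by rw [hB]; simp
  have hy : y ∈ gB G w := by rw [hB]; simp
  have np := k2_noE2 H0 hk hp
  have ny := k2_noE2 H0 hk hy
  by_cases ep : E1 G d p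
  · by_cases ey : E1 G d y
    · exact (k2_two H hN hB hne ep ey).elim
    · obtain ⟨u, X, T⟩ := ep
      exact clu_D H hN hB hne T (fun h => h.elim ey ny)
  · by_cases ey : E1 G d y
    · obtain ⟨u, X, T⟩ := ey
      rw [pair_comm] at hN hB
      exact clu_D H hN hB hne.symm T (fun h => h.elim ep np)
    · exfalso
      have : gBs G d w = gB G w := by
        apply filter_true_of_mem
        intro z hz h
        rw [hB, mem_insert, mem_singleton] at hz
        rcases hz with rfl | rfl
        · exact h.elim ep np
        · exact h.elim ey ny
      have h3 := hn.2
      rw [this] at h3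
      omega

theorem total (H : Ctx G d) : 0 < ∑ x, (((gN2 G x).card : ℝ) - 4 + bet d) :=
  final_sum H (clu_all H)

end GS9

section GS10
open Classical Finset SimpleGraph
set_option linter.unusedSectionVars false
variable {V : Type*} [Fintype V] {G : SimpleGraph V} {d : ℕ}

theorem sq_adj (hc : G.Connected) (u v : V) :
    (graphSquare G).Adj u v ↔ G.Adj u v ∨ gD G u v := by
  rw [← dist_two hc, ← SimpleGraph.dist_eq_one_iff_adj (G := G)]
  show (1 ≤ G.dist u v ∧ G.dist u v ≤ 2) ↔ _
  omega

theorem edge_count (G : SimpleGraph V) :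
    2 * G.edgeSet.ncard = ∑ v, (gN G v).card := by
  have h := G.sum_degrees_eq_twice_card_edges
  rw [← coe_edgeFinset, Set.ncard_coe_finset, ← h]
  apply sum_congr rfl
  intro v _
  rw [← card_neighborFinset_eq_degree]
  congr 1
  ext z
  simp [mem_gN]

theorem sq_count (hc : G.Connected) (v : V) :
    (gN (graphSquare G) v).card = (gN G v).card + (gN2 G v).card := by
  rw [← card_union_of_disjoint]
  · congr 1
    ext z
    rw [mem_union, mem_gN, mem_gN, mem_gN2, sq_adj hc]
  · rw [Finset.disjoint_left]
    intro z h1 h2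
    exact (mem_gN2.1 h2).2.1 (mem_gN.1 h1)

theorem main_bound (H : Ctx G d) :
    ((graphSquare G).edgeSet.ncard : ℝ) - (G.edgeSet.ncard : ℝ) >
      2 * (Fintype.card V : ℝ) * (1 - 2 / ((d : ℝ) + 1) - 3 / ((d : ℝ) - 3)) := by
  have h := total H
  have h1 := edge_count G
  have h2 := edge_count (graphSquare G)
  rw [sum_congr rfl (fun v _ => sq_count H.hconn v), sum_add_distrib, ← h1] at h2
  have h3 : 2 * ((graphSquare G).edgeSet.ncard : ℝ)
      = 2 * (G.edgeSet.ncard : ℝ) + ∑ v, ((gN2 G v).card : ℝ) := by exact_mod_cast h2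
  rw [sum_add_distrib, sum_sub_distrib, sum_const, sum_const, card_univ, nsmul_eq_mul,
    nsmul_eq_mul] at h
  have h4 : bet d = 4 * (2 / ((d : ℝ) + 1) + 3 / ((d : ℝ) - 3)) := by unfold bet; ring
  rw [h4] at h
  nlinarith

end GS10

/-- If `G` is a connected `d`-regular graph (`d > 6`) on `n` vertices whose
square is not complete and which is neither a snake graph nor a peanut graph, then
`e(G²) - e(G) > 2n(1 - 2/(d+1) - 3/(d-3))`. -/
theorem stmt0 {V : Type*} [Fintype V] (G : SimpleGraph V) (d n : ℕ)
    (hn : n = Fintype.card V) (hd : 6 < d)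
    (hconn : G.Connected) (hreg : IsRegularGraph G d)
    (hnotcomplete : graphSquare G ≠ ⊤)
    (hsnake : ¬ IsSnake G d) (hpeanut : ¬ IsPeanut G d) :
    ((graphSquare G).edgeSet.ncard : ℝ) - (G.edgeSet.ncard : ℝ) >
      2 * (n : ℝ) * (1 - 2 / ((d : ℝ) + 1) - 3 / ((d : ℝ) - 3)) := by
  subst hn
  apply main_bound
  refine ⟨⟨hd, ?_, hconn, ?_⟩, hsnake, hpeanut⟩
  · intro v
    have := hreg v
    rwa [neigh_coe, Set.ncard_coe_finset] at this
  · by_contra hc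
    push Not at hc
    apply hnotcomplete
    ext x y
    rw [sq_adj hconn, SimpleGraph.top_adj]
    constructor
    · rintro (h | h)
      · exact h.ne
      · exact h.1.symm
    · intro h
      by_cases hA : G.Adj x y
      · exact Or.inl hA
      · exact Or.inr (hc x y h.symm hA)
end

section
/- Let G be a d-regular graph, let v be a vertex of G, and let u ∈ N₂'(v). Then deg₂(u) ≥ d − deg₂(v) + 1. In particular, if deg₂(v) ≤ 3, then deg₂(u) ≥ d − 2. -/
open SimpleGraph

variable {V : Type*}

theorem dist_two_aux {V : Type*} (G : SimpleGraph V) {a b c : V} (h1 : G.Adj a b)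
    (h2 : G.Adj b c) (hne : a ≠ c) (hn : ¬ G.Adj a c) : G.dist a c = 2 := by
  have h : G.dist a c ≤ 2 := G.dist_le (Walk.cons h1 (Walk.cons h2 Walk.nil))
  have hr : G.Reachable a c := ⟨Walk.cons h1 (Walk.cons h2 Walk.nil)⟩
  have h0 : G.dist a c ≠ 0 := fun h => hne (hr.dist_eq_zero_iff.1 h)
  have h3 : G.dist a c ≠ 1 := fun h => hn (SimpleGraph.dist_eq_one_iff_adj.1 h)
  omega

/-- If `G` is `d`-regular and `u ∈ N₂'(v)`, then
`deg₂(u) ≥ d - deg₂(v) + 1`; in particular if `deg₂(v) ≤ 3` then `deg₂(u) ≥ d - 2`. -/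
theorem stmt1 {V : Type*} [Fintype V] (G : SimpleGraph V) (d : ℕ)
    (hreg : IsRegularGraph G d) (v u : V) (hu : u ∈ N2' G v) :
    ((d : ℤ) - (deg2 G v : ℤ) + 1 ≤ (deg2 G u : ℤ)) ∧
      (deg2 G v ≤ 3 → d - 2 ≤ deg2 G u) := by
  have key : d + 1 ≤ deg2 G u + deg2 G v := by
    obtain ⟨h2, w, h3, huw⟩ := hu
    have hr : G.Reachable v u := by
      by_contra hc
      rw [SimpleGraph.dist_eq_zero_of_not_reachable hc] at h2
      omega
    obtain ⟨x, hvx, hxu⟩ : ∃ x, G.Adj v x ∧ G.Adj x u := by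
      obtain ⟨p, hp⟩ := hr.exists_walk_length_eq_dist
      rw [h2] at hp
      match p, hp with
      | Walk.cons h (Walk.cons h' Walk.nil), _ => exact ⟨_, h, h'⟩
    have nvw : ¬ G.Adj v w := fun h => by
      have := SimpleGraph.dist_eq_one_iff_adj.2 h
      omega
    have no2 : ∀ y, G.Adj v y → ¬ G.Adj y w := fun y h h' => by
      have : G.dist v w ≤ 2 := G.dist_le (Walk.cons h (Walk.cons h' Walk.nil))
      omega
    have hxw : ¬ G.Adj x w := no2 x hvx
    have hne : x ≠ w := fun h => nvw (h ▸ hvx)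
    have hI : G.neighborSet x ∩ G.neighborSet w ⊆ distSet G v 2 := by
      rintro y ⟨hy1, hy2⟩
      have hy1 : G.Adj x y := hy1
      have hy2 : G.Adj w y := hy2
      exact dist_two_aux G hvx hy1 (fun h => nvw (h ▸ hy2.symm)) (fun h => no2 y h hy2.symm)
    have hU : G.neighborSet x ∪ G.neighborSet w ⊆
        distSet G u 2 ∪ (insert u (G.neighborSet u \ {x, w})) := by
      intro y hy
      by_cases hyu : u = y
      · right; left; exact hyu.symm
      by_cases ha : G.Adj u y
      · right; right
        refine ⟨ha, ?_⟩
        rintro (h | h)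
        · subst h
          rcases hy with hy | hy
          · exact G.irrefl hy
          · exact hxw (G.adj_symm hy)
        · have h : y = w := h
          subst h
          rcases hy with hy | hy
          · exact hxw hy
          · exact G.irrefl hy
      · left
        rcases hy with hy | hy
        · exact dist_two_aux G hxu.symm hy hyu ha
        · exact dist_two_aux G huw hy hyu ha
    have c1 := Set.ncard_le_ncard hI (Set.toFinite _)
    have c2 := Set.ncard_le_ncard hU (Set.toFinite _)
    have c3 := Set.ncard_union_le (distSet G u 2) (insert u (G.neighborSet u \ {x, w}))
    have c4 := Set.ncard_insert_le u (G.neighborSet u \ {x, w})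
    have hs : ({x, w} : Set V) ⊆ G.neighborSet u := by
      rintro y (h | h)
      · rw [h]; exact hxu.symm
      · rw [h]; exact huw
    have c5 := Set.ncard_sdiff_add_ncard_of_subset hs (Set.toFinite _)
    have c6 := Set.ncard_pair hne
    have c7 := Set.ncard_union_add_ncard_inter (G.neighborSet x) (G.neighborSet w)
      (Set.toFinite _) (Set.toFinite _)
    have r1 := hreg u
    have r2 := hreg x
    have r3 := hreg w
    unfold deg2
    omega
  constructor
  · omega
  · intro h
    omega
end

section
/- Let d > 6, let G be a connected d-regular graph such that G² is not complete, and let R be a region of G. Let t be the minimum of deg₂(x) over all vertices x ∈ R with deg₂(x) ≤ 3. Then R contains at most d + t + 1 vertices; in particular, R contains at most d + 4 vertices. -/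
open SimpleGraph

variable {V : Type*}

/-- One step of the equivalence relation generating regions : both vertices are low degree
(`deg₂ ≤ 3`) and they are within distance 2 of each other. -/
def regStep (G : SimpleGraph V) (a b : V) : Prop :=
  deg2 G a ≤ 3 ∧ deg2 G b ≤ 3 ∧ G.Reachable a b ∧ G.dist a b ≤ 2

/-- A region : an equivalence class of low-degree vertices under chains of `regStep`,
together with all neighbors of vertices of the class. -/
def IsRegion (G : SimpleGraph V) (R : Set V) : Prop :=
  ∃ x₀, deg2 G x₀ ≤ 3 ∧
    R = {y | Relation.ReflTransGen (regStep G) x₀ y} ∪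
        {y | ∃ x, Relation.ReflTransGen (regStep G) x₀ x ∧ G.Adj x y}


theorem aux_d2 {V : Type*} (G : SimpleGraph V) (hc : G.Connected) (u w : V)
    (h : G.dist u w ≤ 2) : u = w ∨ G.Adj u w ∨ ∃ m, G.Adj u m ∧ G.Adj m w := by
  obtain ⟨p, hp⟩ := hc.exists_walk_length_eq_dist u w
  rw [← hp] at h
  match p, h with
  | .nil, _ => exact Or.inl rfl
  | .cons a .nil, _ => exact Or.inr (Or.inl a)
  | .cons a (.cons b .nil), _ => exact Or.inr (Or.inr ⟨_, a, b⟩)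
  | .cons _ (.cons _ (.cons _ _)), h => simp at h

theorem aux_d2' {V : Type*} (G : SimpleGraph V) (u m w : V)
    (h1 : G.Adj u m) (h2 : G.Adj m w) : G.dist u w ≤ 2 :=
  SimpleGraph.dist_le (Walk.cons h1 (Walk.cons h2 Walk.nil))

theorem aux_d1 {V : Type*} (G : SimpleGraph V) (u w : V)
    (h1 : G.Adj u w) : G.dist u w ≤ 2 := by
  rw [SimpleGraph.dist_eq_one_iff_adj.2 h1]; omega

theorem aux_inter {V : Type*} [Finite V] (A B C : Set V) (hA : A ⊆ C) (hB : B ⊆ C) :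
    A.ncard + B.ncard ≤ C.ncard + (A ∩ B).ncard := by
  have h1 := Set.ncard_union_add_ncard_inter A B
  have h2 := Set.ncard_le_ncard (Set.union_subset hA hB)
  omega

theorem aux_nb {V : Type*} [Finite V] (G : SimpleGraph V) (d : ℕ)
    (hreg : IsRegularGraph G d) (v : V) : (insert v (G.neighborSet v)).ncard = d + 1 := by
  rw [Set.ncard_insert_of_notMem (by simp), hreg v]

theorem aux_ball {V : Type*} [Finite V] (G : SimpleGraph V) (hc : G.Connected) (d : ℕ)
    (hreg : IsRegularGraph G d) (v : V) :
    {x | G.dist v x ≤ 2}.ncard ≤ d + 1 + deg2 G v := by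
  have : {x | G.dist v x ≤ 2} ⊆ insert v (G.neighborSet v) ∪ distSet G v 2 := by
    intro x hx
    simp only [Set.mem_ofPred_eq] at hx
    by_cases h : G.dist v x = 2
    · exact Or.inr h
    · left
      have h' : G.dist v x = 0 ∨ G.dist v x = 1 := by omega
      rcases h' with h' | h'
      · left; exact (hc.dist_eq_zero_iff.1 h').symm
      · right; exact SimpleGraph.dist_eq_one_iff_adj.1 h'
  have h1 := Set.ncard_le_ncard this
  have h2 := Set.ncard_union_le (insert v (G.neighborSet v)) (distSet G v 2)
  rw [aux_nb G d hreg] at h2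
  exact h1.trans h2

theorem aux_nbsub {V : Type*} (G : SimpleGraph V) (v y : V) (h : G.Adj v y) :
    insert y (G.neighborSet y) ⊆ {x | G.dist v x ≤ 2} := by
  rintro x (rfl | hx)
  · exact aux_d1 G _ _ h
  · exact aux_d2' G _ _ _ h hx

/-- key step: neighbours of `v` are within distance two of `u`. -/
theorem aux_key {V : Type*} [Finite V] (G : SimpleGraph V) (hc : G.Connected) (d : ℕ)
    (hd : 6 < d) (hreg : IsRegularGraph G d) (u v y : V) (hu : deg2 G u ≤ 3)
    (hv : deg2 G v ≤ 3) (huv : G.dist u v ≤ 2) (hy : G.Adj v y) : G.dist u y ≤ 2 := by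
  rcases aux_d2 G hc u v huv with rfl | h | ⟨w, h1, h2⟩
  · exact aux_d1 G _ _ hy
  · exact aux_d2' G _ _ _ h hy
  by_contra hn
  have hi := aux_inter _ _ _ (aux_nbsub G v w h2.symm) (aux_nbsub G v y hy)
  rw [aux_nb G d hreg, aux_nb G d hreg] at hi
  have hb := aux_ball G hc d hreg v
  have hsub : insert w (G.neighborSet w) ∩ insert y (G.neighborSet y) ⊆ distSet G u 2 := by
    rintro x ⟨hx1, hx2⟩
    have hxu : G.dist u x ≤ 2 := aux_nbsub G u w h1 hx1
    have hux : ¬ G.Adj u x := by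
      intro h
      rcases hx2 with rfl | hx2
      · exact hn (aux_d1 G _ _ h)
      · exact hn (aux_d2' G _ _ _ h (SimpleGraph.Adj.symm hx2))
    have hne : u ≠ x := by
      rintro rfl
      rcases hx2 with rfl | hx2
      · simp at hn
      · exact hn (aux_d1 G _ _ (SimpleGraph.Adj.symm hx2))
    have a0 : G.dist u x ≠ 0 := fun h => hne (hc.dist_eq_zero_iff.1 h)
    have a1 : G.dist u x ≠ 1 := fun h => hux (SimpleGraph.dist_eq_one_iff_adj.1 h)
    show G.dist u x = 2
    omega
  have h3 := Set.ncard_le_ncard hsub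
  change _ ≤ deg2 G u at h3
  omega

theorem aux_trans {V : Type*} [Finite V] (G : SimpleGraph V) (hc : G.Connected) (d : ℕ)
    (hd : 6 < d) (hreg : IsRegularGraph G d) (u v w : V) (hu : deg2 G u ≤ 3)
    (hv : deg2 G v ≤ 3) (hw : deg2 G w ≤ 3) (huv : G.dist u v ≤ 2) (hvw : G.dist v w ≤ 2) :
    G.dist u w ≤ 2 := by
  rw [SimpleGraph.dist_comm] at huv
  have s1 : insert u (G.neighborSet u) ⊆ {x | G.dist v x ≤ 2} := by
    rintro x (rfl | hx)
    · exact huv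
    · exact aux_key G hc d hd hreg v u x hv hu huv hx
  have s2 : insert w (G.neighborSet w) ⊆ {x | G.dist v x ≤ 2} := by
    rintro x (rfl | hx)
    · exact hvw
    · exact aux_key G hc d hd hreg v w x hv hw hvw hx
  have hi := aux_inter _ _ _ s1 s2
  rw [aux_nb G d hreg, aux_nb G d hreg] at hi
  have hb := aux_ball G hc d hreg v
  have hpos : (insert u (G.neighborSet u) ∩ insert w (G.neighborSet w)).ncard ≠ 0 := by omega
  obtain ⟨x, hx1, hx2⟩ := Set.nonempty_of_ncard_ne_zero hpos
  rcases hx1 with rfl | hx1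
  · rcases hx2 with rfl | hx2
    · simp
    · exact aux_d1 G _ _ (SimpleGraph.Adj.symm hx2)
  · rcases hx2 with rfl | hx2
    · exact aux_d1 G _ _ hx1
    · exact aux_d2' G _ _ _ hx1 (SimpleGraph.Adj.symm hx2)

/-- Let `d > 6`, `G` connected `d`-regular with `G²` not complete, `R` a
region, and let `t` be the minimum of `deg₂(x)` over the low-degree vertices `x ∈ R`.
Then `|R| ≤ d + t + 1`; in particular `|R| ≤ d + 4`. -/
theorem stmt4 {V : Type*} [Fintype V] (G : SimpleGraph V) (d : ℕ) (hd : 6 < d)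
    (hconn : G.Connected) (hreg : IsRegularGraph G d) (hnotcomplete : graphSquare G ≠ ⊤)
    (R : Set V) (hR : IsRegion G R) (t : ℕ)
    (ht : t = sInf (deg2 G '' {x | x ∈ R ∧ deg2 G x ≤ 3})) :
    R.ncard ≤ d + t + 1 ∧ R.ncard ≤ d + 4 := by
  obtain ⟨x₀, hx₀, rfl⟩ := hR
  have hcls : ∀ y, Relation.ReflTransGen (regStep G) x₀ y →
      deg2 G y ≤ 3 ∧ G.dist x₀ y ≤ 2 := by
    intro y hy
    induction hy with
    | refl => exact ⟨hx₀, by simp⟩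
    | tail _ hs ih =>
      exact ⟨hs.2.1, aux_trans G hconn d hd hreg _ _ _ hx₀ ih.1 hs.2.1 ih.2 hs.2.2.2⟩
  have hmem := Nat.sInf_mem (s := deg2 G '' {x | x ∈ ({y | Relation.ReflTransGen (regStep G) x₀ y} ∪
        {y | ∃ x, Relation.ReflTransGen (regStep G) x₀ x ∧ G.Adj x y}) ∧ deg2 G x ≤ 3})
    ⟨_, x₀, ⟨Or.inl Relation.ReflTransGen.refl, hx₀⟩, rfl⟩
  rw [← ht] at hmem
  obtain ⟨v, ⟨hvR, hv3⟩, hvt⟩ := hmem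
  have hv : G.dist v x₀ ≤ 2 := by
    rw [SimpleGraph.dist_comm]
    rcases hvR with h | ⟨x, hx, hxv⟩
    · exact (hcls v h).2
    · exact aux_key G hconn d hd hreg x₀ x v hx₀ (hcls x hx).1 (hcls x hx).2 hxv
  have hvy : ∀ y, Relation.ReflTransGen (regStep G) x₀ y → G.dist v y ≤ 2 := fun y hy =>
    aux_trans G hconn d hd hreg v x₀ y hv3 hx₀ (hcls y hy).1 hv (hcls y hy).2
  have hsub : ({y | Relation.ReflTransGen (regStep G) x₀ y} ∪
        {y | ∃ x, Relation.ReflTransGen (regStep G) x₀ x ∧ G.Adj x y}) ⊆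
        {x | G.dist v x ≤ 2} := by
    rintro y (hy | ⟨x, hx, hxy⟩)
    · exact hvy y hy
    · exact aux_key G hconn d hd hreg v x y hv3 (hcls x hx).1 (hvy x hx) hxy
  have h1 := Set.ncard_le_ncard hsub
  have h2 := aux_ball G hconn d hreg v
  omega
end

section
/- Let d > 6 and let G be a connected d-regular graph on n vertices such that G² is not complete. Let 𝒰 := {u ∈ V(G) : deg₂(u) ≥ d − 2}. If |𝒰| ≥ 3n/(d−3), then ∑_{v ∈ V(G)} deg₂(v) ≥ 4n; consequently e(G²) − e(G) ≥ 2n. -/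
open SimpleGraph

variable {V : Type*}

theorem aux_pos {V : Type*} [Fintype V] (G : SimpleGraph V) (d : ℕ)
    (hconn : G.Connected) (hreg : IsRegularGraph G d) (hnc : graphSquare G ≠ ⊤) (v : V) :
    1 ≤ deg2 G v := by
  by_contra hcon
  have h0 : deg2 G v = 0 := by omega
  have hne : ∀ w, G.dist v w ≠ 2 := by
    intro w hw
    have h1 : distSet G v 2 = ∅ := (Set.ncard_eq_zero (Set.toFinite _)).1 h0
    have h2 : w ∈ distSet G v 2 := hw
    rw [h1] at h2
    exact h2
  have hle : ∀ w, G.dist v w ≤ 1 := by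
    intro w
    have hr := (SimpleGraph.reachable_iff_reflTransGen v w).1 (hconn.preconnected v w)
    induction hr with
    | refl => simp
    | @tail b c _ hbc ih =>
      have h1 := hconn.dist_triangle (u := v) (v := b) (w := c)
      have h2 : G.dist b c = 1 := SimpleGraph.dist_eq_one_iff_adj.2 hbc
      have h3 := hne c
      omega
  have hins : ∀ w, (insert w (G.neighborSet w)).ncard = d + 1 := by
    intro w
    rw [Set.ncard_insert_of_notMem (by simp) (Set.toFinite _), hreg w]
  have huv : insert v (G.neighborSet v) = Set.univ := by
    ext w
    simp only [Set.mem_insert_iff, SimpleGraph.mem_neighborSet, Set.mem_univ, iff_true]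
    by_cases hwv : w = v
    · exact Or.inl hwv
    · right
      have h1 := hle w
      have h2 : 0 < G.dist v w := hconn.pos_dist_of_ne (Ne.symm hwv)
      exact SimpleGraph.dist_eq_one_iff_adj.1 (by omega)
  apply hnc
  ext a b
  simp only [SimpleGraph.top_adj]
  constructor
  · exact fun h => h.ne
  · intro hab
    have hu : insert a (G.neighborSet a) = Set.univ := by
      apply Set.eq_of_subset_of_ncard_le (Set.subset_univ _) _ (Set.toFinite _)
      rw [← huv, hins, hins]
    have hb : b ∈ insert a (G.neighborSet a) := by rw [hu]; trivial
    rcases hb with hb | hb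
    · exact absurd hb.symm hab
    · have h1 : G.dist a b = 1 := SimpleGraph.dist_eq_one_iff_adj.2 hb
      change 1 ≤ G.dist a b ∧ G.dist a b ≤ 2
      omega

theorem aux_sum {V : Type*} [Fintype V] (G : SimpleGraph V) :
    ∑ v, (G.neighborSet v).ncard = 2 * G.edgeSet.ncard := by
  classical
  have h := G.sum_degrees_eq_twice_card_edges
  have h1 : G.edgeSet.ncard = G.edgeFinset.card := by
    rw [← SimpleGraph.coe_edgeFinset, Set.ncard_coe_finset]
  rw [h1, ← h]
  refine Finset.sum_congr rfl fun v _ => ?_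
  rw [← SimpleGraph.card_neighborFinset_eq_degree, ← Set.ncard_coe_finset,
    SimpleGraph.coe_neighborFinset]

theorem aux_sq {V : Type*} [Fintype V] (G : SimpleGraph V) (v : V) :
    ((graphSquare G).neighborSet v).ncard = (G.neighborSet v).ncard + deg2 G v := by
  have h : (graphSquare G).neighborSet v = G.neighborSet v ∪ distSet G v 2 := by
    ext w
    simp only [SimpleGraph.mem_neighborSet, Set.mem_union, distSet, Set.mem_ofPred_eq,
      ← SimpleGraph.dist_eq_one_iff_adj (G := G)]
    change 1 ≤ G.dist v w ∧ G.dist v w ≤ 2 ↔ _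
    omega
  rw [h, Set.ncard_union_eq _ (Set.toFinite _) (Set.toFinite _)]
  · rfl
  · rw [Set.disjoint_left]
    intro w h1 h2
    have h3 : G.dist v w = 1 := SimpleGraph.dist_eq_one_iff_adj.2 h1
    have h4 : G.dist v w = 2 := h2
    omega

/-- Let `d > 6` and `G` connected `d`-regular on `n` vertices with `G²`
not complete, and let `U = {u : deg₂(u) ≥ d - 2}`. If `|U| ≥ 3n/(d-3)` then
`∑_v deg₂(v) ≥ 4n`, and consequently `e(G²) - e(G) ≥ 2n`. -/
theorem stmt6 {V : Type*} [Fintype V] (G : SimpleGraph V) (d n : ℕ)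
    (hn : n = Fintype.card V) (hd : 6 < d)
    (hconn : G.Connected) (hreg : IsRegularGraph G d) (hnotcomplete : graphSquare G ≠ ⊤)
    (hU : 3 * (n : ℝ) / ((d : ℝ) - 3) ≤ (({u : V | d - 2 ≤ deg2 G u}).ncard : ℝ)) :
    (4 * n ≤ ∑ v : V, deg2 G v) ∧
      (2 * n + G.edgeSet.ncard ≤ (graphSquare G).edgeSet.ncard) := by
  classical
  have hpos := aux_pos G d hconn hreg hnotcomplete
  have hmain : 4 * n ≤ ∑ v : V, deg2 G v := by
    have hd3 : (0 : ℝ) < (d : ℝ) - 3 := by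
      have : (6 : ℝ) < d := by exact_mod_cast hd
      linarith
    rw [div_le_iff₀ hd3] at hU
    obtain ⟨k, rfl⟩ : ∃ k, d = k + 3 := ⟨d - 3, by omega⟩
    have hU2 : 3 * n ≤ ({u : V | k + 3 - 2 ≤ deg2 G u}).ncard * k := by
      have h : (3 : ℝ) * n ≤ (({u : V | k + 3 - 2 ≤ deg2 G u}).ncard : ℝ) * k := by
        have e : ((k + 3 : ℕ) : ℝ) - 3 = k := by push_cast; ring
        rw [e] at hU
        exact hU
      exact_mod_cast h
    have hc : ({u : V | k + 3 - 2 ≤ deg2 G u}).ncard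
        = (Finset.univ.filter fun u : V => k + 3 - 2 ≤ deg2 G u).card := by
      rw [← Set.ncard_coe_finset]
      simp
    have hs : ∑ v : V, (1 + if k + 3 - 2 ≤ deg2 G v then k else 0) ≤ ∑ v : V, deg2 G v := by
      refine Finset.sum_le_sum fun v _ => ?_
      have := hpos v
      split_ifs <;> omega
    rw [Finset.sum_add_distrib, ← Finset.sum_filter, Finset.sum_const, Finset.sum_const,
      ← hc, Finset.card_univ, ← hn, smul_eq_mul, smul_eq_mul] at hs
    omega
  refine ⟨hmain, ?_⟩
  have h1 := aux_sum G
  have h2 := aux_sum (graphSquare G)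
  simp only [aux_sq, Finset.sum_add_distrib] at h2
  omega
end

section
/- Let G be a connected d-regular graph such that G² is not complete, let v be a vertex with deg₂(v) = 1, write N₂(v) = {u}, let G_v be the vertex set of the connected component of G − u containing v, and let t := |N(u) ∩ G_v|. Then: (1) G_v = {v} ∪ N(v), so |G_v| = d + 1; (2) the complement of the induced subgraph of G on G_v is a perfect matching on N(u) ∩ G_v (in particular every vertex of N(u) ∩ G_v has exactly d − 1 neighbors in G_v, and all other vertices of G_v have all d neighbors in G_v); (3) t ≤ d − 1; and (4) deg₂(w) = d − t + 1 for every w ∈ N(u) ∩ G_v. -/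
open SimpleGraph

variable {V : Type*}

theorem dist_two_iff_aux {V : Type*} (G : SimpleGraph V) (hconn : G.Connected) (a b : V) :
    G.dist a b = 2 ↔ a ≠ b ∧ ¬ G.Adj a b ∧ ∃ c, G.Adj a c ∧ G.Adj c b := by
  constructor
  · intro h
    refine ⟨?_, ?_, ?_⟩
    · rintro rfl; simp at h
    · intro hab
      rw [SimpleGraph.dist_eq_one_iff_adj.mpr hab] at h
      omega
    · obtain ⟨p, hp⟩ := hconn.exists_walk_length_eq_dist a b
      rw [h] at hp
      cases p with
      | nil => simp at hp
      | cons h1 q =>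
        cases q with
        | nil => simp at hp
        | cons h2 r =>
          cases r with
          | nil => exact ⟨_, h1, h2⟩
          | cons h3 r => simp at hp
  · rintro ⟨hne, hna, c, h1, h2⟩
    have hle : G.dist a b ≤ 2 := by
      simpa using SimpleGraph.dist_le (SimpleGraph.Walk.cons h1 (SimpleGraph.Walk.cons h2 SimpleGraph.Walk.nil))
    have h0 : G.dist a b ≠ 0 := by
      intro h; exact hne ((hconn.dist_eq_zero_iff).mp h)
    have h1 : G.dist a b ≠ 1 := by
      intro h; exact hna (SimpleGraph.dist_eq_one_iff_adj.mp h)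
    omega

theorem walk_closed_aux {V : Type*} (G : SimpleGraph V) (S : Set V) (u : V)
    (hcl : ∀ x ∈ S, ∀ y, G.Adj x y → y ∈ S ∨ y = u) :
    ∀ {a b : V} (p : G.Walk a b), a ∈ S → u ∉ p.support → b ∈ S := by
  intro a b p
  induction p with
  | nil => intro h _; exact h
  | cons h q ih =>
    intro ha hu
    simp only [SimpleGraph.Walk.support_cons, List.mem_cons, not_or] at hu
    apply ih _ hu.2
    rcases hcl _ ha _ h with h' | h'
    · exact h'
    · exfalso; apply hu.2; rw [← h']; exact q.start_mem_support

/-- Let `G` be connected `d`-regular with `G²` not complete, `v` a vertex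
with `deg₂(v) = 1` and `N₂(v) = {u}`, `G_v` the component of `G - u` containing `v`, and
`t = |N(u) ∩ G_v|`. Then (1) `G_v = {v} ∪ N(v)` and `|G_v| = d + 1`; (2) the complement of
the induced subgraph on `G_v` is a perfect matching on `N(u) ∩ G_v` (in particular every
vertex of `N(u) ∩ G_v` has exactly `d - 1` neighbors in `G_v` and every other vertex of
`G_v` has all `d` neighbors in `G_v`); (3) `t ≤ d - 1`; (4) `deg₂(w) = d - t + 1` for
every `w ∈ N(u) ∩ G_v`. -/
theorem stmt7 {V : Type*} [Fintype V] (G : SimpleGraph V) (d : ℕ)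
    (hconn : G.Connected) (hreg : IsRegularGraph G d) (hnotcomplete : graphSquare G ≠ ⊤)
    (v u : V) (hv : deg2 G v = 1) (hN2 : distSet G v 2 = {u}) :
    (compDel G u v = {v} ∪ G.neighborSet v ∧ (compDel G u v).ncard = d + 1) ∧
    (ComplIsMatchingOn G (compDel G u v) (G.neighborSet u ∩ compDel G u v) ∧
      (∀ w ∈ G.neighborSet u ∩ compDel G u v,
        (G.neighborSet w ∩ compDel G u v).ncard = d - 1) ∧
      (∀ w ∈ compDel G u v, w ∉ G.neighborSet u →
        (G.neighborSet w ∩ compDel G u v).ncard = d)) ∧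
    (G.neighborSet u ∩ compDel G u v).ncard ≤ d - 1 ∧
    (∀ w ∈ G.neighborSet u ∩ compDel G u v,
      deg2 G w = d - (G.neighborSet u ∩ compDel G u v).ncard + 1) := by
  classical
  have hd2 := dist_two_iff_aux G hconn
  have hu2 : G.dist v u = 2 := by
    have : u ∈ distSet G v 2 := by rw [hN2]; rfl
    exact this
  have huniq : ∀ x, G.dist v x = 2 → x = u := by
    intro x hx
    have : x ∈ distSet G v 2 := hx
    rw [hN2] at this; exact this
  obtain ⟨hvu, hnvu, c, hvc, hcu⟩ := (hd2 v u).mp hu2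
  obtain ⟨S, hSdef⟩ : ∃ S, S = {v} ∪ G.neighborSet v := ⟨_, rfl⟩
  have hS : ∀ x, x ∈ S ↔ x = v ∨ G.Adj v x := by
    intro x; rw [hSdef]; simp
  have huS : u ∉ S := by
    rw [hS]; rintro (h | h)
    · exact hvu h.symm
    · exact hnvu h
  have hcl : ∀ x ∈ S, ∀ y, G.Adj x y → y ∈ S ∨ y = u := by
    intro x hx y hxy
    by_cases hy : y ∈ S
    · exact Or.inl hy
    right
    have hy' := hy
    rw [hS] at hx hy
    push Not at hy
    rcases hx with rfl | hx
    · exact absurd hxy hy.2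
    · exact huniq y ((hd2 v y).mpr ⟨hy.1.symm, hy.2, x, hx, hxy⟩)
  have hcomp : compDel G u v = S := by
    ext x
    constructor
    · rintro ⟨p, hp⟩
      exact walk_closed_aux G S u hcl p ((hS v).mpr (Or.inl rfl)) hp
    · intro hx
      have hxS := hx
      rw [hS] at hx
      rcases hx with rfl | hx
      · exact ⟨SimpleGraph.Walk.nil, by simpa using hvu.symm⟩
      · refine ⟨SimpleGraph.Walk.cons hx SimpleGraph.Walk.nil, ?_⟩
        have : u ≠ x := by rintro rfl; exact huS hxS
        simp [hvu.symm, this]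
  have hScard : S.ncard = d + 1 := by
    rw [hSdef, Set.singleton_union, Set.ncard_insert_of_notMem (by simp), hreg v]
  have hdeg : ∀ x, (G.neighborSet x).ncard = d := hreg
  rw [hcomp]
  -- neighbours inside S
  have hin0 : ∀ w ∈ S, ¬ G.Adj u w → G.neighborSet w ∩ S = G.neighborSet w := by
    intro w hw hn
    apply Set.inter_eq_left.mpr
    intro y hy
    rcases hcl w hw y hy with h | h
    · exact h
    · subst h; exact absurd (G.adj_symm hy) hn
  have hin1 : ∀ w ∈ S, G.neighborSet w ∩ S = G.neighborSet w \ {u} := by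
    intro w hw
    ext y
    constructor
    · rintro ⟨h1, h2⟩
      exact ⟨h1, fun h => huS (h ▸ h2)⟩
    · rintro ⟨h1, h2⟩
      refine ⟨h1, ?_⟩
      rcases hcl w hw y h1 with h | h
      · exact h
      · exact absurd h h2
  have hc0 : ∀ w ∈ S, ¬ G.Adj u w → (G.neighborSet w ∩ S).ncard = d := by
    intro w hw hn
    rw [hin0 w hw hn, hdeg]
  have hc1 : ∀ w ∈ S, G.Adj u w → (G.neighborSet w ∩ S).ncard + 1 = d := by
    intro w hw hn
    rw [hin1 w hw, Set.ncard_diff_singleton_add_one (show u ∈ G.neighborSet w from G.adj_symm hn), hdeg]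
  have hsplit : ∀ w, (G.neighborSet w ∩ S).ncard + (S \ G.neighborSet w).ncard = d + 1 := by
    intro w
    rw [Set.inter_comm, Set.ncard_inter_add_ncard_diff_eq_ncard, hScard]
  -- vertices of S not adjacent to u are universal in S
  have huniv : ∀ w ∈ S, ¬ G.Adj u w → ∀ x ∈ S, x ≠ w → G.Adj w x := by
    intro w hw hn x hx hxw
    have h1 : (S \ G.neighborSet w).ncard = 1 := by
      have := hsplit w; have := hc0 w hw hn; omega
    obtain ⟨a, ha⟩ := Set.ncard_eq_one.mp h1
    by_contra hna
    have e1 : w ∈ S \ G.neighborSet w := ⟨hw, by simp⟩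
    have e2 : x ∈ S \ G.neighborSet w := ⟨hx, hna⟩
    rw [ha] at e1 e2
    exact hxw (e2.trans e1.symm)
  have hmex : ∀ w, ∃ y, (w ∈ S → G.Adj u w →
      y ∈ S ∧ y ≠ w ∧ ¬ G.Adj w y ∧ ∀ x ∈ S, x ≠ w → ¬ G.Adj w x → x = y) := by
    intro w
    by_cases hw : w ∈ S ∧ G.Adj u w
    · obtain ⟨hw, hn⟩ := hw
      have h2 : (S \ G.neighborSet w).ncard = 2 := by
        have := hsplit w; have := hc1 w hw hn; omega
      have e1 : w ∈ S \ G.neighborSet w := ⟨hw, by simp⟩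
      have h1 : ((S \ G.neighborSet w) \ {w}).ncard = 1 := by
        have := Set.ncard_diff_singleton_add_one e1; omega
      obtain ⟨y, hy⟩ := Set.ncard_eq_one.mp h1
      have hym : y ∈ (S \ G.neighborSet w) \ {w} := by rw [hy]; rfl
      refine ⟨y, fun _ _ => ⟨hym.1.1, hym.2, hym.1.2, ?_⟩⟩
      intro x hx hxw hnx
      have : x ∈ (S \ G.neighborSet w) \ {w} := ⟨⟨hx, hnx⟩, hxw⟩
      rw [hy] at this; exact this
    · exact ⟨w, fun h1 h2 => absurd ⟨h1, h2⟩ hw⟩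
  choose m hm using hmex
  have hmM : ∀ w ∈ S, G.Adj u w → G.Adj u (m w) := by
    intro w hw hn
    obtain ⟨h1, h2, h3, h4⟩ := hm w hw hn
    by_contra hna
    exact h3 (G.adj_symm (huniv _ h1 hna w hw h2.symm))
  have htle : (G.neighborSet u ∩ S).ncard ≤ d := by
    rw [← hdeg u]; exact Set.ncard_le_ncard Set.inter_subset_left
  have hcS : c ∈ S := (hS c).mpr (Or.inr hvc)
  have hcommon : ∀ a b, a ≠ b → ¬ G.Adj a b → ∀ z, G.Adj a z → G.Adj z b → G.dist a b = 2 :=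
    fun a b h1 h2 z h3 h4 => (hd2 a b).mpr ⟨h1, h2, z, h3, h4⟩
  have htne : (G.neighborSet u ∩ S).ncard ≠ d := by
    intro ht
    have heq : G.neighborSet u ∩ S = G.neighborSet u :=
      Set.eq_of_subset_of_ncard_le Set.inter_subset_left (by rw [hdeg, ht])
    have hNu : ∀ x, G.Adj u x → x ∈ S := by
      intro x hx
      have : x ∈ G.neighborSet u ∩ S := by rw [heq]; exact hx
      exact this.2
    have hall : ∀ x, x ∈ S ∨ x = u := by
      intro x
      obtain ⟨p⟩ := hconn.preconnected v x
      have gen : ∀ {a b : V} (p : G.Walk a b), (a ∈ S ∨ a = u) → (b ∈ S ∨ b = u) := by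
        intro a b p
        induction p with
        | nil => exact id
        | cons h q ih =>
          intro ha
          apply ih
          rcases ha with ha | ha
          · exact hcl _ ha _ h
          · exact Or.inl (hNu _ (ha ▸ h))
      exact gen p (Or.inl ((hS v).mpr (Or.inl rfl)))
    have hux : ∀ x ∈ S, G.dist u x = 1 ∨ G.dist u x = 2 := by
      intro x hx
      by_cases hadj : G.Adj u x
      · exact Or.inl (SimpleGraph.dist_eq_one_iff_adj.mpr hadj)
      · right
        have hxc : c ≠ x := by rintro rfl; exact hadj (G.adj_symm hcu)
        exact hcommon u x (by rintro rfl; exact huS hx) hadj c (G.adj_symm hcu)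
          (G.adj_symm (huniv x hx hadj c hcS hxc))
    apply hnotcomplete
    ext a b
    rw [SimpleGraph.top_adj]
    constructor
    · intro h; exact h.ne
    · intro hab
      have : G.dist a b = 1 ∨ G.dist a b = 2 := by
        rcases hall a with ha | rfl
        · rcases hall b with hb | rfl
          · by_cases hadj : G.Adj a b
            · exact Or.inl (SimpleGraph.dist_eq_one_iff_adj.mpr hadj)
            · right
              rw [hS] at ha hb
              rcases ha with rfl | ha
              · rcases hb with rfl | hb
                · exact absurd rfl hab
                · exact absurd hb hadj
              · rcases hb with rfl | hb
                · exact absurd (G.adj_symm ha) hadj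
                · exact hcommon a b hab hadj v (G.adj_symm ha) hb
          · rw [SimpleGraph.dist_comm]; exact hux a ha
        · rcases hall b with hb | rfl
          · exact hux b hb
          · exact absurd rfl hab
      change 1 ≤ G.dist a b ∧ G.dist a b ≤ 2
      omega
  refine ⟨⟨hSdef, hScard⟩, ⟨⟨Set.inter_subset_right, m, ?_, ?_⟩, ?_, ?_⟩, by omega, ?_⟩
  · rintro x ⟨hx1, hx2⟩
    obtain ⟨h1, h2, h3, h4⟩ := hm x hx2 hx1
    have hmx := hmM x hx2 hx1
    refine ⟨⟨hmx, h1⟩, h2, ?_⟩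
    obtain ⟨_, _, _, k4⟩ := hm (m x) h1 hmx
    exact (k4 x hx2 h2.symm (fun h => h3 (G.adj_symm h))).symm
  · intro a ha b hb hab
    constructor
    · intro hn
      have hau : G.Adj u a := by
        by_contra hna
        exact hn (huniv a ha hna b hb hab.symm)
      exact ⟨⟨hau, ha⟩, (hm a ha hau).2.2.2 b hb hab.symm hn⟩
    · rintro ⟨⟨hau, _⟩, rfl⟩
      exact (hm a ha hau).2.2.1
  · rintro w ⟨hw1, hw2⟩
    have := hc1 w hw2 hw1
    omega
  · intro w hw hn
    exact hc0 w hw hn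
  · rintro w ⟨hw1, hw2⟩
    have hw1' : G.Adj u w := hw1
    obtain ⟨h1, h2, h3, h4⟩ := hm w hw2 hw1
    have hmx := hmM w hw2 hw1
    have hset : distSet G w 2 = insert (m w) (G.neighborSet u \ (G.neighborSet u ∩ S)) := by
      ext x
      constructor
      · intro hx
        obtain ⟨k1, k2, y, k3, k4⟩ := (hd2 w x).mp hx
        by_cases hxS : x ∈ S
        · exact Or.inl (h4 x hxS k1.symm k2)
        · right
          have hxu : x ≠ u := by rintro rfl; exact k2 (G.adj_symm hw1')
          rcases hcl w hw2 y k3 with hy | rfl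
          · rcases hcl y hy x k4 with h | h
            · exact absurd h hxS
            · exact absurd h hxu
          · exact ⟨k4, fun h => hxS h.2⟩
      · rintro (rfl | ⟨hx1, hx2⟩)
        · exact hcommon _ _ h2.symm h3 u (G.adj_symm hw1') hmx
        · have hx1' : G.Adj u x := hx1
          have hxS : x ∉ S := fun h => hx2 ⟨hx1, h⟩
          refine hcommon w x (by rintro rfl; exact hxS hw2) ?_ u (G.adj_symm hw1') hx1'
          intro hadj
          rcases hcl w hw2 x hadj with h | h
          · exact hxS h
          · exact hx1'.ne h.symm
    unfold deg2
    rw [hset, Set.ncard_insert_of_notMem (fun h => h.2 ⟨hmx, h1⟩),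
      Set.ncard_diff Set.inter_subset_left, hdeg]
end

section
/- Let G be a connected d-regular graph such that G² is not complete, let v be a vertex with deg₂(v) = 1, write N₂(v) = {u}, and let G_v be the vertex set of the connected component of G − u containing v. Then |N(u) ∩ G_v| is even; in particular, if |N(u) ∩ G_v| = d − 1, then d is odd (so B regions exist only when d is odd). -/
open SimpleGraph

variable {V : Type*}

lemma aux_comp {V : Type*} (G : SimpleGraph V)
    (hconn : G.Connected) (v u : V) (hN2 : distSet G v 2 = {u}) :
    compDel G u v = insert v (G.neighborSet v) := by
  have hu : G.dist v u = 2 := by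
    have : u ∈ distSet G v 2 := by rw [hN2]; rfl
    exact this
  have huniq : ∀ w, G.dist v w = 2 → w = u := by
    intro w hw
    have : w ∈ distSet G v 2 := hw
    rw [hN2] at this
    exact this
  have hvu : u ≠ v := by
    rintro rfl
    simp at hu
  have hnadj : ¬ G.Adj v u := by
    intro h
    rw [← SimpleGraph.dist_eq_one_iff_adj] at h
    omega
  ext w
  constructor
  · rintro ⟨p, hp⟩
    have key : ∀ (a b : V) (p : G.Walk a b), u ∉ p.support →
        a ∈ insert v (G.neighborSet v) → b ∈ insert v (G.neighborSet v) := by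
      intro a b p
      induction p with
      | nil => intro _ h; exact h
      | @cons a c b hac q ih =>
        intro hs ha
        rw [Walk.support_cons, List.mem_cons, not_or] at hs
        refine ih hs.2 ?_
        have hcu : c ≠ u := by
          rintro rfl
          exact hs.2 q.start_mem_support
        have hda : G.dist v a ≤ 1 := by
          rcases ha with rfl | ha
          · simp
          · exact (SimpleGraph.dist_eq_one_iff_adj.2 ha).le
        have h1 : G.dist a c = 1 := SimpleGraph.dist_eq_one_iff_adj.2 hac
        have htri := hconn.dist_triangle (u := v) (v := a) (w := c)
        have h2 : G.dist v c ≠ 2 := fun h => hcu (huniq c h)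
        have h3 : G.dist v c = 0 ∨ G.dist v c = 1 := by omega
        rcases h3 with h | h
        · left; exact (hconn.dist_eq_zero_iff.1 h).symm
        · right; exact SimpleGraph.dist_eq_one_iff_adj.1 h
    exact key v w p hp (Or.inl rfl)
  · rintro (rfl | hw)
    · exact ⟨Walk.nil, by simpa using hvu⟩
    · have hw' : G.Adj v w := hw
      refine ⟨Walk.cons hw' Walk.nil, ?_⟩
      have : u ≠ w := by rintro rfl; exact hnadj hw'
      simp [hvu, this]

/-- Let `G` be connected `d`-regular with `G²` not complete, `v` a vertex
with `deg₂(v) = 1` and `N₂(v) = {u}`, and `G_v` the component of `G - u` containing `v`.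
Then `|N(u) ∩ G_v|` is even; in particular if `|N(u) ∩ G_v| = d - 1` then `d` is odd
(so B regions exist only for odd `d`). -/
theorem stmt8 {V : Type*} [Fintype V] (G : SimpleGraph V) (d : ℕ)
    (hconn : G.Connected) (hreg : IsRegularGraph G d) (hnotcomplete : graphSquare G ≠ ⊤)
    (v u : V) (hv : deg2 G v = 1) (hN2 : distSet G v 2 = {u}) :
    Even ((G.neighborSet u ∩ compDel G u v).ncard) ∧
      ((G.neighborSet u ∩ compDel G u v).ncard = d - 1 → Odd d) := by
  classical
  have hu : G.dist v u = 2 := by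
    have : u ∈ distSet G v 2 := by rw [hN2]; rfl
    exact this
  have hS := aux_comp G hconn v u hN2
  have huS : u ∉ compDel G u v := by
    rintro ⟨p, hp⟩
    exact hp p.end_mem_support
  have hclosed : ∀ a b, a ∈ compDel G u v → G.Adj a b → b ≠ u → b ∈ compDel G u v := by
    rintro a b ⟨p, hp⟩ hab hb
    refine ⟨p.concat hab, ?_⟩
    simp [Walk.support_concat, hp, hb.symm]
  have hdeg : ∀ a, G.degree a = d := by
    intro a
    rw [← hreg a, ← SimpleGraph.card_neighborSet_eq_degree, Set.ncard_eq_toFinset_card',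
      Set.toFinset_card]
  have hcard : (compDel G u v).toFinset.card = d + 1 := by
    rw [← Set.ncard_eq_toFinset_card', hS, Set.ncard_insert_of_notMem (by simp), hreg v]
  generalize compDel G u v = S at *
  let H : SimpleGraph V :=
    { Adj := fun a b => G.Adj a b ∧ a ∈ S ∧ b ∈ S
      symm := ⟨fun a b h => ⟨h.1.symm, h.2.2, h.2.1⟩⟩
      loopless := ⟨fun a h => G.loopless.irrefl a h.1⟩ }
  have hsum := H.sum_degrees_eq_twice_card_edges
  have h0 : ∀ a, a ∉ S.toFinset → H.degree a = 0 := by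
    intro a ha
    rw [Set.mem_toFinset] at ha
    rw [← SimpleGraph.card_neighborFinset_eq_degree, Finset.card_eq_zero,
      Finset.eq_empty_iff_forall_notMem]
    intro b hb
    rw [SimpleGraph.mem_neighborFinset] at hb
    exact ha hb.2.1
  have h1 : ∀ a ∈ S.toFinset, H.degree a + (if G.Adj u a then 1 else 0) = d := by
    intro a ha
    rw [Set.mem_toFinset] at ha
    rw [← hdeg a, ← SimpleGraph.card_neighborFinset_eq_degree,
      ← SimpleGraph.card_neighborFinset_eq_degree]
    split_ifs with h
    · rw [← Finset.card_insert_of_notMem (a := u)]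
      · congr 1
        ext b
        simp only [Finset.mem_insert, SimpleGraph.mem_neighborFinset]
        constructor
        · rintro (rfl | hb)
          · exact h.symm
          · exact hb.1
        · intro hb
          by_cases hbu : b = u
          · exact Or.inl hbu
          · exact Or.inr ⟨hb, ha, hclosed a b ha hb hbu⟩
      · rw [SimpleGraph.mem_neighborFinset]
        exact fun hb => huS hb.2.2
    · rw [add_zero]
      congr 1
      ext b
      simp only [SimpleGraph.mem_neighborFinset]
      constructor
      · exact fun hb => hb.1
      · intro hb
        refine ⟨hb, ha, hclosed a b ha hb ?_⟩
        rintro rfl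
        exact h hb.symm
  have h2 := Finset.sum_congr (rfl : S.toFinset = S.toFinset) h1
  rw [Finset.sum_add_distrib, Finset.sum_const, hcard, smul_eq_mul,
    Finset.sum_subset (Finset.subset_univ _) (fun a _ ha => h0 a ha), hsum,
    ← Finset.card_filter] at h2
  have h3 : (G.neighborSet u ∩ S).ncard = (S.toFinset.filter (fun a => G.Adj u a)).card := by
    rw [Set.ncard_eq_toFinset_card']
    congr 1
    ext b
    simp [and_comm]
  have heven : Even ((G.neighborSet u ∩ S).ncard) := by
    rw [h3]
    have h4 : Even ((d + 1) * d) := by rw [mul_comm]; exact Nat.even_mul_succ_self d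
    rw [← h2, Nat.even_add] at h4
    exact h4.1 (even_two_mul _)
  refine ⟨heven, fun h => ?_⟩
  have hd : d ≠ 0 := by
    rintro rfl
    have hne : v ≠ u := by
      rintro rfl
      simp at hu
    obtain ⟨p⟩ := hconn.preconnected v u
    cases p with
    | nil => exact hne rfl
    | cons hab q =>
      have := hdeg v
      rw [← SimpleGraph.card_neighborFinset_eq_degree, Finset.card_eq_zero,
        Finset.eq_empty_iff_forall_notMem] at this
      exact this _ ((SimpleGraph.mem_neighborFinset _ _ _).2 hab)
  rw [h] at heven
  obtain ⟨k, hk⟩ := heven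
  exact ⟨k, by omega⟩
end
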